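/- arXiv:math/9904042 — 5 statements merged into one kernel-verified Lean document; each statement's English description precedes it below -/
import Mathlib

section
/- For all integers k ≥ 1, n ≥ 1 and every real t, the exponential generating function of the distribution of the longest weakly increasing subsequence satisfies ∑_{N=0}^∞ F_I(n;k,N)·(k t)^N / N! = det( (a_{i−j}(t))_{1≤i,j≤n} ), i.e. G_I(n;k,kt) equals the n×n Toeplitz determinant with symbol f_I(z;t) = e^{t/z}(1+z)^k. -/
open scoped BigOperators

/-- The length of the longest weakly increasing subsequence of the word `w`. -/
noncomputable def incLen {N k : ℕ} (w : Fin N → Fin k) : ℕ :=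
  sSup {m | ∃ f : Fin m → Fin N, StrictMono f ∧ Monotone (w ∘ f)}

/-- `F_I(n;k,N)`: the probability that a uniform random word of length `N` on `k`
letters has longest weakly increasing subsequence of length at most `n`. -/
noncomputable def FI (n k N : ℕ) : ℝ :=
  (Nat.card {w : Fin N → Fin k // incLen w ≤ n} : ℝ) / (k : ℝ) ^ N

/-- The Fourier coefficients `a_j(t)` of the symbol `e^{t/z} (1+z)^k`. -/
noncomputable def aCoeff (k : ℕ) (j : ℤ) (t : ℝ) : ℝ :=
  ∑' ℓ : ℕ, t ^ ℓ / (Nat.factorial ℓ : ℝ) *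
    (if 0 ≤ j + (ℓ : ℤ) then (Nat.choose k (j + (ℓ : ℤ)).toNat : ℝ) else 0)

/-! ## The patience-sorting dynamics -/

/-- Number of piles whose top is at most `b`. -/
def gwCnt {n : ℕ} (y : Fin n → ℕ) (b : ℕ) : ℕ :=
  (Finset.univ.filter fun j => y j ≤ b).card

/-- The word `w` can be inserted in the state `y` without exceeding `n` piles. -/
def gwGood {n : ℕ} (y : Fin n → ℕ) (w : List ℕ) : Prop :=
  ∀ b s, (b :: s).Sublist w → (b :: s).Pairwise (· ≤ ·) → gwCnt y b + (s.length + 1) ≤ n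

/-- The top of the preceding pile (`0` for the first pile). -/
def gwPrev {n : ℕ} (y : Fin n → ℕ) (j : Fin n) : ℕ :=
  if j.val = 0 then 0 else y ⟨j.val - 1, by omega⟩

lemma gwPrev_spec {n : ℕ} {y : Fin n → ℕ} (hy : Monotone y) {i j : Fin n} (h : i < j) :
    y i ≤ gwPrev y j := by
  unfold gwPrev
  have h' : i.val < j.val := h
  rw [if_neg (by omega)]
  apply hy
  show i.val ≤ j.val - 1
  omega

lemma gwPrev_le {n : ℕ} {y : Fin n → ℕ} (hy : Monotone y) (j : Fin n) :
    gwPrev y j ≤ y j := by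
  unfold gwPrev
  split_ifs with h
  · exact Nat.zero_le _
  · apply hy
    show j.val - 1 ≤ j.val
    omega

lemma gwUpdate_mono {n : ℕ} {y : Fin n → ℕ} (hy : Monotone y) {j : Fin n} {a : ℕ}
    (h1 : gwPrev y j ≤ a) (h2 : a < y j) : Monotone (Function.update y j a) := by
  intro p q hpq
  rcases hpq.eq_or_lt with rfl | hlt
  · exact le_rfl
  by_cases hp : p = j
  · subst hp
    rw [Function.update_self, Function.update_of_ne hlt.ne']
    exact h2.le.trans (hy hpq)
  · rw [Function.update_of_ne hp]
    by_cases hq : q = j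
    · subst hq
      rw [Function.update_self]
      exact (gwPrev_spec hy hlt).trans h1
    · rw [Function.update_of_ne hq]
      exact hy hpq

lemma gwPrev_exists {n : ℕ} {y : Fin n → ℕ} {a : ℕ}
    (h : gwCnt y a + 1 ≤ n) : ∃ j, gwPrev y j ≤ a ∧ a < y j := by
  have hex : ∃ m : ℕ, ∃ hm : m < n, a < y ⟨m, hm⟩ := by
    by_contra hcon
    push Not at hcon
    have : gwCnt y a = n := by
      unfold gwCnt
      rw [Finset.filter_true_of_mem (fun j _ => hcon j.val j.isLt)]
      simp
    omega
  classical
  obtain ⟨hm, hlt⟩ := Nat.find_spec hex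
  refine ⟨⟨Nat.find hex, hm⟩, ?_, hlt⟩
  unfold gwPrev
  split_ifs with h0
  · exact Nat.zero_le _
  · have h0' : Nat.find hex ≠ 0 := h0
    have := Nat.find_min hex (m := Nat.find hex - 1) (by omega)
    push Not at this
    exact this (by omega)

lemma gwPrev_unique {n : ℕ} {y : Fin n → ℕ} (hy : Monotone y) {a : ℕ} {i j : Fin n}
    (hi : gwPrev y i ≤ a ∧ a < y i) (hj : gwPrev y j ≤ a ∧ a < y j) : i = j := by
  rcases lt_trichotomy i j with h | h | h
  · have := gwPrev_spec hy h
    omega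
  · exact h
  · have := gwPrev_spec hy h
    omega

section
variable {n : ℕ} {y : Fin n → ℕ} {j : Fin n} {a : ℕ}

lemma gwCnt_le_update (h2 : a < y j) (b : ℕ) :
    gwCnt y b ≤ gwCnt (Function.update y j a) b := by
  apply Finset.card_le_card
  intro i hi
  simp only [Finset.mem_filter, Finset.mem_univ, true_and] at hi ⊢
  by_cases hij : i = j
  · subst hij
    rw [Function.update_self]; omega
  · rwa [Function.update_of_ne hij]

lemma gwCnt_update_or (hy : Monotone y) (h1 : gwPrev y j ≤ a) (b : ℕ) :
    gwCnt (Function.update y j a) b ≤ gwCnt y b ∨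
      (a ≤ b ∧ gwCnt (Function.update y j a) b ≤ gwCnt y a + 1) := by
  by_cases hb : a ≤ b ∧ b < y j
  · right
    refine ⟨hb.1, ?_⟩
    refine le_trans (Finset.card_le_card (t := insert j (Finset.univ.filter fun j => y j ≤ a)) ?_)
      (Finset.card_insert_le _ _)
    intro i hi
    simp only [Finset.mem_filter, Finset.mem_univ, true_and, Finset.mem_insert] at hi ⊢
    by_cases hij : i = j
    · exact Or.inl hij
    · right
      rw [Function.update_of_ne hij] at hi
      have : i < j := by
        by_contra hc
        have := hy (not_lt.mp hc)
        omega
      exact (gwPrev_spec hy this).trans h1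
  · left
    apply Finset.card_le_card
    intro i hi
    simp only [Finset.mem_filter, Finset.mem_univ, true_and] at hi ⊢
    by_cases hij : i = j
    · subst hij
      rw [Function.update_self] at hi; omega
    · rwa [Function.update_of_ne hij] at hi

lemma gwCnt_succ_le_update (h2 : a < y j) {b : ℕ} (hab : a ≤ b) :
    gwCnt y a + 1 ≤ gwCnt (Function.update y j a) b := by
  unfold gwCnt
  rw [← Finset.card_insert_of_notMem (a := j) (by simpa using h2)]
  apply Finset.card_le_card
  intro i hi
  simp only [Finset.mem_filter, Finset.mem_univ, true_and, Finset.mem_insert] at hi ⊢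
  by_cases hij : i = j
  · subst hij
    rw [Function.update_self]; omega
  · rw [Function.update_of_ne hij]
    rcases hi with hi | hi
    · exact absurd hi hij
    · omega

lemma gwCnt_succ_le (h2 : a < y j) : gwCnt y a + 1 ≤ n := by
  unfold gwCnt
  rw [← Finset.card_insert_of_notMem (a := j) (by simpa using h2)]
  simpa using Finset.card_le_univ (insert j (Finset.univ.filter fun j => y j ≤ a))

lemma gwGood_cons_iff_of (hy : Monotone y) (h1 : gwPrev y j ≤ a) (h2 : a < y j) (w : List ℕ) :
    gwGood y (a :: w) ↔ gwGood (Function.update y j a) w := by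
  constructor
  · intro h b s hs hp
    rcases gwCnt_update_or hy h1 b with hc | ⟨hab, hc⟩
    · have := h b s (hs.cons a) hp
      omega
    · have := h a (b :: s) (hs.cons_cons a) (by
        rw [List.pairwise_cons]
        refine ⟨?_, hp⟩
        intro x hx
        rcases List.mem_cons.1 hx with rfl | hx
        · exact hab
        · exact hab.trans ((List.pairwise_cons.1 hp).1 x hx))
      simp only [List.length_cons] at this
      omega
  · intro h b s hs hp
    rcases List.sublist_cons_iff.1 hs with hs | ⟨r, hr, hs⟩
    · have := h b s hs hp
      have := gwCnt_le_update h2 b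
      omega
    · obtain ⟨rfl, rfl⟩ := List.cons_eq_cons.1 hr
      cases s with
      | nil => simpa using gwCnt_succ_le h2
      | cons c s =>
        have hbc : b ≤ c := (List.pairwise_cons.1 hp).1 c (by simp)
        have := h c s hs (List.pairwise_cons.1 hp).2
        have := gwCnt_succ_le_update h2 hbc
        simp only [List.length_cons]
        omega

end

open Classical in
lemma gwGood_cons_ite {n : ℕ} {y : Fin n → ℕ} (hy : Monotone y) (a : ℕ) (w : List ℕ) :
    (if gwGood y (a :: w) then (1 : ℝ) else 0) =
      ∑ j, if gwPrev y j ≤ a ∧ a < y j then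
        (if gwGood (Function.update y j a) w then (1 : ℝ) else 0) else 0 := by
  by_cases hex : ∃ j, gwPrev y j ≤ a ∧ a < y j
  · obtain ⟨j, hj⟩ := hex
    rw [Finset.sum_eq_single j]
    · rw [if_pos hj]
      simp only [gwGood_cons_iff_of hy hj.1 hj.2]
    · intro i _ hij
      rw [if_neg]
      intro hi
      exact hij (gwPrev_unique hy hi hj)
    · simp
  · rw [if_neg, Finset.sum_eq_zero]
    · intro j _
      rw [if_neg]
      exact fun h => hex ⟨j, h⟩
    · intro h
      apply hex
      apply gwPrev_exists
      simpa using h a [] (by simp) (by simp)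

open Classical in
/-- Number of words of length `N` accepted from state `y`. -/
noncomputable def gwCount (k : ℕ) {n : ℕ} (N : ℕ) (y : Fin n → ℕ) : ℝ :=
  ∑ w : Fin N → Fin k, if gwGood y (List.ofFn fun i => (w i : ℕ)) then (1 : ℝ) else 0

lemma gwCount_zero (k : ℕ) {n : ℕ} (y : Fin n → ℕ) : gwCount k 0 y = 1 := by
  simp [gwCount, gwGood]

lemma gwCount_succ (k : ℕ) {n : ℕ} (N : ℕ) {y : Fin n → ℕ} (hy : Monotone y)
    (hk : ∀ j, y j ≤ k) :
    gwCount k (N + 1) y =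
      ∑ j, ∑ a ∈ Finset.Ico (gwPrev y j) (y j), gwCount k N (Function.update y j a) := by
  classical
  unfold gwCount
  rw [← (Fin.consEquiv fun _ : Fin (N + 1) => Fin k).sum_comp, Fintype.sum_prod_type]
  simp only [Fin.consEquiv, Equiv.coe_fn_mk, List.ofFn_succ, Fin.cons_zero, Fin.cons_succ]
  simp only [gwGood_cons_ite hy]
  simp_rw [Finset.sum_comm (s := (Finset.univ : Finset (Fin N → Fin k)))
    (t := (Finset.univ : Finset (Fin n)))]
  rw [Finset.sum_comm]
  refine Finset.sum_congr rfl fun j _ => ?_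
  rw [Finset.sum_fin_eq_sum_range]
  have hsub : Finset.Ico (gwPrev y j) (y j) ⊆ Finset.range k := by
    intro a ha
    have := hk j
    simp only [Finset.mem_Ico, Finset.mem_range] at ha ⊢
    omega
  rw [← Finset.sum_subset hsub]
  · refine Finset.sum_congr rfl fun a ha => ?_
    have := Finset.mem_range.1 (hsub ha)
    rw [dif_pos this]
    refine Finset.sum_congr rfl fun w _ => ?_
    rw [if_pos (Finset.mem_Ico.1 ha)]
  · intro a ha hn
    rw [dif_pos (Finset.mem_range.1 ha)]
    refine Finset.sum_eq_zero fun w _ => ?_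
    rw [if_neg]
    exact fun h => hn (Finset.mem_Ico.2 h)

/-! ## The determinant -/

open Polynomial in
/-- `aCoeff` as a polynomial in `t`. -/
noncomputable def gwA (m : ℤ) (y : ℕ) : Polynomial ℝ :=
  ∑ l ∈ Finset.range ((y - m).toNat + 1),
    Polynomial.monomial l ((1 : ℝ) / (Nat.factorial l : ℝ) *
    (if 0 ≤ m + (l : ℤ) then (Nat.choose y (m + (l : ℤ)).toNat : ℝ) else 0))

lemma gwA_vanish (m : ℤ) (y l : ℕ) (h : l ∉ Finset.range ((y - m).toNat + 1)) :
    (if 0 ≤ m + (l : ℤ) then (Nat.choose y (m + (l : ℤ)).toNat : ℝ) else 0) = 0 := by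
  rw [Finset.mem_range] at h
  split_ifs with h0
  · rw [Nat.choose_eq_zero_of_lt (by omega)]; simp
  · rfl

lemma gwA_coeff (m : ℤ) (y l : ℕ) : (gwA m y).coeff l = (1 : ℝ) / (Nat.factorial l : ℝ) *
    (if 0 ≤ m + (l : ℤ) then (Nat.choose y (m + (l : ℤ)).toNat : ℝ) else 0) := by
  unfold gwA
  simp only [Polynomial.finsetSum_coeff, Polynomial.coeff_monomial]
  rw [Finset.sum_ite_eq']
  split_ifs with h1 h2 h2
  · rfl
  · rfl
  · have := gwA_vanish m y l h1
    rw [if_pos h2] at this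
    rw [this]; simp
  · simp

lemma gwA_eval (m : ℤ) (y : ℕ) (t : ℝ) : (gwA m y).eval t = aCoeff y m t := by
  unfold aCoeff
  rw [tsum_eq_sum (s := Finset.range ((y - m).toNat + 1))]
  · unfold gwA
    rw [Polynomial.eval_finsetSum]
    refine Finset.sum_congr rfl fun l _ => ?_
    rw [Polynomial.eval_monomial]
    ring
  · intro l hl
    rw [gwA_vanish m y l hl, mul_zero]

lemma gwA_derivative (m : ℤ) (y : ℕ) : Polynomial.derivative (gwA m y) = gwA (m + 1) y := by
  ext l
  rw [Polynomial.coeff_derivative, gwA_coeff, gwA_coeff]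
  have e : m + ((l + 1 : ℕ) : ℤ) = m + 1 + (l : ℤ) := by push_cast; ring
  rw [e, Nat.factorial_succ]
  have : (Nat.factorial l : ℝ) ≠ 0 := by positivity
  have : (l : ℝ) + 1 ≠ 0 := by positivity
  push_cast
  field_simp

lemma gwA_succ (m : ℤ) (y : ℕ) : gwA (m + 1) (y + 1) = gwA (m + 1) y + gwA m y := by
  ext l
  rw [Polynomial.coeff_add, gwA_coeff, gwA_coeff, gwA_coeff, ← mul_add]
  congr 1
  by_cases h : 0 ≤ m + (l : ℤ)
  · rw [if_pos (by omega), if_pos (by omega), if_pos h]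
    have : (m + 1 + (l : ℤ)).toNat = (m + (l : ℤ)).toNat + 1 := by omega
    rw [this, Nat.choose_succ_succ]
    push_cast
    ring
  · rw [if_neg h]
    by_cases h' : 0 ≤ m + 1 + (l : ℤ)
    · rw [if_pos h', if_pos h']
      have : (m + 1 + (l : ℤ)).toNat = 0 := by omega
      rw [this]; simp
    · rw [if_neg h', if_neg h']; simp

lemma gwA_zero (m : ℤ) (h : 0 < m) : gwA m 0 = 0 := by
  ext l
  rw [gwA_coeff, if_pos (by omega), Nat.choose_eq_zero_of_lt (by omega)]
  simp

/-- The generalised Toeplitz matrix with state `y`. -/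
noncomputable def gwM {n : ℕ} (y : Fin n → ℕ) : Matrix (Fin n) (Fin n) (Polynomial ℝ) :=
  Matrix.of fun i j => gwA (((i : ℕ) : ℤ) - ((j : ℕ) : ℤ)) (y j)

lemma gw_derivative_det {n : ℕ} (M : Matrix (Fin n) (Fin n) (Polynomial ℝ)) :
    Polynomial.derivative M.det =
      ∑ j, (M.updateCol j fun i => Polynomial.derivative (M i j)).det := by
  simp only [Matrix.det_apply', Polynomial.derivative_sum]
  rw [Finset.sum_comm]
  refine Finset.sum_congr rfl fun σ _ => ?_
  rw [Polynomial.derivative_intCast_mul, Polynomial.derivative_prod_finset, Finset.mul_sum]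
  refine Finset.sum_congr rfl fun j _ => ?_
  congr 1
  rw [← Finset.prod_erase_mul _ _ (Finset.mem_univ j)]
  congr 1
  · refine Finset.prod_congr rfl fun i hi => ?_
    rw [Matrix.updateCol_ne (Finset.ne_of_mem_erase hi)]
  · rw [Matrix.updateCol_self]

lemma gwM_update {n : ℕ} (y : Fin n → ℕ) (j : Fin n) (a : ℕ) :
    gwM (Function.update y j a) =
      (gwM y).updateCol j fun i => gwA (((i : ℕ) : ℤ) - ((j : ℕ) : ℤ)) a := by
  ext1 p q
  by_cases hq : q = j
  · subst hq
    rw [Matrix.updateCol_self]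
    simp [gwM]
  · rw [Matrix.updateCol_ne hq]
    simp [gwM, Function.update_of_ne hq]

lemma gwM_prev {n : ℕ} (y : Fin n → ℕ) (j : Fin n) :
    ((gwM y).updateCol j fun i =>
      gwA (((i : ℕ) : ℤ) - ((j : ℕ) : ℤ) + 1) (gwPrev y j)).det = 0 := by
  unfold gwPrev
  split_ifs with h
  · apply Matrix.det_eq_zero_of_column_eq_zero j
    intro i
    rw [Matrix.updateCol_self, gwA_zero]
    omega
  · have hne : (⟨j.val - 1, by omega⟩ : Fin n) ≠ j := by
      intro he
      have := congrArg Fin.val he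
      simp only at this
      omega
    apply Matrix.det_zero_of_column_eq hne
    intro i
    rw [Matrix.updateCol_self, Matrix.updateCol_ne hne]
    simp only [gwM, Matrix.of_apply]
    congr 1
    omega

lemma gwM_tele {n : ℕ} (y : Fin n → ℕ) (j : Fin n) (l h : ℕ) (hlh : l ≤ h) :
    ∑ a ∈ Finset.Ico l h, (gwM (Function.update y j a)).det =
      ((gwM y).updateCol j fun i => gwA (((i : ℕ) : ℤ) - ((j : ℕ) : ℤ) + 1) h).det -
      ((gwM y).updateCol j fun i => gwA (((i : ℕ) : ℤ) - ((j : ℕ) : ℤ) + 1) l).det := by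
  induction h, hlh using Nat.le_induction with
  | base => simp
  | succ h hlh ih =>
    rw [Finset.sum_Ico_succ_top hlh, ih]
    have : (fun i : Fin n => gwA (((i : ℕ) : ℤ) - ((j : ℕ) : ℤ) + 1) (h + 1)) =
        (fun i : Fin n => gwA (((i : ℕ) : ℤ) - ((j : ℕ) : ℤ) + 1) h) +
        (fun i : Fin n => gwA (((i : ℕ) : ℤ) - ((j : ℕ) : ℤ)) h) := by
      funext i
      exact gwA_succ _ _
    rw [this, Matrix.det_updateCol_add, gwM_update]
    ring

lemma gwM_derivative {n : ℕ} {y : Fin n → ℕ} (hy : Monotone y) :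
    Polynomial.derivative (gwM y).det =
      ∑ j, ∑ a ∈ Finset.Ico (gwPrev y j) (y j), (gwM (Function.update y j a)).det := by
  rw [gw_derivative_det]
  refine Finset.sum_congr rfl fun j _ => ?_
  rw [gwM_tele y j _ _ (gwPrev_le hy j), gwM_prev, sub_zero]
  congr 2
  funext i
  exact gwA_derivative _ _

lemma gwM_coeff_zero {n : ℕ} (y : Fin n → ℕ) : (gwM y).det.coeff 0 = 1 := by
  rw [← Polynomial.constantCoeff_apply, RingHom.map_det, Matrix.det_of_isLowerTriangular]
  · apply Finset.prod_eq_one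
    intro i _
    simp [gwM, gwA_coeff]
  · intro i j hij
    have : i < j := hij
    simp only [RingHom.mapMatrix_apply, Matrix.map_apply, gwM, Matrix.of_apply,
      Polynomial.constantCoeff_apply, gwA_coeff]
    rw [if_neg (by omega), mul_zero]

lemma gwCount_eq (k : ℕ) {n : ℕ} (N : ℕ) : ∀ y : Fin n → ℕ, Monotone y → (∀ j, y j ≤ k) →
    gwCount k N y = (Nat.factorial N : ℝ) * (gwM y).det.coeff N := by
  induction N with
  | zero =>
    intro y _ _
    rw [gwCount_zero, gwM_coeff_zero]; simp
  | succ N ih =>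
    intro y hy hk
    rw [gwCount_succ k N hy hk]
    have hd : (gwM y).det.coeff (N + 1) * ((N : ℝ) + 1) =
        (Polynomial.derivative (gwM y).det).coeff N := (Polynomial.coeff_derivative _ _).symm
    rw [gwM_derivative hy] at hd
    simp only [Polynomial.finsetSum_coeff] at hd
    rw [Nat.factorial_succ]
    push_cast
    rw [show ((N : ℝ) + 1) * (Nat.factorial N : ℝ) * (gwM y).det.coeff (N + 1) =
      (Nat.factorial N : ℝ) * ((gwM y).det.coeff (N + 1) * ((N : ℝ) + 1)) by ring, hd,
      Finset.mul_sum]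
    refine Finset.sum_congr rfl fun j _ => ?_
    rw [Finset.mul_sum]
    refine Finset.sum_congr rfl fun a ha => ?_
    have ha' := Finset.mem_Ico.1 ha
    refine ih _ (gwUpdate_mono hy ha'.1 ha'.2) ?_
    intro i
    by_cases hij : i = j
    · subst hij
      rw [Function.update_self]
      exact ha'.2.le.trans (hk _)
    · rw [Function.update_of_ne hij]
      exact hk i

/-! ## Link with the longest weakly increasing subsequence -/

lemma gw_incLen_le_iff {N k : ℕ} (w : Fin N → Fin k) (n : ℕ) :
    incLen w ≤ n ↔ ∀ (m : ℕ) (f : Fin m → Fin N), StrictMono f → Monotone (w ∘ f) → m ≤ n := by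
  have hbdd : BddAbove {m | ∃ f : Fin m → Fin N, StrictMono f ∧ Monotone (w ∘ f)} := by
    refine ⟨N, ?_⟩
    rintro m ⟨f, hf, _⟩
    simpa using Fintype.card_le_of_injective f hf.injective
  unfold incLen
  rw [csSup_le_iff hbdd ⟨0, Fin.elim0, fun i => i.elim0, fun i => i.elim0⟩]
  constructor
  · intro h m f h1 h2
    exact h m ⟨f, h1, h2⟩
  · rintro h m ⟨f, h1, h2⟩
    exact h m f h1 h2

lemma gw_incLen_good {N k : ℕ} (w : Fin N → Fin k) (n : ℕ) :
    incLen w ≤ n ↔ gwGood (fun _ : Fin n => k) (List.ofFn fun i => (w i : ℕ)) := by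
  rw [gw_incLen_le_iff]
  have hc : ∀ b, b < k → gwCnt (fun _ : Fin n => k) b = 0 := by
    intro b hb
    simp [gwCnt, hb]
  constructor
  · intro h b s hs hp
    have hb : b < k := by
      have := hs.subset (List.mem_cons_self)
      rw [List.mem_ofFn] at this
      obtain ⟨i, rfl⟩ := this
      exact (w i).isLt
    rw [hc b hb, zero_add]
    obtain ⟨f, hf⟩ := List.sublist_iff_exists_fin_orderEmbedding_get_eq.1 hs
    refine h (b :: s).length (fun i => Fin.cast (by simp) (f i)) ?_ ?_
    · intro p q hpq
      exact f.strictMono hpq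
    · intro p q hpq
      rcases hpq.eq_or_lt with rfl | hlt
      · exact le_rfl
      have := List.pairwise_iff_get.1 hp p q hlt
      rw [hf, hf, List.get_ofFn, List.get_ofFn] at this
      exact this
  · intro h m f h1 h2
    rcases m with _ | m
    · exact Nat.zero_le _
    have hsub : (List.ofFn fun i => (w (f i) : ℕ)).Sublist (List.ofFn fun i => (w i : ℕ)) := by
      rw [List.sublist_iff_exists_fin_orderEmbedding_get_eq]
      refine ⟨OrderEmbedding.ofStrictMono
        (fun i => Fin.cast (by simp) (f (Fin.cast (by simp) i))) ?_, ?_⟩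
      · intro p q hpq
        exact h1 (show Fin.cast _ p < Fin.cast _ q from hpq)
      · intro i
        rw [List.get_ofFn, List.get_ofFn]
        rfl
    have hpw : (List.ofFn fun i => (w (f i) : ℕ)).Pairwise (· ≤ ·) := by
      rw [List.pairwise_ofFn]
      intro p q hpq
      exact h2 hpq.le
    rw [List.ofFn_succ] at hsub hpw
    have := h _ _ hsub hpw
    rw [List.length_ofFn] at this
    omega

lemma gw_card {n k N : ℕ} :
    (Nat.card {w : Fin N → Fin k // incLen w ≤ n} : ℝ) = gwCount k N (fun _ : Fin n => k) := by
  classical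
  rw [Nat.card_eq_fintype_card, Fintype.card_subtype]
  unfold gwCount
  simp only [gw_incLen_good, Finset.sum_boole]

/-- Theorem 1 ($G_I$ case): the exponential generating function of `F_I(n;k,·)`,
evaluated at `k t`, equals the `n × n` Toeplitz determinant with symbol
`f_I(z;t) = e^{t/z} (1+z)^k`. -/
theorem gessel_weakly_increasing (k n : ℕ) (hk : 1 ≤ k) (hn : 1 ≤ n) (t : ℝ) :
    ∑' N : ℕ, FI n k N * ((k : ℝ) * t) ^ N / (Nat.factorial N : ℝ) =
      Matrix.det (Matrix.of fun i j : Fin n =>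
        aCoeff k (((i : ℕ) : ℤ) - ((j : ℕ) : ℤ)) t) := by
  have hk0 : (k : ℝ) ≠ 0 := by
    have : k ≠ 0 := by omega
    exact_mod_cast this
  have hterm : ∀ N : ℕ, FI n k N * ((k : ℝ) * t) ^ N / (Nat.factorial N : ℝ) =
      (gwM fun _ : Fin n => k).det.coeff N * t ^ N := by
    intro N
    unfold FI
    rw [gw_card, gwCount_eq k N _ monotone_const (fun _ => le_rfl), mul_pow]
    have : (Nat.factorial N : ℝ) ≠ 0 := by positivity
    field_simp
  simp only [hterm]
  have hdet : (Matrix.of fun i j : Fin n =>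
        aCoeff k (((i : ℕ) : ℤ) - ((j : ℕ) : ℤ)) t).det =
      ((gwM fun _ : Fin n => k).det).eval t := by
    rw [← Polynomial.coe_evalRingHom, RingHom.map_det]
    congr 1
    ext1 i j
    simp [gwM, gwA_eval]
  rw [hdet, Polynomial.eval_eq_sum_range]
  refine tsum_eq_sum ?_
  intro N hN
  rw [Polynomial.coeff_eq_zero_of_natDegree_lt, zero_mul]
  rw [Finset.mem_range] at hN
  omega
end

section
/- For all integers k ≥ 1, n ≥ 1 and every real t, the exponential generating function of the distribution of the longest strictly decreasing subsequence satisfies ∑_{N=0}^∞ F_D(n;k,N)·(k t)^N / N! = det( (b_{i−j}(t))_{1≤i,j≤n} ), i.e. G_D(n;k,kt) equals the n×n Toeplitz determinant with symbol f_D(z;t) = e^{t/z}(1−z)^{−k}. -/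
open scoped BigOperators

/-- The length of the longest strictly decreasing subsequence of the word `w`. -/
noncomputable def decLen {N k : ℕ} (w : Fin N → Fin k) : ℕ :=
  sSup {m | ∃ f : Fin m → Fin N, StrictMono f ∧ StrictAnti (w ∘ f)}

/-- `F_D(n;k,N)`: the probability that a uniform random word of length `N` on `k`
letters has longest strictly decreasing subsequence of length at most `n`. -/
noncomputable def FD (n k N : ℕ) : ℝ :=
  (Nat.card {w : Fin N → Fin k // decLen w ≤ n} : ℝ) / (k : ℝ) ^ N

/-- The Fourier coefficients `b_j(t)` of the symbol `f_D(z;t) = e^{t/z} (1-z)^{-k}`. -/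
noncomputable def bCoeff (k : ℕ) (j : ℤ) (t : ℝ) : ℝ :=
  ∑' ℓ : ℕ, t ^ ℓ / (Nat.factorial ℓ : ℝ) *
    (if 0 ≤ j + (ℓ : ℤ) then
      (Nat.choose (k + (j + (ℓ : ℤ)).toNat - 1) (j + (ℓ : ℤ)).toNat : ℝ) else 0)

namespace GesselAux

/-- `hh m r` is the coefficient of `z^r` in `(1-z)^{-m}`. -/
noncomputable def hh (m : ℕ) (r : ℤ) : ℝ :=
  if 0 ≤ r then (Nat.choose (m + r.toNat - 1) r.toNat : ℝ) else 0

lemma hh_neg (m : ℕ) {r : ℤ} (hr : r < 0) : hh m r = 0 := by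
  simp [hh, not_le.mpr hr]

lemma hh_zero (m : ℕ) : hh m 0 = 1 := by simp [hh]

lemma hh_zero_pos {r : ℤ} (hr : 0 < r) : hh 0 r = 0 := by
  obtain ⟨s, rfl⟩ : ∃ s : ℕ, r = (s : ℤ) + 1 := ⟨(r - 1).toNat, by omega⟩
  have : ((s : ℤ) + 1).toNat = s + 1 := by omega
  simp [hh, this]

lemma hh_succ (m : ℕ) (r : ℤ) : hh (m + 1) (r + 1) = hh m (r + 1) + hh (m + 1) r := by
  rcases lt_trichotomy r (-1) with h | h | h
  · rw [hh_neg _ (by omega), hh_neg _ (by omega), hh_neg _ (by omega)]; simp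
  · subst h
    rw [hh_neg _ (by omega : (-1 : ℤ) < 0)]
    simp [hh_zero]
  · obtain ⟨s, rfl⟩ : ∃ s : ℕ, r = (s : ℤ) := ⟨r.toNat, by omega⟩
    have h1 : ((s : ℤ) + 1).toNat = s + 1 := by omega
    have h2 : (0 : ℤ) ≤ (s : ℤ) + 1 := by omega
    have h3 : m + 1 + (s + 1) - 1 = m + s + 1 := by omega
    have h4 : m + (s + 1) - 1 = m + s := by omega
    have h5 : m + 1 + s - 1 = m + s := by omega
    simp only [hh, h1, h2, if_true, h3, h4, Int.toNat_natCast, h5, Nat.choose_succ_succ,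
      Int.natCast_nonneg]
    push_cast; ring

open PowerSeries in
/-- The power series (in `t`) of the `j`-th Fourier coefficient of `e^{t/z}(1-z)^{-m}`. -/
noncomputable def cc (m : ℕ) (j : ℤ) : PowerSeries ℝ :=
  PowerSeries.mk fun l => hh m (j + (l : ℤ)) / (Nat.factorial l : ℝ)

lemma cc_deriv (m : ℕ) (j : ℤ) : PowerSeries.derivative ℝ (cc m j) = cc m (j + 1) := by
  ext l
  rw [PowerSeries.coeff_derivative]
  simp only [cc, PowerSeries.coeff_mk]
  have : j + ((l + 1 : ℕ) : ℤ) = j + 1 + (l : ℤ) := by push_cast; ring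
  rw [this, Nat.factorial_succ]
  have h1 : (Nat.factorial l : ℝ) ≠ 0 := by positivity
  have h2 : (l : ℝ) + 1 ≠ 0 := by positivity
  push_cast
  field_simp

lemma cc_succ (m : ℕ) (j : ℤ) : cc (m + 1) (j + 1) = cc m (j + 1) + cc (m + 1) j := by
  ext l
  simp only [cc, PowerSeries.coeff_mk, map_add]
  have : j + 1 + (l : ℤ) = j + l + 1 := by ring
  rw [this, hh_succ]; ring

lemma cc_zero {j : ℤ} (hj : 0 < j) : cc 0 j = 0 := by
  ext l
  simp [cc, hh_zero_pos (by omega : 0 < j + (l : ℤ))]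

lemma cc_constCoeff (m : ℕ) (j : ℤ) : PowerSeries.constantCoeff (cc m j) = hh m j := by
  rw [← PowerSeries.coeff_zero_eq_constantCoeff_apply]
  simp [cc]

lemma deriv_prod {ι R : Type*} [DecidableEq ι] [CommRing R] [Algebra ℝ R] (D : Derivation ℝ R R)
    (s : Finset ι) (f : ι → R) :
    D (∏ i ∈ s, f i) = ∑ j ∈ s, ∏ i ∈ s, (if i = j then D (f i) else f i) := by
  induction s using Finset.induction_on with
  | empty => simp
  | insert a s ha ih =>
    rw [Finset.prod_insert ha, Derivation.leibniz, ih, Finset.sum_insert ha,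
      Finset.prod_insert ha, if_pos rfl, add_comm]
    congr 1
    · rw [smul_eq_mul, mul_comm]
      congr 1
      refine Finset.prod_congr rfl fun i hi => ?_
      rw [if_neg]; rintro rfl; exact ha hi
    · rw [smul_eq_mul, Finset.mul_sum]
      refine Finset.sum_congr rfl fun j hj => ?_
      rw [Finset.prod_insert ha, if_neg]
      rintro rfl; exact ha hj

lemma deriv_det {n : ℕ} {R : Type*} [CommRing R] [Algebra ℝ R] (D : Derivation ℝ R R)
    (M : Matrix (Fin n) (Fin n) R) :
    D M.det = ∑ j, (M.updateCol j (fun i => D (M i j))).det := by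
  simp only [Matrix.det_apply]
  rw [map_sum, Finset.sum_comm]
  refine Finset.sum_congr rfl fun σ _ => ?_
  rw [← Finset.smul_sum, Units.smul_def, Units.smul_def, map_zsmul, deriv_prod]
  congr 1
  refine Finset.sum_congr rfl fun j _ => Finset.prod_congr rfl fun i _ => ?_
  rw [Matrix.updateCol_apply]
  split_ifs with h
  · rw [h]
  · rfl

/-- The matrix attached to a state `Y`. -/
noncomputable def mat (n k : ℕ) (Y : ℕ → ℕ) : Matrix (Fin n) (Fin n) (PowerSeries ℝ) :=
  Matrix.of fun i j => cc (k - Y ((j : ℕ) + 1)) (((i : ℕ) : ℤ) - ((j : ℕ) : ℤ))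

lemma mat_update (n k : ℕ) (Y : ℕ → ℕ) (j : Fin n) (x : ℕ) :
    mat n k (Function.update Y ((j : ℕ) + 1) x) =
      (mat n k Y).updateCol j (fun i => cc (k - x) (((i : ℕ) : ℤ) - ((j : ℕ) : ℤ))) := by
  ext1 i j'
  rw [Matrix.updateCol_apply]
  simp only [mat, Matrix.of_apply, Function.update_apply]
  by_cases h : j' = j
  · simp [h]
  · have : (j' : ℕ) ≠ j := fun h' => h (Fin.ext h')
    simp [h, this]

lemma mat_sum (n k : ℕ) (Y : ℕ → ℕ) (hY : Antitone Y) (h0 : Y 0 = k) (j : Fin n) :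
    ∑ x ∈ Finset.Ico (Y ((j : ℕ) + 1)) (Y j), (mat n k (Function.update Y ((j : ℕ) + 1) x)).det =
      ((mat n k Y).updateCol j
        (fun i => PowerSeries.derivative ℝ (mat n k Y i j))).det := by
  set f : ℕ → PowerSeries ℝ := fun x => ((mat n k Y).updateCol j
    (fun i => cc (k - x) (((i : ℕ) : ℤ) - ((j : ℕ) : ℤ) + 1))).det with hf
  have hle : Y ((j : ℕ) + 1) ≤ Y j := hY (Nat.le_succ _)
  have hlek : Y j ≤ k := h0 ▸ hY (Nat.zero_le _)
  have step : ∀ x, x < k → (mat n k (Function.update Y ((j : ℕ) + 1) x)).det = f x - f (x + 1) := by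
    intro x hx
    rw [eq_sub_iff_add_eq', mat_update, hf]
    simp only
    rw [← Matrix.det_updateCol_add]
    congr 2
    ext1 i
    have : k - x = k - (x + 1) + 1 := by omega
    rw [Pi.add_apply, this, cc_succ]
  have tel : ∀ b, Y ((j : ℕ) + 1) ≤ b → b ≤ k →
      ∑ x ∈ Finset.Ico (Y ((j : ℕ) + 1)) b, (mat n k (Function.update Y ((j : ℕ) + 1) x)).det
        = f (Y ((j : ℕ) + 1)) - f b := by
    intro b hb
    induction b, hb using Nat.le_induction with
    | base => simp
    | succ b hb ih =>
      intro hbk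
      rw [Finset.sum_Ico_succ_top hb, ih (by omega), step b (by omega)]; ring
  rw [tel _ hle hlek]
  have hz : f (Y j) = 0 := by
    rcases Nat.eq_zero_or_pos (j : ℕ) with hj | hj
    · apply Matrix.det_eq_zero_of_column_eq_zero j
      intro i
      rw [Matrix.updateCol_self, hj, h0, Nat.sub_self]
      exact cc_zero (by omega)
    · obtain ⟨p, hp⟩ : ∃ p : ℕ, (j : ℕ) = p + 1 := ⟨j - 1, by omega⟩
      have hpn : p < n := by have := j.2; omega
      have hne : (⟨p, hpn⟩ : Fin n) ≠ j := by
        intro h; rw [← h] at hp; simp at hp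
      apply Matrix.det_zero_of_column_eq hne
      intro i
      rw [Matrix.updateCol_self, Matrix.updateCol_ne hne]
      simp only [mat, Matrix.of_apply, hp]
      congr 1
      push_cast; ring
  rw [hz, sub_zero, hf]
  simp only [mat, Matrix.of_apply, cc_deriv]

/-- Number of words of length `N` surviving from the state `Y`. -/
def gg (n : ℕ) : ℕ → (ℕ → ℕ) → ℕ
  | 0, _ => 1
  | N + 1, Y => ∑ j ∈ Finset.range n, ∑ x ∈ Finset.Ico (Y (j + 1)) (Y j),
      gg n N (Function.update Y (j + 1) x)

lemma antitone_update {Y : ℕ → ℕ} (hY : Antitone Y) {j x : ℕ} (h1 : Y (j + 1) ≤ x)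
    (h2 : x < Y j) : Antitone (Function.update Y (j + 1) x) := by
  apply antitone_nat_of_succ_le
  intro p
  have : Y (p + 1) ≤ Y p := hY (Nat.le_succ p)
  simp only [Function.update_apply]
  split_ifs with h h' h'
  · omega
  · have : p = j := by omega
    subst this; omega
  · subst h'; omega
  · exact this

lemma coeff_det (n k : ℕ) (N : ℕ) : ∀ Y : ℕ → ℕ, Antitone Y → Y 0 = k →
    PowerSeries.coeff N (mat n k Y).det * (Nat.factorial N : ℝ) = gg n N Y := by
  induction N with
  | zero =>
    intro Y hY h0
    rw [PowerSeries.coeff_zero_eq_constantCoeff_apply, RingHom.map_det,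
      Matrix.det_of_isLowerTriangular]
    · simp [mat, cc_constCoeff, hh_zero, gg]
    · intro i j hij
      have hij' : i < j := hij
      simp only [RingHom.mapMatrix_apply, Matrix.map_apply, mat, Matrix.of_apply, cc_constCoeff]
      exact hh_neg _ (by have : (i : ℕ) < j := hij'
                         omega)
  | succ N ih =>
    intro Y hY h0
    have key : PowerSeries.derivative ℝ (mat n k Y).det =
        ∑ j : Fin n, ∑ x ∈ Finset.Ico (Y ((j : ℕ) + 1)) (Y j),
          (mat n k (Function.update Y ((j : ℕ) + 1) x)).det := by
      rw [deriv_det]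
      exact Finset.sum_congr rfl fun j _ => (mat_sum n k Y hY h0 j).symm
    have h2 := congrArg (PowerSeries.coeff N) key
    rw [PowerSeries.coeff_derivative] at h2
    rw [Nat.factorial_succ]
    push_cast
    rw [← mul_assoc, h2, gg, ← Fin.sum_univ_eq_sum_range (fun j => ∑ x ∈ Finset.Ico (Y (j + 1)) (Y j),
      gg n N (Function.update Y (j + 1) x))]
    simp only [map_sum, Finset.sum_mul]
    push_cast
    refine Finset.sum_congr rfl fun j _ => Finset.sum_congr rfl fun x hx => ?_
    rw [Finset.mem_Ico] at hx
    exact ih _ (antitone_update hY hx.1 hx.2) (by simp [h0])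

/-- `w` can be read from the state `Y` without creating a decreasing subsequence that is
too long. -/
def Good (n : ℕ) (Y : ℕ → ℕ) (w : List ℕ) : Prop :=
  ∀ p ≤ n, ∀ s : List ℕ, s.Sublist w → s.Pairwise (· > ·) → (∀ a ∈ s, a < Y p) → s.length + p ≤ n

lemma good_cons {n : ℕ} {Y : ℕ → ℕ} (hY : Antitone Y) {j x : ℕ} (hj : j < n)
    (h1 : Y (j + 1) ≤ x) (h2 : x < Y j) (w : List ℕ) :
    Good n Y (x :: w) ↔ Good n (Function.update Y (j + 1) x) w := by
  constructor
  · intro h p hp s hs hd ha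
    by_cases hpj : p = j + 1
    · subst hpj
      simp only [Function.update_self] at ha
      have := h j (by omega) (x :: s) (hs.cons_cons x) (List.pairwise_cons.mpr ⟨ha, hd⟩) (by
        intro a ha'
        rcases List.mem_cons.mp ha' with rfl | h'
        · exact h2
        · exact (ha a h').trans h2)
      simp only [List.length_cons] at this
      omega
    · rw [Function.update_of_ne hpj] at ha
      exact h p hp s (hs.cons x) hd ha
  · intro h p hp s hs hd ha
    rcases List.sublist_cons_iff.mp hs with hs | ⟨r, rfl, hr⟩
    · refine h p hp s hs hd fun a has => ?_
      have := ha a has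
      by_cases hpj : p = j + 1
      · subst hpj
        rw [Function.update_self]; omega
      · rwa [Function.update_of_ne hpj]
    · have hx : x < Y p := ha x (by simp)
      have hpj : p ≤ j := by
        by_contra hcon
        have := hY (by omega : j + 1 ≤ p)
        omega
      rw [List.pairwise_cons] at hd
      have := h (j + 1) (by omega) r hr hd.2 (by
        intro a har
        rw [Function.update_self]
        exact hd.1 a har)
      simp only [List.length_cons]
      omega

lemma not_good_cons {n : ℕ} {Y : ℕ → ℕ} {x : ℕ} (hx : x < Y n) (w : List ℕ) :
    ¬ Good n Y (x :: w) := by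
  intro h
  have := h n le_rfl [x] (by simp) (by simp) (by simpa using hx)
  simp at this

open Classical in
/-- Number of good words. -/
noncomputable def cnt (n k N : ℕ) (Y : ℕ → ℕ) : ℕ :=
  ∑ w : Fin N → Fin k, if Good n Y (List.ofFn fun i => (w i : ℕ)) then 1 else 0

open Classical in
lemma cnt_succ (n k N : ℕ) (Y : ℕ → ℕ) : cnt n k (N + 1) Y =
    ∑ x ∈ Finset.range k, ∑ w : Fin N → Fin k,
      if Good n Y (x :: List.ofFn fun i => (w i : ℕ)) then 1 else 0 := by
  rw [cnt, ← (Fin.consEquiv (fun _ => Fin k)).sum_comp, Fintype.sum_prod_type,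
    ← Fin.sum_univ_eq_sum_range (fun x => ∑ w : Fin N → Fin k,
      if Good n Y (x :: List.ofFn fun i => (w i : ℕ)) then 1 else 0)]
  refine Finset.sum_congr rfl fun x _ => Finset.sum_congr rfl fun w _ => ?_
  simp [Fin.consEquiv, List.ofFn_succ]

lemma sum_split {Y : ℕ → ℕ} (hY : Antitone Y) (F : ℕ → ℕ) (n : ℕ) :
    ∑ x ∈ Finset.range (Y 0), F x = ∑ x ∈ Finset.range (Y n), F x +
      ∑ j ∈ Finset.range n, ∑ x ∈ Finset.Ico (Y (j + 1)) (Y j), F x := by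
  induction n with
  | zero => simp
  | succ n ih =>
    rw [ih, Finset.sum_range_succ _ n,
      ← Finset.sum_range_add_sum_Ico F (hY (Nat.le_succ n))]
    simp only [Nat.succ_eq_add_one]
    ring

lemma cnt_eq (n k N : ℕ) : ∀ Y : ℕ → ℕ, Antitone Y → Y 0 = k → (∀ p, 0 < p → Y p ≤ k) →
    (Good n Y []) → cnt n k N Y = gg n N Y := by
  classical
  induction N with
  | zero =>
    intro Y hY h0 _ hg
    simp [cnt, gg, hg]
  | succ N ih =>
    intro Y hY h0 hk hg
    rw [cnt_succ, gg, ← h0, sum_split hY _ n, Finset.sum_eq_zero, zero_add]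
    · refine Finset.sum_congr rfl fun j hj => Finset.sum_congr rfl fun x hx => ?_
      rw [Finset.mem_range] at hj
      rw [Finset.mem_Ico] at hx
      have hA := antitone_update hY hx.1 hx.2
      have h0' : Function.update Y (j + 1) x 0 = k := by simp [h0]
      rw [← ih _ hA h0' (fun p _ => h0' ▸ hA (Nat.zero_le p))
        (fun p hp s hs _ _ => by simpa [List.sublist_nil.mp hs] using hp), h0]
      refine Finset.sum_congr rfl fun w _ => ?_
      simp only [good_cons hY hj hx.1 hx.2]
    · intro x hx
      rw [Finset.mem_range] at hx
      exact Finset.sum_eq_zero fun w _ => if_neg (not_good_cons hx _)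

/-- The initial state. -/
def Y0 (k : ℕ) : ℕ → ℕ := fun p => if p = 0 then k else 0

lemma Y0_anti (k : ℕ) : Antitone (Y0 k) := by
  apply antitone_nat_of_succ_le
  intro p
  simp [Y0]

lemma decLen_le_iff {n k N : ℕ} (w : Fin N → Fin k) :
    decLen w ≤ n ↔ Good n (Y0 k) (List.ofFn fun i => (w i : ℕ)) := by
  have hbdd : BddAbove {m | ∃ f : Fin m → Fin N, StrictMono f ∧ StrictAnti (w ∘ f)} := by
    refine ⟨N, ?_⟩
    rintro m ⟨f, hf, _⟩
    simpa using Fintype.card_le_of_injective f hf.injective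
  constructor
  · intro h p hp s hs hd ha
    by_cases hp0 : p = 0
    · subst hp0
      refine le_trans (le_csSup hbdd ?_) h
      obtain ⟨f, hf⟩ := List.sublist_iff_exists_fin_orderEmbedding_get_eq.mp hs
      refine ⟨fun i => Fin.cast (by simp) (f i), ?_, ?_⟩
      · intro a b hab
        exact f.strictMono hab
      · intro a b hab
        have h3 := List.pairwise_iff_get.mp hd a b hab
        rw [hf a, hf b] at h3
        simp only [List.get_ofFn] at h3
        exact h3
    · cases s with
      | nil => simpa using hp
      | cons a s =>
        have := ha a (by simp)
        simp [Y0, hp0] at this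
  · intro h
    refine csSup_le' ?_
    rintro m ⟨f, hf, hg⟩
    have := h 0 (Nat.zero_le _) (List.ofFn fun i => (w (f i) : ℕ)) ?_ ?_ ?_
    · simpa using this
    · rw [List.sublist_iff_exists_fin_orderEmbedding_get_eq]
      refine ⟨OrderEmbedding.ofStrictMono
        (fun i => Fin.cast (by simp) (f (Fin.cast (by simp) i))) ?_, ?_⟩
      · intro a b hab
        exact hf (show Fin.cast _ a < Fin.cast _ b from hab)
      · intro i
        simp only [List.get_ofFn]
        rfl
    · rw [List.pairwise_ofFn]
      intro a b hab
      exact hg hab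
    · intro a ha
      obtain ⟨i, rfl⟩ := (List.mem_ofFn' _ _).mp ha
      simp [Y0]

lemma card_eq (n k N : ℕ) :
    Nat.card {w : Fin N → Fin k // decLen w ≤ n} = gg n N (Y0 k) := by
  classical
  rw [← cnt_eq n k N (Y0 k) (Y0_anti k) (by simp [Y0]) (fun p hp => by simp [Y0]; split_ifs <;> omega)
    (fun p hp s hs _ _ => by simpa [List.sublist_nil.mp hs] using hp)]
  rw [Nat.card_eq_fintype_card, Fintype.card_subtype, Finset.card_filter, cnt]
  exact Finset.sum_congr rfl fun w _ => by simp only [decLen_le_iff]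

/-- `φ` is absolutely summable at `t` with sum `a`. -/
def Ev (t : ℝ) (φ : PowerSeries ℝ) (a : ℝ) : Prop :=
  (Summable fun N => ‖PowerSeries.coeff N φ * t ^ N‖) ∧
    ∑' N, PowerSeries.coeff N φ * t ^ N = a

lemma Ev.add {t a b : ℝ} {φ ψ : PowerSeries ℝ} (h : Ev t φ a) (h' : Ev t ψ b) :
    Ev t (φ + ψ) (a + b) := by
  constructor
  · refine Summable.of_nonneg_of_le (fun _ => norm_nonneg _) (fun N => ?_) (h.1.add h'.1)
    rw [map_add, add_mul]
    exact norm_add_le _ _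
  · rw [← h.2, ← h'.2, ← h.1.of_norm.tsum_add h'.1.of_norm]
    simp only [map_add, add_mul]

lemma Ev.mul {t a b : ℝ} {φ ψ : PowerSeries ℝ} (h : Ev t φ a) (h' : Ev t ψ b) :
    Ev t (φ * ψ) (a * b) := by
  have key : ∀ N, PowerSeries.coeff N (φ * ψ) * t ^ N =
      ∑ kl ∈ Finset.HasAntidiagonal.antidiagonal N, (PowerSeries.coeff kl.1 φ * t ^ kl.1) *
        (PowerSeries.coeff kl.2 ψ * t ^ kl.2) := by
    intro N
    rw [PowerSeries.coeff_mul, Finset.sum_mul]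
    refine Finset.sum_congr rfl fun p hp => ?_
    rw [← Finset.HasAntidiagonal.mem_antidiagonal.mp hp, pow_add]; ring
  have hs := summable_norm_sum_mul_antidiagonal_of_summable_norm
    (f := fun N => PowerSeries.coeff N φ * t ^ N) (g := fun N => PowerSeries.coeff N ψ * t ^ N)
    h.1 h'.1
  have ht := tsum_mul_tsum_eq_tsum_sum_antidiagonal_of_summable_norm
    (f := fun N => PowerSeries.coeff N φ * t ^ N) (g := fun N => PowerSeries.coeff N ψ * t ^ N)
    h.1 h'.1
  constructor
  · refine hs.congr fun N => ?_
    rw [key N]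
  · rw [← h.2, ← h'.2, ht]
    exact tsum_congr key

lemma Ev.const (t c : ℝ) : Ev t (PowerSeries.C c) c := by
  have h0 : ∀ N, N ≠ 0 → PowerSeries.coeff N (PowerSeries.C c) * t ^ N = 0 := by
    intro N hN
    simp [PowerSeries.coeff_C, hN]
  constructor
  · refine summable_of_ne_finset_zero (s := {0}) fun N hN => ?_
    rw [h0 N (by simpa using hN), norm_zero]
  · rw [tsum_eq_single 0 h0]; simp

lemma Ev.prod {t : ℝ} {ι : Type*} (s : Finset ι) (f : ι → PowerSeries ℝ) (a : ι → ℝ)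
    (h : ∀ i, Ev t (f i) (a i)) : Ev t (∏ i ∈ s, f i) (∏ i ∈ s, a i) := by
  classical
  induction s using Finset.induction_on with
  | empty => simpa using Ev.const t 1
  | insert i s hi ih =>
    rw [Finset.prod_insert hi, Finset.prod_insert hi]
    exact (h i).mul ih

lemma Ev.sum {t : ℝ} {ι : Type*} (s : Finset ι) (f : ι → PowerSeries ℝ) (a : ι → ℝ)
    (h : ∀ i, Ev t (f i) (a i)) : Ev t (∑ i ∈ s, f i) (∑ i ∈ s, a i) := by
  classical
  induction s using Finset.induction_on with
  | empty => simpa using Ev.const t 0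
  | insert i s hi ih =>
    rw [Finset.sum_insert hi, Finset.sum_insert hi]
    exact (h i).add ih

lemma Ev.det {t : ℝ} {n : ℕ} (M : Matrix (Fin n) (Fin n) (PowerSeries ℝ))
    (A : Matrix (Fin n) (Fin n) ℝ) (h : ∀ i j, Ev t (M i j) (A i j)) : Ev t M.det A.det := by
  rw [Matrix.det_apply', Matrix.det_apply']
  refine Ev.sum _ _ _ fun σ => ?_
  refine Ev.mul ?_ (Ev.prod _ _ _ fun i => h _ _)
  simpa using Ev.const t ((Equiv.Perm.sign σ : ℤ) : ℝ)

lemma ev_cc (k : ℕ) (j : ℤ) (t : ℝ) : Ev t (cc k j) (bCoeff k j t) := by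
  constructor
  · have hs : Summable fun N : ℕ => (2 : ℝ) ^ (k + j.natAbs) * (‖2 * t‖ ^ N / (Nat.factorial N : ℝ)) :=
      (Real.summable_pow_div_factorial _).mul_left _
    refine Summable.of_nonneg_of_le (fun _ => norm_nonneg _) (fun N => ?_) hs
    have hb : |hh k (j + N)| ≤ (2 : ℝ) ^ (k + j.natAbs + N) := by
      unfold hh
      split_ifs with h
      · rw [abs_of_nonneg (by positivity)]
        have h1 := Nat.choose_le_two_pow (k + (j + (N : ℤ)).toNat - 1) (j + (N : ℤ)).toNat
        have h2 : 2 ^ (k + (j + (N : ℤ)).toNat - 1) ≤ 2 ^ (k + j.natAbs + N) :=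
          Nat.pow_le_pow_right (by norm_num) (by omega)
        exact_mod_cast h1.trans h2
      · simp
    have hfac : (0 : ℝ) < (Nat.factorial N : ℝ) := by positivity
    simp only [cc, PowerSeries.coeff_mk, norm_mul, norm_div, norm_pow, Real.norm_eq_abs,
      Nat.abs_cast, abs_two]
    calc |hh k (j + N)| / (Nat.factorial N : ℝ) * |t| ^ N
        ≤ (2 : ℝ) ^ (k + j.natAbs + N) / (Nat.factorial N : ℝ) * |t| ^ N := by gcongr
      _ = _ := by rw [pow_add _ _ N, mul_pow]; ring
  · unfold bCoeff
    refine tsum_congr fun l => ?_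
    simp only [cc, PowerSeries.coeff_mk, hh]
    ring

end GesselAux

/-- Theorem 1 ($G_D$ case): the exponential generating function of `F_D(n;k,·)`,
evaluated at `k t`, equals the `n × n` Toeplitz determinant with symbol
`f_D(z;t) = e^{t/z} (1-z)^{-k}`. -/
theorem gessel_strictly_decreasing (k n : ℕ) (hk : 1 ≤ k) (hn : 1 ≤ n) (t : ℝ) :
    ∑' N : ℕ, FD n k N * ((k : ℝ) * t) ^ N / (Nat.factorial N : ℝ) =
      Matrix.det (Matrix.of fun i j : Fin n =>
        bCoeff k (((i : ℕ) : ℤ) - ((j : ℕ) : ℤ)) t) := by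
  have hev : GesselAux.Ev t (GesselAux.mat n k (GesselAux.Y0 k)).det
      (Matrix.det (Matrix.of fun i j : Fin n =>
        bCoeff k (((i : ℕ) : ℤ) - ((j : ℕ) : ℤ)) t)) := by
    refine GesselAux.Ev.det _ _ fun i j => ?_
    simpa [GesselAux.mat, GesselAux.Y0] using
      GesselAux.ev_cc k (((i : ℕ) : ℤ) - ((j : ℕ) : ℤ)) t
  rw [← hev.2]
  refine tsum_congr fun N => ?_
  have h1 := GesselAux.coeff_det n k N (GesselAux.Y0 k) (GesselAux.Y0_anti k)
    (by simp [GesselAux.Y0])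
  rw [FD, GesselAux.card_eq, ← h1, mul_pow]
  have hk' : (k : ℝ) ≠ 0 := by positivity
  have hfac : (Nat.factorial N : ℝ) ≠ 0 := by positivity
  field_simp
end

section
/- Let k ≥ 1, n ≥ 1 be integers and let D_n(t) be the n×n Toeplitz determinant with symbol e^{t/z}(1+z)^k. Define σ(t) := k t − t·D_n′(t)/D_n(t) on the open set of real t where D_n(t) ≠ 0 (D_n is entire, so σ is smooth there). Then for every real t with D_n(t) ≠ 0, σ satisfies the σ-form of the Painlevé V equation: (t·σ″(t))² = ( σ(t) − t·σ′(t) − 2·σ′(t)² + (2k+n)·σ′(t) )² − 4·σ′(t)²·(σ′(t) − k)·(σ′(t) − k − n). -/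
open scoped BigOperators

/-- `D_n(t)`: the `n × n` Toeplitz determinant with symbol `e^{t/z} (1+z)^k`. -/
noncomputable def Dn (k n : ℕ) (t : ℝ) : ℝ :=
  Matrix.det (Matrix.of fun i j : Fin n =>
    aCoeff k (((i : ℕ) : ℤ) - ((j : ℕ) : ℤ)) t)

/-- `σ(t) = k t - t D_n'(t)/D_n(t)`. -/
noncomputable def sigmaFn (k n : ℕ) (t : ℝ) : ℝ :=
  (k : ℝ) * t - t * deriv (Dn k n) t / Dn k n t

namespace SPV

/-- extended binomial -/
noncomputable def bb (k : ℕ) (m : ℤ) : ℝ :=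
  if 0 ≤ m then (Nat.choose k m.toNat : ℝ) else 0

lemma bb_rec (k : ℕ) (m : ℤ) : (m : ℝ) * bb k m + ((m : ℝ) - 1 - k) * bb k (m - 1) = 0 := by
  unfold bb
  rcases lt_trichotomy m 0 with h | h | h
  · rw [if_neg (by omega), if_neg (by omega)]; simp
  · subst h; simp
  · obtain ⟨p, rfl⟩ : ∃ p : ℕ, m = p + 1 := ⟨(m - 1).toNat, by omega⟩
    rw [if_pos (by omega), if_pos (by omega)]
    have h1 : ((p : ℤ) + 1).toNat = p + 1 := by omega
    have h2 : ((p : ℤ) + 1 - 1).toNat = p := by omega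
    rw [h1, h2]
    by_cases hp : p ≤ k
    · have := Nat.choose_succ_right_eq k p
      have h3 : ((Nat.choose k (p + 1) * (p + 1) : ℕ) : ℝ) = ((Nat.choose k p * (k - p) : ℕ) : ℝ) := by
        rw [this]
      push_cast [Nat.cast_sub hp] at h3
      push_cast
      linarith
    · rw [Nat.choose_eq_zero_of_lt (by omega), Nat.choose_eq_zero_of_lt (by omega)]
      simp

lemma bb_zero (k : ℕ) (m : ℤ) (h : (k : ℤ) < m) : bb k m = 0 := by
  unfold bb
  split_ifs
  · rw [Nat.choose_eq_zero_of_lt (by omega)]; simp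
  · rfl

lemma aCoeff_eq (k : ℕ) (j : ℤ) (N : ℕ) (hN : (k : ℤ) < j + N) (t : ℝ) :
    aCoeff k j t = ∑ l ∈ Finset.range N, t ^ l / (Nat.factorial l : ℝ) * bb k (j + l) := by
  unfold aCoeff
  apply tsum_eq_sum
  intro l hl
  have : bb k (j + l) = 0 := by
    apply bb_zero
    simp at hl
    omega
  unfold bb at this
  rw [this, mul_zero]

lemma fact_aux (l : ℕ) (t : ℝ) : ((l : ℝ) + 1) * (t ^ (l + 1) / (Nat.factorial (l + 1) : ℝ))
    = t * (t ^ l / (Nat.factorial l : ℝ)) := by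
  rw [Nat.factorial_succ]
  have : (Nat.factorial l : ℝ) ≠ 0 := by positivity
  push_cast
  field_simp
  ring

lemma exists_N (k : ℕ) (j : ℤ) : ∃ N : ℕ, (k : ℤ) < j + N ∧ (k : ℤ) < j - 1 + N :=
  ⟨((k : ℤ) - j + 2).toNat, by omega⟩

lemma aCoeff_hasDerivAt (k : ℕ) (j : ℤ) (t : ℝ) :
    HasDerivAt (aCoeff k j) (aCoeff k (j + 1) t) t := by
  obtain ⟨N, hN, -⟩ := exists_N k j
  have e : aCoeff k j = fun t => ∑ l ∈ Finset.range (N + 1), t ^ l / (Nat.factorial l : ℝ) * bb k (j + l) := by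
    funext t
    exact aCoeff_eq k j (N + 1) (by push_cast; omega) t
  rw [e, aCoeff_eq k (j + 1) N (by omega) t]
  have : ∀ l ∈ Finset.range (N + 1), HasDerivAt (fun t : ℝ => t ^ l / (Nat.factorial l : ℝ) * bb k (j + l))
      ((l : ℝ) * t ^ (l - 1) / (Nat.factorial l : ℝ) * bb k (j + l)) t := fun l _ =>
    ((hasDerivAt_pow l t).div_const _).mul_const _
  refine (HasDerivAt.fun_sum this).congr_deriv ?_
  rw [Finset.sum_range_succ']
  simp only [Nat.cast_zero, zero_mul, zero_div, add_zero, Nat.add_sub_cancel]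
  apply Finset.sum_congr rfl
  intro l _
  rw [Nat.factorial_succ]
  have : (Nat.factorial l : ℝ) ≠ 0 := by positivity
  have e2 : j + 1 + (l : ℤ) = j + ((l + 1 : ℕ) : ℤ) := by push_cast; ring
  rw [e2]
  push_cast
  field_simp

lemma aCoeff_rec (k : ℕ) (j : ℤ) (t : ℝ) :
    t * aCoeff k (j + 1) t + (t + j) * aCoeff k j t + ((j : ℝ) - 1 - k) * aCoeff k (j - 1) t = 0 := by
  obtain ⟨N, hN, hN'⟩ := exists_N k j
  have e1 : t * aCoeff k (j + 1) t = ∑ l ∈ Finset.range (N + 1),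
      (l : ℝ) * (t ^ l / (Nat.factorial l : ℝ)) * bb k (j + l) := by
    rw [aCoeff_eq k (j + 1) N (by omega) t, Finset.sum_range_succ', Finset.mul_sum]
    simp only [Nat.cast_zero, zero_mul, add_zero]
    apply Finset.sum_congr rfl
    intro l _
    have e2 : j + 1 + (l : ℤ) = j + ((l + 1 : ℕ) : ℤ) := by push_cast; ring
    rw [e2]
    push_cast
    rw [fact_aux]
    ring
  have e2 : t * aCoeff k j t = ∑ l ∈ Finset.range (N + 1),
      (l : ℝ) * (t ^ l / (Nat.factorial l : ℝ)) * bb k (j + l - 1) := by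
    rw [aCoeff_eq k j N (by omega) t, Finset.sum_range_succ', Finset.mul_sum]
    simp only [Nat.cast_zero, zero_mul, add_zero]
    apply Finset.sum_congr rfl
    intro l _
    have e2 : j + ((l + 1 : ℕ) : ℤ) - 1 = j + l := by push_cast; ring
    rw [e2]
    push_cast
    rw [fact_aux]
    ring
  have e3 : aCoeff k (j - 1) t = ∑ l ∈ Finset.range (N + 1),
      (t ^ l / (Nat.factorial l : ℝ)) * bb k (j + l - 1) := by
    rw [aCoeff_eq k (j - 1) (N + 1) (by push_cast; omega) t]
    apply Finset.sum_congr rfl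
    intro l _
    rw [show j - 1 + (l : ℤ) = j + l - 1 by ring]
  have e4 := aCoeff_eq k j (N + 1) (by push_cast; omega) t
  have : t * aCoeff k (j + 1) t + (t + j) * aCoeff k j t + ((j : ℝ) - 1 - k) * aCoeff k (j - 1) t
     = t * aCoeff k (j + 1) t + t * aCoeff k j t + j * aCoeff k j t
       + ((j : ℝ) - 1 - k) * aCoeff k (j - 1) t := by ring
  rw [this, e2, e1, e3, e4, Finset.mul_sum, Finset.mul_sum, ← Finset.sum_add_distrib,
    ← Finset.sum_add_distrib, ← Finset.sum_add_distrib]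
  apply Finset.sum_eq_zero
  intro l _
  have := bb_rec k (j + l)
  push_cast at this
  linear_combination (t ^ l / (Nat.factorial l : ℝ)) * this

lemma aCoeff_analytic (k : ℕ) (j : ℤ) (t : ℝ) : AnalyticAt ℝ (aCoeff k j) t := by
  obtain ⟨N, hN, -⟩ := exists_N k j
  have e : aCoeff k j = fun t => ∑ l ∈ Finset.range N, t ^ l / (Nat.factorial l : ℝ) * bb k (j + l) := by
    funext t
    exact aCoeff_eq k j N hN t
  rw [e]
  apply Finset.analyticAt_fun_sum
  intro l _
  simp only [div_eq_mul_inv]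
  exact ((analyticAt_id.pow l).mul analyticAt_const).mul analyticAt_const

lemma aCoeff_zero (k : ℕ) (j : ℤ) : aCoeff k j 0 = bb k j := by
  obtain ⟨N, hN, -⟩ := exists_N k j
  rw [aCoeff_eq k j (N + 1) (by push_cast; omega), Finset.sum_range_succ']
  simp

lemma det_analytic {n : ℕ} (M : ℝ → Matrix (Fin n) (Fin n) ℝ) (t : ℝ)
    (h : ∀ i j, AnalyticAt ℝ (fun s => M s i j) t) : AnalyticAt ℝ (fun s => (M s).det) t := by
  simp only [Matrix.det_apply, zsmul_eq_mul, Units.smul_def]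
  apply Finset.analyticAt_fun_sum
  intro s _
  apply analyticAt_const.mul
  apply Finset.analyticAt_fun_prod
  intro i _
  exact h _ _

lemma det_hasDerivAt {n : ℕ} (M : ℝ → Matrix (Fin n) (Fin n) ℝ) (M' : Matrix (Fin n) (Fin n) ℝ) (t : ℝ)
    (h : ∀ i j, HasDerivAt (fun s => M s i j) (M' i j) t) :
    HasDerivAt (fun s => (M s).det) (∑ i, ((M t).updateCol i (fun j => M' j i)).det) t := by
  simp only [Matrix.det_apply, zsmul_eq_mul, Units.smul_def]
  rw [Finset.sum_comm]
  apply HasDerivAt.fun_sum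
  intro s _
  rw [← Finset.mul_sum]
  apply HasDerivAt.const_mul
  refine (HasDerivAt.fun_finsetProd (u := Finset.univ) (fun i _ => h (s i) i)).congr_deriv ?_
  symm
  apply Finset.sum_congr rfl
  intro i _
  rw [← Finset.prod_erase_mul _ _ (Finset.mem_univ i)]
  simp only [Matrix.updateCol_self, smul_eq_mul]
  congr 1
  apply Finset.prod_congr rfl
  intro x hx
  rw [Matrix.updateCol_ne (Finset.ne_of_mem_erase hx)]

end SPV
namespace SPV

/-- the shift matrix -/
def Sh (n : ℕ) : Matrix (Fin n) (Fin n) ℝ :=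
  Matrix.of fun i j => if (i : ℕ) + 1 = j then 1 else 0

/-- the diagonal index matrix -/
def La (n : ℕ) : Matrix (Fin n) (Fin n) ℝ := Matrix.diagonal fun i => ((i : ℕ) : ℝ)

/-- first basis vector -/
def e0 (n : ℕ) : Fin n → ℝ := fun j => if (j : ℕ) = 0 then 1 else 0

/-- last basis vector -/
def eL (n : ℕ) : Fin n → ℝ := fun j => if (j : ℕ) + 1 = n then 1 else 0

/-- extension by zero -/
def ex {n : ℕ} (v : Fin n → ℝ) (b : ℕ) : ℝ := if h : b < n then v ⟨b, h⟩ else 0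

lemma ex_of {n : ℕ} (v : Fin n → ℝ) (i : Fin n) : ex v i = v i := by
  simp [ex]

lemma ex_add {n : ℕ} (v u : Fin n → ℝ) (b : ℕ) : ex (v + u) b = ex v b + ex u b := by
  unfold ex; split_ifs <;> simp
lemma ex_sub {n : ℕ} (v u : Fin n → ℝ) (b : ℕ) : ex (v - u) b = ex v b - ex u b := by
  unfold ex; split_ifs <;> simp
lemma ex_smul {n : ℕ} (c : ℝ) (v : Fin n → ℝ) (b : ℕ) : ex (c • v) b = c * ex v b := by
  unfold ex; split_ifs <;> simp
lemma ex_zero {n : ℕ} (b : ℕ) : ex (0 : Fin n → ℝ) b = 0 := by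
  unfold ex; split_ifs <;> simp

lemma Sh_mulVec_apply {n : ℕ} (v : Fin n → ℝ) (i : Fin n) : (Sh n).mulVec v i = ex v (i + 1) := by
  unfold ex Sh Matrix.mulVec dotProduct
  simp only [Matrix.of_apply, ite_mul, one_mul, zero_mul]
  split_ifs with h
  · rw [Finset.sum_eq_single (⟨i + 1, h⟩ : Fin n)]
    · simp
    · intro b _ hb
      rw [if_neg]
      intro h2
      exact hb (Fin.ext h2.symm)
    · simp
  · apply Finset.sum_eq_zero
    intro x _
    rw [if_neg]
    intro h2
    have := x.2
    omega

lemma ex_Sh {n : ℕ} (v : Fin n → ℝ) (b : ℕ) : ex ((Sh n).mulVec v) b = ex v (b + 1) := by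
  by_cases h : b < n
  · have := Sh_mulVec_apply v ⟨b, h⟩
    rw [← ex_of ((Sh n).mulVec v)] at this
    exact this
  · unfold ex
    rw [dif_neg h, dif_neg (by omega)]

lemma ex_La {n : ℕ} (v : Fin n → ℝ) (b : ℕ) : ex ((La n).mulVec v) b = b * ex v b := by
  unfold ex La
  split_ifs with h
  · simp [Matrix.mulVec_diagonal]
  · simp

lemma e0_dot {n : ℕ} (v : Fin n → ℝ) : e0 n ⬝ᵥ v = ex v 0 := by
  unfold ex e0 dotProduct
  simp only [ite_mul, one_mul, zero_mul]
  split_ifs with h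
  · rw [Finset.sum_eq_single (⟨0, h⟩ : Fin n)]
    · simp
    · intro b _ hb
      rw [if_neg]
      intro h2
      exact hb (Fin.ext h2)
    · simp
  · apply Finset.sum_eq_zero
    intro x _
    have := x.2
    omega

lemma vecMul_Sh_apply {n : ℕ} (v : Fin n → ℝ) (j : Fin n) :
    Matrix.vecMul v (Sh n) j = if (j : ℕ) = 0 then 0 else ex v (j - 1) := by
  unfold ex Sh Matrix.vecMul dotProduct
  simp only [Matrix.of_apply, mul_ite, mul_one, mul_zero]
  have hj := j.2
  split_ifs with h h2
  · apply Finset.sum_eq_zero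
    intro x _
    rw [if_neg (by omega)]
  · rw [Finset.sum_eq_single (⟨j - 1, h2⟩ : Fin n)]
    · rw [if_pos]; simp; omega
    · intro b _ hb
      rw [if_neg]
      intro h2
      apply hb
      apply Fin.ext
      simp
      omega
    · simp
  · omega

/-- graded band matrices -/
def Bd {n : ℕ} (d : ℕ) (M : Matrix (Fin n) (Fin n) ℝ) : Prop :=
  ∀ i j : Fin n, (j : ℕ) ≠ i + d → M i j = 0

lemma Bd.mul {n d e : ℕ} {M N : Matrix (Fin n) (Fin n) ℝ} (h : Bd d M) (h' : Bd e N) :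
    Bd (d + e) (M * N) := by
  intro i j hij
  rw [Matrix.mul_apply]
  apply Finset.sum_eq_zero
  intro x _
  by_cases hx : (x : ℕ) = i + d
  · rw [h' x j (by omega), mul_zero]
  · rw [h i x hx, zero_mul]

lemma Bd.trace {n d : ℕ} {M : Matrix (Fin n) (Fin n) ℝ} (h : Bd d M) (hd : 0 < d) :
    M.trace = 0 := by
  unfold Matrix.trace
  apply Finset.sum_eq_zero
  intro i _
  exact h i i (by omega)

lemma Bd_Sh (n : ℕ) : Bd 1 (Sh n) := by
  intro i j h
  simp only [Sh, Matrix.of_apply]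
  rw [if_neg (by omega)]

lemma Bd_diagonal {n : ℕ} (f : Fin n → ℝ) : Bd 0 (Matrix.diagonal f) := by
  intro i j h
  apply Matrix.diagonal_apply_ne
  intro h2
  subst h2
  simp at h

lemma Bd_La (n : ℕ) : Bd 0 (La n) := Bd_diagonal _

/-- shifted columns -/
noncomputable def cc (k n : ℕ) (m : ℤ) (t : ℝ) : Fin n → ℝ := fun i => aCoeff k ((i : ℕ) + m) t

/-- shifted Toeplitz matrices -/
noncomputable def TT (k n : ℕ) (m : ℤ) (t : ℝ) : Matrix (Fin n) (Fin n) ℝ :=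
  Matrix.of fun i j : Fin n => aCoeff k (((i : ℕ) : ℤ) - ((j : ℕ) : ℤ) + m) t

lemma TT_succ (k n : ℕ) (m : ℤ) (t : ℝ) :
    TT k n (m + 1) t = TT k n m t * Sh n + Matrix.vecMulVec (cc k n (m + 1) t) (e0 n) := by
  ext i j
  rw [Matrix.add_apply, Matrix.mul_apply_eq_vecMul, vecMul_Sh_apply, Matrix.vecMulVec_apply]
  have hj := j.2
  unfold e0 cc
  split_ifs with h
  · simp [TT, h]
  · rw [ex, dif_pos (by omega)]
    simp only [TT, Matrix.of_apply, mul_zero, add_zero]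
    congr 1
    push_cast [Nat.cast_sub (show 1 ≤ (j : ℕ) by omega)]
    ring

lemma TT_succ' (k n : ℕ) (m : ℤ) (t : ℝ) :
    TT k n (m + 1) t = Sh n * TT k n m t +
      Matrix.vecMulVec (eL n) (fun j : Fin n => aCoeff k (n - (j : ℕ) + m) t) := by
  ext i j
  have e : (Sh n * TT k n m t) i j = (Sh n).mulVec (fun l => TT k n m t l j) i := by
    rfl
  rw [Matrix.add_apply, e, Sh_mulVec_apply, Matrix.vecMulVec_apply]
  have hi := i.2
  unfold eL ex
  by_cases h : (i : ℕ) + 1 = n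
  · rw [dif_neg (by omega), if_pos h]
    simp only [TT, Matrix.of_apply, one_mul, zero_add]
    congr 1
    omega
  · rw [dif_pos (by omega), if_neg h]
    simp only [TT, Matrix.of_apply, zero_mul, add_zero]
    congr 1
    push_cast
    ring

/-- the matrix `Λ - (n-1)` -/
def Lb (n : ℕ) : Matrix (Fin n) (Fin n) ℝ := Matrix.diagonal fun i => ((i : ℕ) : ℝ) - n + 1

lemma Lb_eq (n : ℕ) : La n = Lb n + ((n : ℝ) - 1) • (1 : Matrix (Fin n) (Fin n) ℝ) := by
  unfold La Lb
  ext i j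
  by_cases h : i = j
  · subst h; simp
  · simp [h]

lemma Lb_eL (n : ℕ) : (Lb n).mulVec (eL n) = 0 := by
  funext i
  unfold Lb eL
  rw [Matrix.mulVec_diagonal]
  split_ifs with h
  · have : ((i : ℕ) : ℝ) + 1 = n := by exact_mod_cast h
    simp; linarith
  · simp

lemma Lb_TT (k n : ℕ) (m : ℤ) (t : ℝ) :
    Lb n * TT k n (m + 1) t = Lb n * Sh n * TT k n m t := by
  rw [TT_succ', mul_add, Matrix.mul_vecMulVec, Lb_eL, Matrix.zero_vecMulVec, add_zero, mul_assoc]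

lemma Lb_cc (k n : ℕ) (m : ℤ) (t : ℝ) :
    (Lb n).mulVec (cc k n (m + 1) t) = (Lb n * Sh n).mulVec (cc k n m t) := by
  rw [← Matrix.mulVec_mulVec]
  funext i
  unfold Lb
  rw [Matrix.mulVec_diagonal, Matrix.mulVec_diagonal, Sh_mulVec_apply]
  unfold ex
  split_ifs with h
  · simp only [cc]
    push_cast
    rw [show ((i : ℕ) : ℤ) + (m + 1) = (i : ℕ) + 1 + m by ring]
  · have h2 : (i : ℕ) + 1 = n := by have := i.2; omega
    have : ((i : ℕ) : ℝ) + 1 = n := by exact_mod_cast h2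
    have e : ((i : ℕ) : ℝ) - n + 1 = 0 := by linarith
    rw [e]; simp

/-- the basic linear recurrence for columns -/
lemma cc_rec (k n : ℕ) (m : ℤ) (t : ℝ) :
    t • cc k n (m + 2) t + (t + m + 1) • cc k n (m + 1) t + ((m : ℝ) - k) • cc k n m t
      + (La n).mulVec (cc k n (m + 1) t) + (La n).mulVec (cc k n m t) = 0 := by
  funext i
  unfold La
  simp only [Pi.add_apply, Matrix.mulVec_diagonal, Pi.smul_apply, smul_eq_mul, cc, Pi.zero_apply]
  have := aCoeff_rec k ((i : ℕ) + (m + 1)) t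
  rw [show ((i : ℕ) : ℤ) + (m + 1) + 1 = (i : ℕ) + (m + 2) by ring,
    show ((i : ℕ) : ℤ) + (m + 1) - 1 = (i : ℕ) + m by ring] at this
  push_cast at this
  linear_combination this

/-- the basic linear recurrence for matrices -/
lemma TT_rec (k n : ℕ) (m : ℤ) (t : ℝ) :
    t • TT k n (m + 2) t + (t + m + 1) • TT k n (m + 1) t + ((m : ℝ) - k) • TT k n m t
      + La n * TT k n (m + 1) t + La n * TT k n m t
      - TT k n (m + 1) t * La n - TT k n m t * La n = 0 := by
  ext i j
  unfold La
  simp only [Matrix.add_apply, Matrix.sub_apply, Matrix.diagonal_mul, Matrix.mul_diagonal,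
    Matrix.smul_apply, smul_eq_mul, TT, Matrix.of_apply, Matrix.zero_apply]
  have := aCoeff_rec k ((i : ℕ) - (j : ℕ) + (m + 1)) t
  rw [show ((i : ℕ) : ℤ) - (j : ℕ) + (m + 1) + 1 = (i : ℕ) - (j : ℕ) + (m + 2) by ring,
    show ((i : ℕ) : ℤ) - (j : ℕ) + (m + 1) - 1 = (i : ℕ) - (j : ℕ) + m by ring] at this
  push_cast at this
  linear_combination this

end SPV
namespace SPV

lemma det_TT (k n : ℕ) (t : ℝ) : (TT k n 0 t).det = Dn k n t := by
  unfold TT Dn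
  simp only [add_zero]

/-- solution vectors -/
noncomputable def Y (k n : ℕ) (m : ℤ) (t : ℝ) : Fin n → ℝ := (TT k n 0 t)⁻¹.mulVec (cc k n m t)

/-- hook coordinates -/
noncomputable def w (k n : ℕ) (a b : ℕ) (t : ℝ) : ℝ := ex (Y k n (a + 1) t) b

lemma ex_vmv {n : ℕ} (u v y : Fin n → ℝ) (b : ℕ) :
    ex ((Matrix.vecMulVec u v).mulVec y) b = ex u b * (v ⬝ᵥ y) := by
  unfold ex
  split_ifs
  · simp only [Matrix.mulVec, dotProduct, Matrix.vecMulVec_apply, Finset.mul_sum, mul_assoc]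
  · simp

lemma dot_vecMul_Sh {n : ℕ} (v : Fin n → ℝ) (y : Fin n → ℝ) :
    Matrix.vecMul v (Sh n) ⬝ᵥ y = v ⬝ᵥ (Sh n).mulVec y := by
  rw [Matrix.dotProduct_mulVec]

lemma trace_vmv {n : ℕ} (u v : Fin n → ℝ) : (Matrix.vecMulVec u v).trace = v ⬝ᵥ u := by
  rw [Matrix.trace_vecMulVec, dotProduct_comm]

section
variable {k n : ℕ} {t : ℝ}

lemma isU (hD : Dn k n t ≠ 0) : IsUnit (TT k n 0 t).det := by
  rw [det_TT]; exact isUnit_iff_ne_zero.mpr hD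

lemma XT1 (hD : Dn k n t ≠ 0) :
    (TT k n 0 t)⁻¹ * TT k n 1 t = Sh n + Matrix.vecMulVec (Y k n 1 t) (e0 n) := by
  have h := TT_succ k n 0 t
  rw [zero_add] at h
  rw [h, mul_add, ← mul_assoc, Matrix.nonsing_inv_mul _ (isU hD), one_mul, Matrix.mul_vecMulVec]
  rfl

lemma XT2 (hD : Dn k n t ≠ 0) :
    (TT k n 0 t)⁻¹ * TT k n 2 t = Sh n * Sh n
      + Matrix.vecMulVec (Y k n 1 t) (Matrix.vecMul (e0 n) (Sh n))
      + Matrix.vecMulVec (Y k n 2 t) (e0 n) := by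
  have h := TT_succ k n 1 t
  rw [one_add_one_eq_two] at h
  rw [h, mul_add, ← mul_assoc, XT1 hD, Matrix.mul_vecMulVec, add_mul, Matrix.vecMulVec_mul]
  rfl

lemma XT3 (hD : Dn k n t ≠ 0) :
    (TT k n 0 t)⁻¹ * TT k n 3 t = Sh n * Sh n * Sh n
      + Matrix.vecMulVec (Y k n 1 t) (Matrix.vecMul (Matrix.vecMul (e0 n) (Sh n)) (Sh n))
      + Matrix.vecMulVec (Y k n 2 t) (Matrix.vecMul (e0 n) (Sh n))
      + Matrix.vecMulVec (Y k n 3 t) (e0 n) := by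
  have h := TT_succ k n 2 t
  rw [show (2 : ℤ) + 1 = 3 by norm_num] at h
  rw [h, mul_add, ← mul_assoc, XT2 hD, Matrix.mul_vecMulVec, add_mul, add_mul,
    Matrix.vecMulVec_mul, Matrix.vecMulVec_mul]
  rfl

lemma w_def (a b : ℕ) (m : ℤ) (hm : m = a + 1) : ex (Y k n m t) b = w k n a b t := by
  subst hm; rfl

lemma TY (hD : Dn k n t ≠ 0) (m : ℤ) : (TT k n 0 t).mulVec (Y k n m t) = cc k n m t := by
  unfold Y
  rw [Matrix.mulVec_mulVec, Matrix.mul_nonsing_inv _ (isU hD), Matrix.one_mulVec]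

lemma Bd_add {d : ℕ} {M N : Matrix (Fin n) (Fin n) ℝ} (h : Bd d M) (h' : Bd d N) : Bd d (M + N) := by
  intro i j hij
  rw [Matrix.add_apply, h i j hij, h' i j hij, add_zero]

/-- conjugated constant matrix -/
lemma XGT (hD : Dn k n t ≠ 0) :
    (TT k n 0 t)⁻¹ * ((Lb n * Sh n + La n) * TT k n 0 t) =
      La n + (Sh n + Matrix.vecMulVec (Y k n 1 t) (e0 n)) * La n
      + (k : ℝ) • 1 - (t + n) • (Sh n + Matrix.vecMulVec (Y k n 1 t) (e0 n))
      - t • (Sh n * Sh n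
      + Matrix.vecMulVec (Y k n 1 t) (Matrix.vecMul (e0 n) (Sh n))
      + Matrix.vecMulVec (Y k n 2 t) (e0 n)) := by
  have h := TT_rec k n 0 t
  have h1 : La n * TT k n 1 t = Lb n * Sh n * TT k n 0 t + ((n : ℝ) - 1) • TT k n 1 t := by
    have := Lb_TT k n 0 t
    rw [zero_add] at this
    conv_lhs => rw [Lb_eq, add_mul, this, Matrix.smul_mul, one_mul]
  rw [zero_add, zero_add, h1] at h
  have h2 : (Lb n * Sh n + La n) * TT k n 0 t =
      TT k n 0 t * La n + TT k n 1 t * La n + (k : ℝ) • TT k n 0 t - (t + n) • TT k n 1 t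
       - t • TT k n 2 t := by
    rw [add_mul, ← sub_eq_zero, ← h]
    push_cast
    module
  rw [h2, ← XT1 hD, ← XT2 hD]
  simp only [mul_add, mul_sub, ← mul_assoc, Matrix.mul_smul, Matrix.nonsing_inv_mul _ (isU hD), one_mul]

lemma e0La : Matrix.vecMul (e0 n) (La n) = 0 := by
  funext j
  unfold La e0
  rw [Matrix.vecMul_diagonal]
  split_ifs with h <;> simp [h]

/-- zeroth Virasoro constraint -/
lemma V0 (hD : Dn k n t ≠ 0) :
    t * (w k n 1 0 t + w k n 0 1 t) + (t + n) * w k n 0 0 t - k * n = 0 := by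
  have h := congrArg Matrix.trace (XGT hD)
  rw [← mul_assoc, Matrix.trace_mul_comm, ← mul_assoc, Matrix.mul_nonsing_inv _ (isU hD), one_mul,
    add_mul, Matrix.vecMulVec_mul, e0La] at h
  simp only [Matrix.trace_add, Matrix.trace_sub, Matrix.trace_smul, trace_vmv, dot_vecMul_Sh, e0_dot,
    ex_Sh, Bd.trace ((Bd_Sh n).mul (Bd_Sh n)) (by norm_num), Bd.trace (Bd_Sh n) (by norm_num),
    Bd.trace ((Bd_Sh n).mul (Bd_La n)) (by norm_num),
    Bd.trace ((Bd_diagonal (fun i : Fin n => ((i : ℕ) : ℝ) - n + 1)).mul (Bd_Sh n)) (by norm_num),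
    Lb, Matrix.trace_one, Fintype.card_fin, smul_eq_mul, zero_dotProduct] at h
  rw [w_def 0 0 1 (by norm_num), w_def 0 1 1 (by norm_num), w_def 1 0 2 (by norm_num)] at h
  linear_combination h

/-- quadratic-bilinear relation -/
lemma Z (hD : Dn k n t ≠ 0) (a b : ℕ) :
    t * (w k n (a + 2) b t - w k n a (b + 2) t - w k n 0 b t * w k n a 1 t
      - w k n 1 b t * w k n a 0 t)
    + (t + a + 1 + n) * w k n (a + 1) b t - (t + n - b - 1) * w k n a (b + 1) t
    - (t + n) * w k n 0 b t * w k n a 0 t + (a + b + 1) * w k n a b t = 0 := by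
  have h := cc_rec k n (a + 1) t
  have h1 : (La n).mulVec (cc k n (a + 1 + 1) t) =
      (Lb n * Sh n).mulVec (cc k n (a + 1) t) + ((n : ℝ) - 1) • cc k n (a + 1 + 1) t := by
    rw [← Lb_cc, Lb_eq, Matrix.add_mulVec, Matrix.smul_mulVec, Matrix.one_mulVec]
  have h2 : (TT k n 0 t)⁻¹.mulVec ((Lb n * Sh n + La n).mulVec (cc k n (a + 1) t)) =
      ((TT k n 0 t)⁻¹ * ((Lb n * Sh n + La n) * TT k n 0 t)).mulVec (Y k n (a + 1) t) := by
    rw [← Matrix.mulVec_mulVec, ← Matrix.mulVec_mulVec, TY hD]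
  have h3 := congrArg (fun v => ex ((TT k n 0 t)⁻¹.mulVec v) b) h
  rw [XGT hD] at h2
  have h4 := congrArg (fun v => ex v b) h2
  rw [h1] at h3
  simp only [Matrix.add_mulVec, Matrix.sub_mulVec, Matrix.mulVec_add, ex_add, ex_sub, Matrix.smul_mulVec,
    Matrix.mulVec_smul, ex_smul, ex_vmv, ← Matrix.mulVec_mulVec, ex_Sh, ex_La, e0_dot, dot_vecMul_Sh,
    Matrix.one_mulVec, Matrix.mulVec_zero, ex_zero] at h3 h4
  simp only [← Y.eq_1] at h3
  rw [w_def (a+2) b _ (by push_cast; ring), w_def (a+1) b _ (by push_cast; ring), w_def a b _ rfl] at h3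
  rw [w_def a b _ rfl, w_def a 0 _ rfl, w_def a (b + 1) _ rfl, w_def a (0+1) _ rfl, w_def a (b+1+1) _ rfl,
    w_def 0 b 1 (by norm_num), w_def 1 b 2 (by norm_num)] at h4
  push_cast at h3 h4
  rw [show b + 1 + 1 = b + 2 by ring] at h4
  linear_combination h3 - h4

/-- first Virasoro constraint -/
lemma V1 (hD : Dn k n t ≠ 0) :
    t * (w k n 2 0 t + w k n 1 1 t + w k n 0 2 t) + (t + n + 1) * w k n 1 0 t
    + (t + n - 1) * w k n 0 1 t + (n - k) * w k n 0 0 t = 0 := by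
  have h := TT_rec k n 1 t
  have h1 : La n * TT k n 1 t = Lb n * Sh n * TT k n 0 t + ((n : ℝ) - 1) • TT k n 1 t := by
    have := Lb_TT k n 0 t
    rw [zero_add] at this
    conv_lhs => rw [Lb_eq, add_mul, this, Matrix.smul_mul, one_mul]
  have h2 : La n * TT k n 2 t = Lb n * Sh n * TT k n 1 t + ((n : ℝ) - 1) • TT k n 2 t := by
    have := Lb_TT k n 1 t
    rw [one_add_one_eq_two] at this
    conv_lhs => rw [Lb_eq, add_mul, this, Matrix.smul_mul, one_mul]
  rw [one_add_one_eq_two, show (1 : ℤ) + 2 = 3 by norm_num, h1, h2] at h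
  -- the left form of `T₁ X`
  set r : Fin n → ℝ := Matrix.vecMul (fun j : Fin n => aCoeff k (n - (j : ℕ) + 0) t) (TT k n 0 t)⁻¹ with hr
  have h3 : TT k n 1 t * (TT k n 0 t)⁻¹ = Sh n + Matrix.vecMulVec (eL n) r := by
    have := TT_succ' k n 0 t
    rw [zero_add] at this
    rw [this, add_mul, mul_assoc, Matrix.mul_nonsing_inv _ (isU hD), mul_one, Matrix.vecMulVec_mul]
  set X := (TT k n 0 t)⁻¹ with hX
  have tS := Bd.trace (Bd_Sh n) (by norm_num)
  have tSS := Bd.trace ((Bd_Sh n).mul (Bd_Sh n)) (by norm_num)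
  have q1 : r ⬝ᵥ eL n = w k n 0 0 t := by
    have e : (TT k n 1 t * X).trace = (X * TT k n 1 t).trace := Matrix.trace_mul_comm _ _
    rw [h3, XT1 hD] at e
    simp only [Matrix.trace_add, trace_vmv, tS, e0_dot, w_def 0 0 1 (by norm_num)] at e
    linarith
  have q2 : r ⬝ᵥ (Sh n).mulVec (eL n) = w k n 0 1 t := by
    have e : (TT k n 1 t * X * (TT k n 1 t * X)).trace = (X * TT k n 1 t * (X * TT k n 1 t)).trace := by
      rw [mul_assoc, Matrix.trace_mul_comm]
      simp only [mul_assoc]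
    rw [h3, XT1 hD] at e
    simp only [mul_add, add_mul, Matrix.trace_add, tSS, Matrix.mul_vecMulVec, Matrix.vecMulVec_mul,
      trace_vmv, dot_vecMul_Sh, e0_dot, ex_Sh] at e
    have v1 : r ⬝ᵥ (Matrix.vecMulVec (eL n) r).mulVec (eL n) = (r ⬝ᵥ eL n) ^ 2 := by
      rw [Matrix.vecMulVec_mulVec]
      simp [sq]
    simp only [v1, ex_vmv, e0_dot, w_def 0 0 1 (by norm_num), zero_add, w_def 0 1 1 (by norm_num), q1] at e
    linarith
  have q3 : r ⬝ᵥ (Lb n).mulVec ((Sh n).mulVec (eL n)) = - w k n 0 1 t := by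
    rw [← q2]
    have : (Lb n).mulVec ((Sh n).mulVec (eL n)) = - (Sh n).mulVec (eL n) := by
      funext i
      rw [Lb, Matrix.mulVec_diagonal, Pi.neg_apply, Sh_mulVec_apply]
      unfold ex eL
      split_ifs with h4 h5
      · have : ((i : ℕ) : ℝ) + 1 + 1 = n := by exact_mod_cast h5
        simp only [mul_one]; linarith
      · simp
      · simp
    rw [this, dotProduct_neg]
  have h5 := congrArg (fun M => (X * M).trace) h
  have z1 : (X * (Lb n * Sh n * TT k n 0 t)).trace = 0 := by
    rw [Matrix.trace_mul_comm, mul_assoc, Matrix.mul_nonsing_inv _ (isU hD), mul_one]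
    exact Bd.trace ((Bd_diagonal _).mul (Bd_Sh n)) (by norm_num)
  have z2 : (X * (Lb n * Sh n * TT k n 1 t)).trace = - w k n 0 1 t := by
    rw [Matrix.trace_mul_comm, mul_assoc, h3, mul_add, Matrix.mul_vecMulVec, Matrix.trace_add, trace_vmv,
      ← Matrix.mulVec_mulVec, q3]
    have : (Lb n * Sh n * Sh n).trace = 0 :=
      Bd.trace (((Bd_diagonal _).mul (Bd_Sh n)).mul (Bd_Sh n)) (by norm_num)
    rw [this, zero_add]
  have z3 : (X * (TT k n 1 t * La n)).trace = 0 := by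
    rw [← mul_assoc, XT1 hD, add_mul, Matrix.vecMulVec_mul, e0La, Matrix.trace_add, trace_vmv,
      Bd.trace ((Bd_Sh n).mul (Bd_La n)) (by norm_num)]
    simp
  have z4 : (X * (TT k n 2 t * La n)).trace = w k n 0 1 t := by
    rw [← mul_assoc, XT2 hD, add_mul, add_mul, Matrix.vecMulVec_mul, Matrix.vecMulVec_mul, e0La,
      Matrix.trace_add, Matrix.trace_add, trace_vmv, trace_vmv,
      Bd.trace (((Bd_Sh n).mul (Bd_Sh n)).mul (Bd_La n)) (by norm_num), ← Matrix.dotProduct_mulVec,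
      dot_vecMul_Sh, e0_dot, ex_Sh, ex_La, zero_add, w_def 0 1 1 (by norm_num)]
    simp
  have z5 : (X * TT k n 1 t).trace = w k n 0 0 t := by
    rw [XT1 hD, Matrix.trace_add, trace_vmv, tS, e0_dot, zero_add, w_def 0 0 1 (by norm_num)]
  have z6 : (X * TT k n 2 t).trace = w k n 0 1 t + w k n 1 0 t := by
    rw [XT2 hD, Matrix.trace_add, Matrix.trace_add, trace_vmv, trace_vmv, tSS, dot_vecMul_Sh, e0_dot, e0_dot,
      ex_Sh, zero_add, w_def 0 1 1 (by norm_num), w_def 1 0 2 (by norm_num)]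
  have z7 : (X * TT k n 3 t).trace = w k n 0 2 t + w k n 1 1 t + w k n 2 0 t := by
    rw [XT3 hD]
    simp only [Matrix.trace_add, trace_vmv, dot_vecMul_Sh, e0_dot, ex_Sh,
      Bd.trace (((Bd_Sh n).mul (Bd_Sh n)).mul (Bd_Sh n)) (by norm_num)]
    rw [zero_add, zero_add, w_def 0 (1+1) 1 (by norm_num), w_def 1 1 2 (by norm_num), w_def 2 0 3 (by norm_num)]
  simp only [mul_add, mul_sub, Matrix.trace_add, Matrix.trace_sub, Matrix.mul_smul, Matrix.trace_smul,
    smul_eq_mul, z1, z2, z3, z4, z5, z6, z7, mul_zero, Matrix.trace_zero] at h5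
  push_cast at h5
  linear_combination h5

end
end SPV
namespace SPV
section
variable {k n : ℕ} {t : ℝ}

lemma TT_hasDerivAt (m : ℤ) (t : ℝ) (i j : Fin n) :
    HasDerivAt (fun s => TT k n m s i j) (TT k n (m + 1) t i j) t := by
  unfold TT
  simp only [Matrix.of_apply]
  rw [← add_assoc]
  exact aCoeff_hasDerivAt k _ t

lemma Dn_analytic (k n : ℕ) (t : ℝ) : AnalyticAt ℝ (Dn k n) t := by
  have : Dn k n = fun s => (TT k n 0 s).det := by
    funext s; rw [det_TT]
  rw [this]
  apply det_analytic
  intro i j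
  exact aCoeff_analytic k _ t

lemma Y_cramer (m : ℤ) (s : ℝ) (i : Fin n) :
    Y k n m s i = (Dn k n s)⁻¹ * ((TT k n 0 s).updateCol i (cc k n m s)).det := by
  unfold Y
  rw [Matrix.inv_def, Matrix.smul_mulVec, Pi.smul_apply, ← Matrix.cramer_eq_adjugate_mulVec,
    Matrix.cramer_apply, det_TT, Ring.inverse_eq_inv', smul_eq_mul]

lemma Y_diff (hD : Dn k n t ≠ 0) (m : ℤ) (i : Fin n) : DifferentiableAt ℝ (fun s => Y k n m s i) t := by
  simp only [Y_cramer]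
  apply DifferentiableAt.mul
  · exact (Dn_analytic k n t).differentiableAt.inv hD
  · apply AnalyticAt.differentiableAt
    apply det_analytic
    intro a b
    by_cases h : b = i
    · subst h
      simp only [Matrix.updateCol_self]
      exact aCoeff_analytic k _ t
    · simp only [Matrix.updateCol_ne h]
      exact aCoeff_analytic k _ t

lemma Dn_open (hD : Dn k n t ≠ 0) : ∀ᶠ s in nhds t, Dn k n s ≠ 0 :=
  (Dn_analytic k n t).continuousAt.eventually_ne hD

lemma Y_deriv (hD : Dn k n t ≠ 0) (m : ℤ) :
    (fun i => deriv (fun s => Y k n m s i) t) =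
      Y k n (m + 1) t - ((TT k n 0 t)⁻¹ * TT k n 1 t).mulVec (Y k n m t) := by
  set Y' : Fin n → ℝ := fun i => deriv (fun s => Y k n m s i) t with hY'
  have h1 : (TT k n 1 t).mulVec (Y k n m t) + (TT k n 0 t).mulVec Y' = cc k n (m + 1) t := by
    funext i
    have a1 : HasDerivAt (fun s => (TT k n 0 s).mulVec (Y k n m s) i)
        (∑ j, (TT k n (0 + 1) t i j * Y k n m t j + TT k n 0 t i j * Y' j)) t := by
      unfold Matrix.mulVec dotProduct
      apply HasDerivAt.fun_sum
      intro j _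
      exact (TT_hasDerivAt 0 t i j).mul (Y_diff hD m j).hasDerivAt
    have a2 : HasDerivAt (fun s => (TT k n 0 s).mulVec (Y k n m s) i) (cc k n (m + 1) t i) t := by
      have : HasDerivAt (fun s => cc k n m s i) (cc k n (m + 1) t i) t := by
        unfold cc
        rw [← add_assoc]
        exact aCoeff_hasDerivAt k _ t
      apply this.congr_of_eventuallyEq
      filter_upwards [Dn_open hD] with s hs
      rw [TY hs]
    have := a1.unique a2
    rw [← this, Finset.sum_add_distrib]
    simp only [zero_add]
    rfl
  rw [← Matrix.mulVec_mulVec]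
  unfold Y at h1 ⊢
  rw [← h1, Matrix.mulVec_add, Matrix.mulVec_mulVec Y', Matrix.nonsing_inv_mul _ (isU hD),
    Matrix.one_mulVec]
  abel

lemma w_hasDerivAt (hD : Dn k n t ≠ 0) (a b : ℕ) :
    HasDerivAt (w k n a b) (w k n (a + 1) b t - w k n a (b + 1) t - w k n 0 b t * w k n a 0 t) t := by
  have h := congrArg (fun v => ex v b) (Y_deriv hD (a + 1))
  simp only [XT1 hD, ex_sub, Matrix.add_mulVec, ex_add, ex_Sh, ex_vmv, e0_dot] at h
  rw [w_def (a + 1) b _ (by push_cast; ring), w_def a (b + 1) _ rfl, w_def a 0 _ rfl,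
    w_def 0 b 1 (by norm_num)] at h
  rw [sub_sub, ← h]
  unfold w ex
  split_ifs with hb
  · exact (Y_diff hD _ _).hasDerivAt
  · exact hasDerivAt_const _ _

lemma Dn_hasDerivAt (hD : Dn k n t ≠ 0) : HasDerivAt (Dn k n) (Dn k n t * w k n 0 0 t) t := by
  have e : Dn k n = fun s => (TT k n 0 s).det := by
    funext s; rw [det_TT]
  have h := det_hasDerivAt (fun s => TT k n 0 s) (TT k n (0 + 1) t) t (fun i j => TT_hasDerivAt 0 t i j)
  rw [← e, zero_add] at h
  refine h.congr_deriv ?_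
  have z5 : ((TT k n 0 t)⁻¹ * TT k n 1 t).trace = w k n 0 0 t := by
    rw [XT1 hD, Matrix.trace_add, trace_vmv, Bd.trace (Bd_Sh n) (by norm_num), e0_dot, zero_add,
      w_def 0 0 1 (by norm_num)]
  rw [← z5, Matrix.inv_def, det_TT, Ring.inverse_eq_inv', Matrix.smul_mul, Matrix.trace_smul, smul_eq_mul,
    mul_inv_cancel_left₀ hD]
  unfold Matrix.trace
  apply Finset.sum_congr rfl
  intro i _
  rw [← Matrix.cramer_apply, Matrix.cramer_eq_adjugate_mulVec]
  rfl

lemma Dn_zero (k n : ℕ) : Dn k n 0 ≠ 0 := by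
  have : Dn k n 0 = 1 := by
    unfold Dn
    rw [Matrix.det_of_isLowerTriangular]
    · apply Finset.prod_eq_one
      intro i _
      simp [aCoeff_zero, bb]
    · intro i j hij
      simp only [Matrix.of_apply, aCoeff_zero, bb]
      rw [if_neg]
      have : (i : ℕ) < (j : ℕ) := hij
      omega
  rw [this]; norm_num

/-- the logarithmic derivatives in hook coordinates -/
noncomputable def q1 (k n : ℕ) (t : ℝ) : ℝ := w k n 1 0 t - w k n 0 1 t - w k n 0 0 t * w k n 0 0 t
noncomputable def q2 (k n : ℕ) (t : ℝ) : ℝ :=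
  (w k n 2 0 t - w k n 1 1 t - w k n 0 0 t * w k n 1 0 t)
   - (w k n 1 1 t - w k n 0 2 t - w k n 0 1 t * w k n 0 0 t)
   - (q1 k n t * w k n 0 0 t + w k n 0 0 t * q1 k n t)
noncomputable def q3 (k n : ℕ) (t : ℝ) : ℝ :=
  ((w k n 3 0 t - w k n 2 1 t - w k n 0 0 t * w k n 2 0 t)
    - (w k n 2 1 t - w k n 1 2 t - w k n 0 1 t * w k n 1 0 t)
    - (q1 k n t * w k n 1 0 t + w k n 0 0 t * (w k n 2 0 t - w k n 1 1 t - w k n 0 0 t * w k n 1 0 t)))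
  - ((w k n 2 1 t - w k n 1 2 t - w k n 0 1 t * w k n 1 0 t)
    - (w k n 1 2 t - w k n 0 3 t - w k n 0 2 t * w k n 0 0 t)
    - ((w k n 1 1 t - w k n 0 2 t - w k n 0 1 t * w k n 0 0 t) * w k n 0 0 t + w k n 0 1 t * q1 k n t))
  - ((q2 k n t * w k n 0 0 t + q1 k n t * q1 k n t) + (q1 k n t * q1 k n t + w k n 0 0 t * q2 k n t))

lemma d0 (hD : Dn k n t ≠ 0) : HasDerivAt (w k n 0 0) (q1 k n t) t := w_hasDerivAt hD 0 0
lemma d1 (hD : Dn k n t ≠ 0) : HasDerivAt (q1 k n) (q2 k n t) t :=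
  ((w_hasDerivAt hD 1 0).sub (w_hasDerivAt hD 0 1)).sub ((d0 hD).mul (d0 hD))
lemma d2 (hD : Dn k n t ≠ 0) : HasDerivAt (q2 k n) (q3 k n t) t :=
  ((((w_hasDerivAt hD 2 0).sub (w_hasDerivAt hD 1 1)).sub ((d0 hD).mul (w_hasDerivAt hD 1 0))).sub
   (((w_hasDerivAt hD 1 1).sub (w_hasDerivAt hD 0 2)).sub ((w_hasDerivAt hD 0 1).mul (d0 hD)))).sub
   (((d1 hD).mul (d0 hD)).add ((d0 hD).mul (d1 hD)))

noncomputable def s0 (k n : ℕ) (t : ℝ) : ℝ := k * t - t * w k n 0 0 t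
noncomputable def s1 (k n : ℕ) (t : ℝ) : ℝ := k - w k n 0 0 t - t * q1 k n t
noncomputable def s2 (k n : ℕ) (t : ℝ) : ℝ := - 2 * q1 k n t - t * q2 k n t
noncomputable def s3 (k n : ℕ) (t : ℝ) : ℝ := - 3 * q2 k n t - t * q3 k n t

lemma ds0 (hD : Dn k n t ≠ 0) : HasDerivAt (s0 k n) (s1 k n t) t := by
  refine (((hasDerivAt_id t).const_mul (k : ℝ)).sub ((hasDerivAt_id t).mul (d0 hD))).congr_deriv ?_
  simp only [s1, id]; ring
lemma ds1 (hD : Dn k n t ≠ 0) : HasDerivAt (s1 k n) (s2 k n t) t := by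
  refine (((hasDerivAt_const t (k : ℝ)).sub (d0 hD)).sub ((hasDerivAt_id t).mul (d1 hD))).congr_deriv ?_
  simp only [s2, id]; ring
lemma ds2 (hD : Dn k n t ≠ 0) : HasDerivAt (s2 k n) (s3 k n t) t := by
  refine (((d1 hD).const_mul (-2 : ℝ)).sub ((hasDerivAt_id t).mul (d2 hD))).congr_deriv ?_
  simp only [s3, id]; ring

lemma sigma_eq (hD : Dn k n t ≠ 0) : sigmaFn k n t = s0 k n t := by
  unfold sigmaFn s0
  rw [(Dn_hasDerivAt hD).deriv]
  field_simp

lemma dsigma (hD : Dn k n t ≠ 0) : HasDerivAt (sigmaFn k n) (s1 k n t) t := by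
  apply (ds0 hD).congr_of_eventuallyEq
  filter_upwards [Dn_open hD] with s hs
  exact sigma_eq hs

lemma ddsigma (hD : Dn k n t ≠ 0) : HasDerivAt (deriv (sigmaFn k n)) (s2 k n t) t := by
  apply (ds1 hD).congr_of_eventuallyEq
  filter_upwards [Dn_open hD] with s hs
  exact (dsigma hs).deriv

lemma V1d (hD : Dn k n t ≠ 0) :
    (w k n 2 0 t + w k n 1 1 t + w k n 0 2 t)
    + t * ((w k n 3 0 t - w k n 2 1 t - w k n 0 0 t * w k n 2 0 t)
      + (w k n 2 1 t - w k n 1 2 t - w k n 0 1 t * w k n 1 0 t)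
      + (w k n 1 2 t - w k n 0 3 t - w k n 0 2 t * w k n 0 0 t))
    + w k n 1 0 t + (t + n + 1) * (w k n 2 0 t - w k n 1 1 t - w k n 0 0 t * w k n 1 0 t)
    + w k n 0 1 t + (t + n - 1) * (w k n 1 1 t - w k n 0 2 t - w k n 0 1 t * w k n 0 0 t)
    + (n - k) * q1 k n t = 0 := by
  have h := ((((hasDerivAt_id t).mul (((w_hasDerivAt hD 2 0).add (w_hasDerivAt hD 1 1)).add
      (w_hasDerivAt hD 0 2))).add
    ((((hasDerivAt_id t).add_const (n : ℝ)).add_const (1 : ℝ)).mul (w_hasDerivAt hD 1 0))).add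
    ((((hasDerivAt_id t).add_const (n : ℝ)).sub_const (1 : ℝ)).mul (w_hasDerivAt hD 0 1))).add
    ((d0 hD).const_mul ((n : ℝ) - k))
  have h' := h.congr_of_eventuallyEq (f₁ := fun _ => (0 : ℝ)) (by
    filter_upwards [Dn_open hD] with s hs
    exact (V1 hs).symm)
  have := h'.unique (hasDerivAt_const t (0 : ℝ))
  simp only [id, Pi.add_apply] at this
  linear_combination this

lemma third (hD : Dn k n t ≠ 0) :
    t * (s2 k n t + t * s3 k n t)
      - (s0 k n t - t * s1 k n t - 2 * s1 k n t ^ 2 + (2 * k + n) * s1 k n t)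
        * (- 4 * s1 k n t - t + 2 * k + n)
      + 2 * (4 * s1 k n t ^ 3 - 3 * (2 * k + n) * s1 k n t ^ 2 + 2 * k * (k + n) * s1 k n t) = 0 := by
  have h0 := V0 hD
  have h1 := V1 hD
  have h1d := V1d hD
  have z00 := Z hD 0 0
  have z10 := Z hD 1 0
  have z01 := Z hD 0 1
  simp only [zero_add, Nat.cast_zero, Nat.cast_one, Nat.reduceAdd] at z00 z10 z01
  unfold s0 s1 s2 s3 q3 q2 q1 at *
  linear_combination (n - t) * h0 - 2 * t * h1 + (t * n + t ^ 2) * z00 - 4 * t ^ 2 * h1d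
    + 3 * t ^ 2 * (z10 + z01)

/-- the first integral -/
noncomputable def EE (k n : ℕ) (t : ℝ) : ℝ :=
  (t * s2 k n t) ^ 2 - (s0 k n t - t * s1 k n t - 2 * s1 k n t ^ 2 + (2 * k + n) * s1 k n t) ^ 2
    + 4 * s1 k n t ^ 2 * (s1 k n t - k) * (s1 k n t - k - n)

lemma dEE (hD : Dn k n t ≠ 0) : HasDerivAt (EE k n) 0 t := by
  have a0 := ds0 hD
  have a1 := ds1 hD
  have a2 := ds2 hD
  have h := ((((hasDerivAt_id t).mul a2).pow 2).sub
    ((((a0.sub ((hasDerivAt_id t).mul a1)).sub ((a1.pow 2).const_mul (2 : ℝ))).add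
      (a1.const_mul (2 * (k : ℝ) + n))).pow 2)).add
    ((((a1.pow 2).const_mul (4 : ℝ)).mul (a1.sub_const (k : ℝ))).mul
      ((a1.sub_const (k : ℝ)).sub_const (n : ℝ)))
  refine h.congr_deriv ?_
  simp only [id, Pi.mul_apply, Pi.sub_apply, Pi.add_apply, Pi.pow_apply]
  push_cast
  linear_combination 2 * s2 k n t * third hD

lemma EE_zero (hn : 1 ≤ n) : EE k n 0 = 0 := by
  have h0 := V0 (Dn_zero k n)
  have hn' : (n : ℝ) ≠ 0 := by positivity
  have : w k n 0 0 0 = k := by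
    apply mul_left_cancel₀ hn'
    linear_combination h0
  unfold EE s0 s1
  rw [this]; simp

lemma EE_near (hn : 1 ≤ n) : ∀ᶠ s in nhds (0 : ℝ), EE k n s = 0 := by
  obtain ⟨r, hr, h⟩ := Metric.eventually_nhds_iff_ball.mp (Dn_open (Dn_zero k n))
  filter_upwards [Metric.ball_mem_nhds (0 : ℝ) hr] with s hs
  rw [← EE_zero (k := k) hn]
  apply Metric.isOpen_ball.is_const_of_deriv_eq_zero (convex_ball (0 : ℝ) r).isPreconnected _ _ hs
    (Metric.mem_ball_self hr)
  · intro x hx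
    exact (dEE (h x hx)).differentiableAt.differentiableWithinAt
  · intro x hx
    exact (dEE (h x hx)).deriv

end

/-- numerator of the first integral, as a differential polynomial -/
noncomputable def PP (k n : ℕ) (t : ℝ) (D D1 D2 D3 : ℝ) : ℝ :=
  let N0 := k * t * D - t * D1
  let N1 := k * D ^ 2 - D1 * D - t * (D2 * D - D1 ^ 2)
  let N2 := - 2 * (D2 * D - D1 ^ 2) * D - t * (D3 * D ^ 2 - 3 * D1 * D2 * D + 2 * D1 ^ 3)
  (t * N2 * D) ^ 2 - (N0 * D ^ 3 - t * N1 * D ^ 2 - 2 * N1 ^ 2 + (2 * k + n) * N1 * D ^ 2) ^ 2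
    + 4 * N1 ^ 2 * (N1 - k * D ^ 2) * (N1 - k * D ^ 2 - n * D ^ 2)

lemma PP_eq {k n : ℕ} {t : ℝ} (hD : Dn k n t ≠ 0) :
    PP k n t (Dn k n t) (deriv (Dn k n) t) (deriv (deriv (Dn k n)) t)
      (deriv (deriv (deriv (Dn k n))) t) = Dn k n t ^ 8 * EE k n t := by
  have e1 : ∀ s, Dn k n s ≠ 0 → deriv (Dn k n) s = Dn k n s * w k n 0 0 s := fun s hs =>
    (Dn_hasDerivAt hs).deriv
  have e2 : ∀ s, Dn k n s ≠ 0 → deriv (deriv (Dn k n)) s =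
      Dn k n s * w k n 0 0 s * w k n 0 0 s + Dn k n s * q1 k n s := fun s hs => by
    have h := ((Dn_hasDerivAt hs).mul (d0 hs)).congr_of_eventuallyEq (f₁ := deriv (Dn k n)) (by
      filter_upwards [Dn_open hs] with x hx
      exact e1 x hx)
    exact h.deriv
  have e3 : deriv (deriv (deriv (Dn k n))) t =
      ((Dn k n t * w k n 0 0 t * w k n 0 0 t + Dn k n t * q1 k n t) * w k n 0 0 t
        + (Dn k n t * w k n 0 0 t) * q1 k n t)
      + (Dn k n t * w k n 0 0 t * q1 k n t + Dn k n t * q2 k n t) := by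
    have h := ((((Dn_hasDerivAt hD).mul (d0 hD)).mul (d0 hD)).add
      ((Dn_hasDerivAt hD).mul (d1 hD))).congr_of_eventuallyEq (f₁ := deriv (deriv (Dn k n))) (by
      filter_upwards [Dn_open hD] with x hx
      exact e2 x hx)
    exact h.deriv
  rw [e3, e2 t hD, e1 t hD]
  unfold PP EE s0 s1 s2
  ring

lemma PP_zero {k n : ℕ} (hn : 1 ≤ n) (t : ℝ) :
    PP k n t (Dn k n t) (deriv (Dn k n) t) (deriv (deriv (Dn k n)) t)
      (deriv (deriv (deriv (Dn k n))) t) = 0 := by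
  have a0 : AnalyticOnNhd ℝ (Dn k n) Set.univ := fun x _ => Dn_analytic k n x
  have a1 := a0.deriv
  have a2 := a1.deriv
  have a3 := a2.deriv
  have hA : AnalyticOnNhd ℝ (fun t => PP k n t (Dn k n t) (deriv (Dn k n) t) (deriv (deriv (Dn k n)) t)
      (deriv (deriv (deriv (Dn k n))) t)) Set.univ := by
    intro x hx
    have b0 := a0 x hx
    have b1 := a1 x hx
    have b2 := a2 x hx
    have b3 := a3 x hx
    have bi : AnalyticAt ℝ (fun s : ℝ => s) x := analyticAt_id
    simp only [PP]
    fun_prop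
  have hz : AnalyticOnNhd ℝ (fun _ : ℝ => (0 : ℝ)) Set.univ := fun x _ => analyticAt_const
  have := hA.eqOn_of_preconnected_of_eventuallyEq hz isPreconnected_univ (Set.mem_univ 0) (by
    filter_upwards [EE_near (k := k) hn, Dn_open (Dn_zero k n)] with s hs hs'
    rw [PP_eq hs', hs, mul_zero])
  exact this (Set.mem_univ t)

end SPV

/-- Theorem 2 (σ-form of Painlevé V): wherever `D_n(t) ≠ 0`, the logarithmic
derivative `σ(t) = k t - t D_n'(t)/D_n(t)` satisfies the Jimbo–Miwa σ-form of the
Painlevé V equation with parameters `ν₀ = ν₁ = 0`, `ν₂ = k`, `ν₃ = k + n`. -/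
theorem sigma_painleveV (k n : ℕ) (hk : 1 ≤ k) (hn : 1 ≤ n) (t : ℝ)
    (ht : Dn k n t ≠ 0) :
    (t * deriv (deriv (sigmaFn k n)) t) ^ 2 =
      (sigmaFn k n t - t * deriv (sigmaFn k n) t - 2 * (deriv (sigmaFn k n) t) ^ 2 +
          (2 * (k : ℝ) + n) * deriv (sigmaFn k n) t) ^ 2 -
        4 * (deriv (sigmaFn k n) t) ^ 2 * (deriv (sigmaFn k n) t - k) *
          (deriv (sigmaFn k n) t - k - n) := by
  have h : SPV.EE k n t = 0 := by
    have h1 := SPV.PP_eq ht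
    rw [SPV.PP_zero hn] at h1
    exact (mul_eq_zero.mp h1.symm).resolve_left (pow_ne_zero 8 ht)
  rw [(SPV.ddsigma ht).deriv, (SPV.dsigma ht).deriv, SPV.sigma_eq ht]
  unfold SPV.EE at h
  linear_combination h
end

section
/- Let k ≥ 1, n ≥ 1 be integers and let D_n(t) be the n×n Toeplitz determinant with symbol e^{t/z}(1+z)^k. Define w(t) := ( n·t + t·D_n′(t)/D_n(t) ) / (k+n) on the open set of real t where D_n(t) ≠ 0. Then for every real t with D_n(t) ≠ 0, w satisfies the second-order, second-degree equation t²·(w″)² = −4(k+n)·t·(w′)³ + ( 4(k+n)·w + t² + 2(2k+3n)·t + n² )·(w′)² − ( 2(t+2k+3n)·w + 2n·t + 2n² )·w′ + (w+n)². -/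
open scoped BigOperators

/-- `w(t) = (n t + t D_n'(t)/D_n(t)) / (k+n)`. -/
noncomputable def wFn (k n : ℕ) (t : ℝ) : ℝ :=
  ((n : ℝ) * t + t * deriv (Dn k n) t / Dn k n t) / ((k : ℝ) + n)

section twproof
open Matrix
set_option linter.all false

section alg
variable {ι : Type*} [Fintype ι] [DecidableEq ι]

lemma tw_trace_zero (L M : Matrix ι ι ℝ) (c : ℝ) (hc : c ≠ 0)
    (hM : L * M - M * L = - c • M) : M.trace = 0 := by
  have := congrArg Matrix.trace hM
  rw [Matrix.trace_sub, Matrix.trace_mul_comm L M, sub_self, Matrix.trace_smul] at this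
  simp only [smul_eq_mul] at this
  have h2 : -c ≠ 0 := neg_ne_zero.mpr hc
  rcases mul_eq_zero.mp this.symm with h3 | h3
  · exact absurd h3 h2
  · exact h3

lemma tw_traces (L U : Matrix ι ι ℝ) (h : L * U - U * L = -U) :
    U.trace = 0 ∧ (U * U).trace = 0 ∧ (U * U * U).trace = 0 ∧ (U * U * U * U).trace = 0 ∧
    (L * U).trace = 0 ∧ (L * (U * U)).trace = 0 := by
  have hLU : L * U = U * L - U := by rw [sub_eq_iff_eq_add] at h; rw [h]; abel
  have h2 : L * (U * U) = U * U * L - 2 • (U * U) := by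
    rw [← mul_assoc, hLU, sub_mul, mul_assoc, hLU, mul_sub, ← mul_assoc]; abel
  have h3 : L * (U * U * U) = U * U * U * L - 3 • (U * U * U) := by
    rw [← mul_assoc, h2, sub_mul, mul_assoc, hLU, mul_sub, ← mul_assoc, smul_mul_assoc]; abel
  have h4 : L * (U * U * U * U) = U * U * U * U * L - 4 • (U * U * U * U) := by
    rw [← mul_assoc, h3, sub_mul, mul_assoc, hLU, mul_sub, ← mul_assoc, smul_mul_assoc]; abel
  refine ⟨tw_trace_zero L _ 1 (by norm_num) ?_, tw_trace_zero L _ 2 (by norm_num) ?_,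
    tw_trace_zero L _ 3 (by norm_num) ?_, tw_trace_zero L _ 4 (by norm_num) ?_,
    tw_trace_zero L _ 1 (by norm_num) ?_, tw_trace_zero L _ 2 (by norm_num) ?_⟩
  · rw [h]; module
  · rw [h2]; module
  · rw [h3]; module
  · rw [h4]; module
  · rw [mul_assoc, ← mul_sub, h]; simp
  · rw [mul_assoc, ← mul_sub, show L * (U * U) - U * U * L = (-2 : ℝ) • (U * U) by
      rw [h2]; module, mul_smul_comm]

lemma tw_virasoro (L U A V G1 G2 G3 G4 : Matrix ι ι ℝ) (e u1 u2 u3 f b1 b2 b3 : ι → ℝ)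
    (t k n : ℝ)
    (hn : Matrix.trace (1 : Matrix ι ι ℝ) = n)
    (hLU : L * U - U * L = -U) (heL : e ᵥ* L = 0)
    (hAV : A * V - V * A = -V) (hAf : A *ᵥ f = (n - 1) • f)
    (hAL : A.trace = L.trace)
    (g1 : G1 = U + vecMulVec u1 e) (g2 : G2 = G1 * U + vecMulVec u2 e)
    (g3 : G3 = G2 * U + vecMulVec u3 e)
    (v1 : G1 = V + vecMulVec f b1) (v2 : G2 = V * G1 + vecMulVec f b2)
    (v3 : G3 = V * G2 + vecMulVec f b3)
    (r1 : t • G2 + (t + 1) • G1 + A * (G1 + 1) = k • (1 : Matrix ι ι ℝ) + (G1 + 1) * L)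
    (r2 : t • G3 + (t + 2) • G2 + A * (G2 + G1) = (k - 1) • G1 + (G2 + G1) * L)
    (r3 : t • G4 + (t + 3) • G3 + A * (G3 + G2) = (k - 2) • G2 + (G3 + G2) * L) :
    t * G2.trace + (t + n) * G1.trace = n * k ∧
    t * G3.trace + (t + n) * G2.trace + (G2.trace - (G1 * G1).trace + G1.trace ^ 2)
      + (n - k) * G1.trace = 0 ∧
    t * (G4.trace - (G2 * G2).trace) + 2 * G3.trace + (t + n) * (G3.trace - (G1 * G2).trace)
      + 2 * G2.trace = 0 := by
  obtain ⟨tU1, tU2, tU3, tU4, tLU, tLUU⟩ := tw_traces L U hLU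
  obtain ⟨tV1, tV2, tV3, tV4, tAV, tAVV⟩ := tw_traces A V hAV
  have hUL : U * L = L * U + U := by rw [sub_eq_iff_eq_add] at hLU; rw [hLU]; abel
  have heUL : (e ᵥ* U) ᵥ* L = e ᵥ* U := by
    rw [vecMul_vecMul, hUL, vecMul_add, ← vecMul_vecMul, heL]; simp
  have hAV' : A * V = V * A - V := by rw [sub_eq_iff_eq_add] at hAV; rw [hAV]; abel
  have hAVf : A *ᵥ (V *ᵥ f) = (n - 2) • (V *ᵥ f) := by
    rw [mulVec_mulVec, hAV', sub_mulVec, ← mulVec_mulVec, hAf, mulVec_smul]; module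
  -- traces on the column side
  have c1 : (G1 * L).trace = 0 := by
    rw [g1, add_mul, trace_add, vecMulVec_mul, heL, trace_mul_comm, tLU]; simp
  have c2 : (G2 * L).trace = (e ᵥ* U) ⬝ᵥ u1 := by
    rw [g2, g1, add_mul, add_mul, add_mul, vecMulVec_mul, vecMulVec_mul, vecMulVec_mul, heL, heUL,
      trace_add, trace_add, trace_mul_comm (U * U), tLUU, trace_vecMulVec]
    simp [dotProduct_comm]
  have c11 : (G1 * G1).trace = 2 * ((e ᵥ* U) ⬝ᵥ u1) + (e ⬝ᵥ u1) ^ 2 := by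
    rw [g1]
    simp only [add_mul, mul_add, trace_add, vecMulVec_mul, mul_vecMulVec, trace_vecMulVec, tU2,
      vecMulVec_mul_vecMulVec, dotProduct_smul, smul_dotProduct, vecMul_vecMulVec,
      dotProduct_comm, dotProduct_mulVec, mulVec_smul, smul_eq_mul]
    ring
  have ct1 : G1.trace = e ⬝ᵥ u1 := by
    rw [g1, trace_add, tU1, trace_vecMulVec, dotProduct_comm]; simp
  -- traces on the row side
  have d1 : (A * G1).trace = (n - 1) * G1.trace := by
    rw [v1, mul_add, mul_vecMulVec, hAf, trace_add, tAV, trace_add, tV1, smul_vecMulVec,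
      trace_smul]; simp
  have d2 : (A * G2).trace = (n - 1) * G2.trace - b1 ⬝ᵥ (V *ᵥ f) := by
    have : G2 = V * V + vecMulVec (V *ᵥ f) b1 + vecMulVec f b2 := by
      rw [v2, v1, mul_add, mul_vecMulVec]
    rw [this]
    simp only [mul_add, mul_vecMulVec, hAf, hAVf, trace_add, tAVV, tV2, smul_vecMulVec, trace_smul,
      trace_vecMulVec, smul_eq_mul]
    rw [dotProduct_comm b1]; ring
  have d11 : (G1 * G1).trace = 2 * (b1 ⬝ᵥ (V *ᵥ f)) + G1.trace ^ 2 := by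
    have ht : G1.trace = b1 ⬝ᵥ f := by
      rw [v1, trace_add, tV1, trace_vecMulVec, dotProduct_comm]; simp
    rw [ht, v1]
    simp only [add_mul, mul_add, trace_add, vecMulVec_mul, mul_vecMulVec, trace_vecMulVec, tV2,
      vecMulVec_mul_vecMulVec, dotProduct_smul, smul_dotProduct, vecMul_vecMulVec,
      dotProduct_mulVec, mulVec_smul, smul_eq_mul, vecMulVec_mulVec, op_smul_eq_smul]
    rw [dotProduct_comm f b1, dotProduct_comm f (b1 ᵥ* V)]
    try rw [dotProduct_comm (V *ᵥ f) b1, dotProduct_mulVec]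
    ring
  refine ⟨?_, ?_, ?_⟩
  · have := congrArg trace r1
    simp only [trace_add, trace_smul, mul_add, add_mul, mul_one, one_mul, hn, smul_eq_mul, d1, c1,
      hAL] at this
    linear_combination this
  · have := congrArg trace r2
    simp only [trace_add, trace_smul, mul_add, add_mul, mul_one, one_mul, hn, smul_eq_mul, d1, c1,
      d2, c2] at this
    rw [ct1] at this d11 ⊢
    linear_combination this - c11 / 2 - d11 / 2
  · have h3 : G3 = G2 * G1 + vecMulVec (u3 - G2 *ᵥ u1) e := by
      rw [sub_vecMulVec, g3]; rw [show G2 * G1 = G2 * (U + vecMulVec u1 e) by rw [← g1], mul_add, mul_vecMulVec]; abel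
    have e3 : ((G3 - G2 * G1) * L).trace = 0 := by
      rw [h3, add_sub_cancel_left, vecMulVec_mul, heL]; simp
    have h3' : G3 = G1 * G2 + vecMulVec f (b3 - b1 ᵥ* G2) := by
      rw [vecMulVec_sub, v3]; rw [show G1 * G2 = (V + vecMulVec f b1) * G2 by rw [← v1], add_mul, vecMulVec_mul]; abel
    have e3' : (A * (G3 - G1 * G2)).trace = (n - 1) * (G3.trace - (G1 * G2).trace) := by
      rw [← trace_sub, h3', add_sub_cancel_left, mul_vecMulVec, hAf, smul_vecMulVec, trace_smul]
      rfl
    have q1 := congrArg (fun X => (X * G2).trace) r1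
    have q3 := congrArg trace r3
    have q4 : (L * G2 * G1).trace = (G1 * L * G2).trace := by
      rw [trace_mul_comm, mul_assoc]
    have q5 : (G2 * G1 * L).trace = (G1 * L * G2).trace := by
      rw [mul_assoc, trace_mul_comm]
    have q6 : (L * G2).trace = (G2 * L).trace := trace_mul_comm _ _
    simp only [trace_add, trace_smul, trace_sub, mul_sub, sub_mul, mul_add, add_mul, mul_one,
      one_mul, smul_eq_mul, smul_mul_assoc, ← mul_assoc] at q1 q3 e3 e3'
    linear_combination q3 - q1 - e3' + e3 + q5 - q6

lemma tw_col_traces (L U G1 G2 G3 G4 : Matrix ι ι ℝ) (e0 e1 e2 e3 u1 u2 u3 u4 : ι → ℝ)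
    (hLU : L * U - U * L = -U)
    (he1 : e1 = e0 ᵥ* U) (he2 : e2 = e1 ᵥ* U) (he3 : e3 = e2 ᵥ* U)
    (g1 : G1 = U + vecMulVec u1 e0) (g2 : G2 = G1 * U + vecMulVec u2 e0)
    (g3 : G3 = G2 * U + vecMulVec u3 e0) (g4 : G4 = G3 * U + vecMulVec u4 e0) :
    G1.trace = e0 ⬝ᵥ u1 ∧ G2.trace = e1 ⬝ᵥ u1 + e0 ⬝ᵥ u2 ∧
    G3.trace = e2 ⬝ᵥ u1 + e1 ⬝ᵥ u2 + e0 ⬝ᵥ u3 ∧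
    G4.trace = e3 ⬝ᵥ u1 + e2 ⬝ᵥ u2 + e1 ⬝ᵥ u3 + e0 ⬝ᵥ u4 ∧
    (G1 * G1).trace = 2 * (e1 ⬝ᵥ u1) + (e0 ⬝ᵥ u1) ^ 2 ∧
    (G1 * G2).trace = 2 * (e2 ⬝ᵥ u1) + e1 ⬝ᵥ u2 + (e0 ⬝ᵥ u1) * (e1 ⬝ᵥ u1)
      + (e0 ⬝ᵥ u2) * (e0 ⬝ᵥ u1) ∧
    (G2 * G2).trace = 2 * (e3 ⬝ᵥ u1 + e2 ⬝ᵥ u2) + (e1 ⬝ᵥ u1) ^ 2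
      + 2 * (e1 ⬝ᵥ u2) * (e0 ⬝ᵥ u1) + (e0 ⬝ᵥ u2) ^ 2 := by
  obtain ⟨tU1, tU2, tU3, tU4, tLU, tLUU⟩ := tw_traces L U hLU
  have h2 : G2 = U * U + vecMulVec u1 e1 + vecMulVec u2 e0 := by
    rw [g2, g1, add_mul, vecMulVec_mul, ← he1]
  have h3 : G3 = U * U * U + vecMulVec u1 e2 + vecMulVec u2 e1 + vecMulVec u3 e0 := by
    rw [g3, h2, add_mul, add_mul, vecMulVec_mul, vecMulVec_mul, ← he1, ← he2]
  have h4 : G4 = U * U * U * U + vecMulVec u1 e3 + vecMulVec u2 e2 + vecMulVec u3 e1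
      + vecMulVec u4 e0 := by
    rw [g4, h3, add_mul, add_mul, add_mul, vecMulVec_mul, vecMulVec_mul, vecMulVec_mul, ← he1,
      ← he2, ← he3]
  have key : ∀ (x y z v : ι → ℝ), (vecMulVec x y * vecMulVec z v).trace
      = (y ⬝ᵥ z) * (v ⬝ᵥ x) := by
    intro x y z v
    rw [vecMulVec_mul, trace_vecMulVec, vecMul_vecMulVec, dotProduct_smul, dotProduct_comm x v]
    simp
  have key2 : ∀ (M : Matrix ι ι ℝ) (x y : ι → ℝ), (M * vecMulVec x y).trace = (y ᵥ* M) ⬝ᵥ x := by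
    intro M x y
    rw [mul_vecMulVec, trace_vecMulVec, dotProduct_comm, dotProduct_mulVec]
  have key3 : ∀ (M : Matrix ι ι ℝ) (x y : ι → ℝ), (vecMulVec x y * M).trace = (y ᵥ* M) ⬝ᵥ x := by
    intro M x y
    rw [trace_mul_comm, key2]
  have key1 : ∀ (x y : ι → ℝ), (vecMulVec x y).trace = y ⬝ᵥ x := by
    intro x y
    rw [trace_vecMulVec, dotProduct_comm]
  have tU3' : (U * (U * U)).trace = 0 := by rw [← mul_assoc, tU3]
  have tU4' : (U * U * (U * U)).trace = 0 := by rw [← mul_assoc, tU4]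
  have w0 : e0 ᵥ* (U * U) = e2 := by rw [← vecMul_vecMul, ← he1, ← he2]
  have w1 : e1 ᵥ* (U * U) = e3 := by rw [← vecMul_vecMul, ← he2, ← he3]
  refine ⟨?_, ?_, ?_, ?_, ?_, ?_, ?_⟩
  · rw [g1]; simp only [trace_add, key1, tU1]; ring
  · rw [h2]; simp only [trace_add, key1, tU2]; ring
  · rw [h3]; simp only [trace_add, key1, tU3]; ring
  · rw [h4]; simp only [trace_add, key1, tU4]; ring
  · rw [g1]; simp only [mul_add, add_mul, trace_add, key, key2, key3, tU2, ← he1]; ring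
  · rw [h2, g1]
    simp only [mul_add, add_mul, trace_add, key, key2, key3, tU3', ← he1, ← he2, w0]; ring
  · rw [h2]
    simp only [mul_add, add_mul, trace_add, key, key2, key3, tU4', w0, w1]; ring
end alg

/-- divided power `t^m/m!`, zero for negative `m` -/
noncomputable def twg (m : ℤ) (t : ℝ) : ℝ :=
  if 0 ≤ m then t ^ m.toNat / (Nat.factorial m.toNat : ℝ) else 0

lemma twg_hasDerivAt (m : ℤ) (t : ℝ) : HasDerivAt (twg m) (twg (m - 1) t) t := by
  rcases lt_or_ge m 0 with h | h
  · have h1 : twg m = fun _ => 0 := by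
      funext s; simp [twg, not_le.mpr h]
    have h2 : twg (m - 1) t = 0 := by
      have : ¬ (0 ≤ m - 1) := by omega
      simp only [twg, if_neg this]
    rw [h1, h2]; exact hasDerivAt_const _ _
  · obtain ⟨p, rfl⟩ := Int.eq_ofNat_of_zero_le h
    cases p with
    | zero =>
      have h1 : twg ((0 : ℕ) : ℤ) = fun _ => 1 := by
        funext s; simp [twg]
      have h2 : twg (((0 : ℕ) : ℤ) - 1) t = 0 := by
        simp [twg]
      rw [h1, h2]; exact hasDerivAt_const _ _
    | succ p =>
      have h1 : twg ((p + 1 : ℕ) : ℤ) = fun s => s ^ (p + 1) / (Nat.factorial (p + 1) : ℝ) := by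
        funext s
        simp only [twg, Int.toNat_natCast]
        rw [if_pos (by positivity)]
      have h2 : twg (((p + 1 : ℕ) : ℤ) - 1) t = t ^ p / (Nat.factorial p : ℝ) := by
        have : ((p + 1 : ℕ) : ℤ) - 1 = (p : ℤ) := by push_cast; ring
        rw [this]
        simp only [twg, Int.toNat_natCast]
        rw [if_pos (by positivity)]
      rw [h1, h2]
      have := (hasDerivAt_pow (p + 1) t).div_const (Nat.factorial (p + 1) : ℝ)
      refine this.congr_deriv ?_
      rw [Nat.factorial_succ]
      have : (Nat.factorial p : ℝ) ≠ 0 := by positivity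
      push_cast
      field_simp
      try simp

lemma twg_mul (m : ℤ) (t : ℝ) : t * twg (m - 1) t = m * twg m t := by
  rcases lt_or_ge m 0 with h | h
  · have : ¬ (0 ≤ m - 1) := by omega
    simp only [twg, if_neg this, if_neg (not_le.mpr h)]; simp
  · obtain ⟨p, rfl⟩ := Int.eq_ofNat_of_zero_le h
    cases p with
    | zero => simp [twg]
    | succ p =>
      have : ((p + 1 : ℕ) : ℤ) - 1 = (p : ℤ) := by push_cast; ring
      rw [this]
      simp only [twg, Int.toNat_natCast]
      rw [if_pos (by positivity), if_pos (by positivity), Nat.factorial_succ]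
      have : (Nat.factorial p : ℝ) ≠ 0 := by positivity
      push_cast
      field_simp
      ring

lemma twg_analytic (m : ℤ) (t : ℝ) : AnalyticAt ℝ (twg m) t := by
  rcases lt_or_ge m 0 with h | h
  · have h1 : twg m = fun _ => 0 := by
      funext s; simp [twg, not_le.mpr h]
    rw [h1]; exact analyticAt_const
  · have h1 : twg m = fun s => s ^ m.toNat / (Nat.factorial m.toNat : ℝ) := by
      funext s; simp [twg, h]
    rw [h1]
    exact (analyticAt_id.pow _).div analyticAt_const (by positivity)

lemma aCoeff_eq (k : ℕ) (j : ℤ) (t : ℝ) :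
    aCoeff k j t = ∑ p ∈ Finset.range (k + 1), (Nat.choose k p : ℝ) * twg (p - j) t := by
  unfold aCoeff
  have hterm : ∀ ℓ : ℕ, t ^ ℓ / (Nat.factorial ℓ : ℝ) *
      (if 0 ≤ j + (ℓ : ℤ) then (Nat.choose k (j + (ℓ : ℤ)).toNat : ℝ) else 0)
      = ∑ p ∈ Finset.range (k + 1),
        if (ℓ : ℤ) = p - j then t ^ ℓ / (Nat.factorial ℓ : ℝ) * (Nat.choose k p : ℝ) else 0 := by
    intro ℓ
    by_cases h : 0 ≤ j + (ℓ : ℤ)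
    · obtain ⟨q, hq⟩ := Int.eq_ofNat_of_zero_le h
      rw [if_pos h, hq, Int.toNat_natCast]
      have : ∀ p : ℕ, ((ℓ : ℤ) = p - j) ↔ p = q := by intro p; omega
      simp only [this, Finset.sum_ite_eq', Finset.mem_range]
      split_ifs with h3
      · rfl
      · rw [Nat.choose_eq_zero_of_lt (by omega)]; simp
    · rw [if_neg h, mul_zero]
      symm
      apply Finset.sum_eq_zero
      intro p _
      rw [if_neg (by omega)]
  simp_rw [hterm]
  apply HasSum.tsum_eq
  apply hasSum_sum
  intro p _
  by_cases h : 0 ≤ (p : ℤ) - j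
  · obtain ⟨q, hq⟩ := Int.eq_ofNat_of_zero_le h
    rw [hq]
    have : ∀ ℓ : ℕ, ((ℓ : ℤ) = (q : ℤ)) ↔ ℓ = q := by intro p; omega
    simp only [this]
    have h2 := hasSum_single (f := fun ℓ : ℕ => if ℓ = q then
      t ^ ℓ / (Nat.factorial ℓ : ℝ) * (Nat.choose k p : ℝ) else 0) q
      (by intro b hb; simp [hb])
    convert h2 using 1
    simp [twg, mul_comm]
  · have : ∀ ℓ : ℕ, ¬ ((ℓ : ℤ) = p - j) := by intro ℓ; omega
    simp only [this, if_false]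
    have h2 : twg (p - j) t = 0 := by simp only [twg, if_neg h]
    rw [h2, mul_zero]; exact hasSum_zero

lemma aCoeff_hasDerivAt (k : ℕ) (j : ℤ) (t : ℝ) :
    HasDerivAt (aCoeff k j) (aCoeff k (j + 1) t) t := by
  have h1 : aCoeff k j =
      fun s => ∑ p ∈ Finset.range (k + 1), (Nat.choose k p : ℝ) * twg (p - j) s := by
    funext s; exact aCoeff_eq k j s
  rw [h1, aCoeff_eq]
  apply HasDerivAt.fun_sum
  intro p _
  have := (twg_hasDerivAt (p - j) t).const_mul (Nat.choose k p : ℝ)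
  rw [show (p : ℤ) - (j + 1) = p - j - 1 by ring]
  exact this

lemma aCoeff_analytic (k : ℕ) (j : ℤ) (t : ℝ) : AnalyticAt ℝ (aCoeff k j) t := by
  have h1 : aCoeff k j =
      fun s => ∑ p ∈ Finset.range (k + 1), (Nat.choose k p : ℝ) * twg (p - j) s := by
    funext s; exact aCoeff_eq k j s
  rw [h1]
  apply Finset.analyticAt_fun_sum
  intro p _
  exact analyticAt_const.mul (twg_analytic _ _)

lemma aCoeff_rec (k : ℕ) (j : ℤ) (t : ℝ) :
    t * aCoeff k (j + 1) t + (t + j) * aCoeff k j t = (k + 1 - j) * aCoeff k (j - 1) t := by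
  rw [← sub_eq_zero]
  rw [aCoeff_eq, aCoeff_eq, aCoeff_eq]
  simp only [Finset.mul_sum]
  rw [← Finset.sum_add_distrib, ← Finset.sum_sub_distrib]
  have : ∀ p ∈ Finset.range (k + 1),
      t * ((Nat.choose k p : ℝ) * twg (p - (j + 1)) t) + (t + j) * ((Nat.choose k p : ℝ) * twg (p - j) t)
        - (k + 1 - j) * ((Nat.choose k p : ℝ) * twg (p - (j - 1)) t)
      = (fun p : ℕ => (p : ℝ) * (Nat.choose k p : ℝ) * twg (p - j) t) p -
        (fun p : ℕ => (p : ℝ) * (Nat.choose k p : ℝ) * twg (p - j) t) (p + 1) := by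
    intro p hp
    have hpk : p ≤ k := by simpa [Nat.lt_succ_iff] using hp
    have e1 := twg_mul (p - j) t
    have e2 := twg_mul (p - j + 1) t
    rw [show (p : ℤ) - j + 1 - 1 = p - j by ring] at e2
    rw [show (p : ℤ) - (j + 1) = p - j - 1 by ring, show (p : ℤ) - (j - 1) = p - j + 1 by ring]
    simp only
    rw [show ((p + 1 : ℕ) : ℤ) - j = p - j + 1 by push_cast; ring]
    have e3 : (Nat.choose k (p + 1) : ℝ) * (p + 1) = Nat.choose k p * (k - p) := by
      have := Nat.choose_succ_right_eq k p
      rw [← Nat.cast_sub hpk]; exact_mod_cast this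
    push_cast at e1 e2 ⊢
    linear_combination (Nat.choose k p : ℝ) * e1 + (Nat.choose k p : ℝ) * e2 +
      twg (p - j + 1) t * e3
  rw [Finset.sum_congr rfl this, Finset.sum_range_sub']
  simp

/-- shifted Toeplitz matrix -/
noncomputable def twT (k N : ℕ) (s : ℕ) (t : ℝ) : Matrix (Fin (N + 1)) (Fin (N + 1)) ℝ :=
  Matrix.of fun i j => aCoeff k (((i : ℕ) : ℤ) - ((j : ℕ) : ℤ) + s) t

lemma twT_det (k N : ℕ) (t : ℝ) : Dn k (N + 1) t = (twT k N 0 t).det := by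
  simp [Dn, twT]

noncomputable def twU (N : ℕ) : Matrix (Fin (N + 1)) (Fin (N + 1)) ℝ :=
  Matrix.of fun i j => if (i : ℕ) + 1 = (j : ℕ) then 1 else 0

noncomputable def twL (N : ℕ) : Matrix (Fin (N + 1)) (Fin (N + 1)) ℝ :=
  Matrix.diagonal fun i => ((i : ℕ) : ℝ)

noncomputable def twe (N : ℕ) : Fin (N + 1) → ℝ := Pi.single 0 1
noncomputable def twf (N : ℕ) : Fin (N + 1) → ℝ := Pi.single (Fin.last N) 1

noncomputable def twc (k N : ℕ) (s : ℕ) (t : ℝ) : Fin (N + 1) → ℝ :=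
  fun i => aCoeff k (((i : ℕ) : ℤ) + s) t
noncomputable def twb (k N : ℕ) (s : ℕ) (t : ℝ) : Fin (N + 1) → ℝ :=
  fun j => aCoeff k ((N : ℤ) - ((j : ℕ) : ℤ) + s) t

lemma twL_U (N : ℕ) : twL N * twU N - twU N * twL N = - twU N := by
  ext i j
  simp only [twL, twU, Matrix.sub_apply, Matrix.diagonal_mul, Matrix.mul_diagonal, Matrix.of_apply,
    Matrix.neg_apply]
  split_ifs with h
  · rw [← h]; push_cast; ring
  · simp

lemma twe_L (N : ℕ) : twe N ᵥ* twL N = 0 := by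
  ext j
  simp only [twe, twL, Matrix.vecMul_diagonal]
  by_cases h : j = 0
  · subst h; simp
  · simp [h]

lemma twL_f (N : ℕ) : twL N *ᵥ twf N = (((N + 1 : ℕ) : ℝ) - 1) • twf N := by
  ext j
  simp only [twf, twL, Matrix.mulVec_diagonal, Pi.smul_apply, smul_eq_mul]
  by_cases h : j = Fin.last N
  · subst h; simp
  · simp [h]

lemma twT_col (k N s : ℕ) (t : ℝ) :
    twT k N (s + 1) t = twT k N s t * twU N + vecMulVec (twc k N (s + 1) t) (twe N) := by
  ext i j
  simp only [Matrix.add_apply, Matrix.mul_apply, vecMulVec_apply, twT, twU, twc, twe, Matrix.of_apply]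
  refine Fin.cases ?_ (fun l => ?_) j
  · simp
  · rw [Finset.sum_eq_single l.castSucc]
    · simp
      congr 1; ring
    · intro b _ hb
      rw [if_neg, mul_zero]
      intro h; apply hb; ext; simp at h ⊢; omega
    · simp

lemma twT_row (k N s : ℕ) (t : ℝ) :
    twT k N (s + 1) t = twU N * twT k N s t + vecMulVec (twf N) (twb k N (s + 1) t) := by
  ext i j
  simp only [Matrix.add_apply, Matrix.mul_apply, vecMulVec_apply, twT, twU, twb, twf, Matrix.of_apply]
  refine Fin.lastCases ?_ (fun l => ?_) i
  · rw [Finset.sum_eq_zero]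
    · simp
    · intro x _
      rw [if_neg, zero_mul]
      have := x.2
      simp; omega
  · rw [Finset.sum_eq_single l.succ]
    · have : l.castSucc ≠ Fin.last N := (Fin.castSucc_lt_last l).ne
      simp [this]
      congr 1; ring
    · intro b _ hb
      rw [if_neg, zero_mul]
      intro h; apply hb; ext; simp at h ⊢; omega
    · simp

lemma twT_rec (k N s : ℕ) (t : ℝ) :
    t • twT k N (s + 2) t + (t + (s + 1)) • twT k N (s + 1) t
      + twL N * (twT k N (s + 1) t + twT k N s t)
    = ((k : ℝ) - s) • twT k N s t + (twT k N (s + 1) t + twT k N s t) * twL N := by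
  ext i j
  simp only [Matrix.add_apply, Matrix.smul_apply, twL, Matrix.diagonal_mul, Matrix.mul_diagonal,
    smul_eq_mul, twT, Matrix.of_apply]
  have := aCoeff_rec k (((i : ℕ) : ℤ) - ((j : ℕ) : ℤ) + (s + 1 : ℕ)) t
  rw [show ((i : ℕ) : ℤ) - ((j : ℕ) : ℤ) + (s + 1 : ℕ) + 1 =
    ((i : ℕ) : ℤ) - ((j : ℕ) : ℤ) + (s + 2 : ℕ) by push_cast; ring,
    show ((i : ℕ) : ℤ) - ((j : ℕ) : ℤ) + (s + 1 : ℕ) - 1 =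
    ((i : ℕ) : ℤ) - ((j : ℕ) : ℤ) + (s : ℕ) by push_cast; ring] at this
  push_cast at this ⊢
  linear_combination this

lemma tw_det_hasDerivAt {n : ℕ} (M : ℝ → Matrix (Fin n) (Fin n) ℝ) (M' : Matrix (Fin n) (Fin n) ℝ)
    (t : ℝ) (h : ∀ i j, HasDerivAt (fun s => M s i j) (M' i j) t) :
    HasDerivAt (fun s => (M s).det) (∑ l, ((M t).updateCol l (fun i => M' i l)).det) t := by
  have h1 : (fun s => (M s).det) = fun s => ∑ σ : Equiv.Perm (Fin n),
      ((Equiv.Perm.sign σ : ℤ) : ℝ) * ∏ i, M s (σ i) i := by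
    funext s; rw [Matrix.det_apply']
  rw [h1]
  have h2 : HasDerivAt (fun s => ∑ σ : Equiv.Perm (Fin n),
      ((Equiv.Perm.sign σ : ℤ) : ℝ) * ∏ i, M s (σ i) i)
      (∑ σ : Equiv.Perm (Fin n), ((Equiv.Perm.sign σ : ℤ) : ℝ) *
        ∑ l, (∏ x ∈ Finset.univ.erase l, M t (σ x) x) • M' (σ l) l) t := by
    apply HasDerivAt.fun_sum
    intro σ _
    apply HasDerivAt.const_mul
    exact HasDerivAt.fun_finset_prod (fun i _ => h (σ i) i)
  refine h2.congr_deriv ?_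
  simp only [Finset.mul_sum]
  rw [Finset.sum_comm]
  apply Finset.sum_congr rfl
  intro l _
  rw [Matrix.det_apply']
  apply Finset.sum_congr rfl
  intro σ _
  rw [← Finset.mul_prod_erase Finset.univ _ (Finset.mem_univ l), Matrix.updateCol_self, smul_eq_mul,
    mul_comm (M' (σ l) l)]
  congr 2
  apply Finset.prod_congr rfl
  intro x hx
  rw [Matrix.updateCol_ne (Finset.ne_of_mem_erase hx)]

lemma tw_det_analytic {n : ℕ} (M : ℝ → Matrix (Fin n) (Fin n) ℝ) (t : ℝ)
    (h : ∀ i j, AnalyticAt ℝ (fun s => M s i j) t) : AnalyticAt ℝ (fun s => (M s).det) t := by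
  simp only [Matrix.det_apply']
  apply Finset.analyticAt_fun_sum
  intro σ _
  apply AnalyticAt.mul analyticAt_const
  apply Finset.analyticAt_fun_prod
  intro i _
  exact h _ _

lemma Dn_analytic (k n : ℕ) (t : ℝ) : AnalyticAt ℝ (Dn k n) t := by
  have := tw_det_analytic (fun s => Matrix.of fun i j : Fin n =>
    aCoeff k (((i : ℕ) : ℤ) - ((j : ℕ) : ℤ)) s) t (fun i j => aCoeff_analytic k _ t)
  exact this

noncomputable def twu (k N s : ℕ) (t : ℝ) : Fin (N + 1) → ℝ := (twT k N 0 t)⁻¹ *ᵥ twc k N s t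

lemma twu_cramer (k N s : ℕ) (t : ℝ) (ht : Dn k (N + 1) t ≠ 0) (i : Fin (N + 1)) :
    twu k N s t i = ((twT k N 0 t).updateCol i (twc k N s t)).det / Dn k (N + 1) t := by
  rw [← Matrix.cramer_apply, Matrix.cramer_eq_adjugate_mulVec, twu, Matrix.inv_def,
    Matrix.smul_mulVec, ← twT_det, Ring.inverse_eq_inv']
  simp only [Pi.smul_apply, smul_eq_mul]
  rw [div_eq_inv_mul]

lemma Dn_hasDerivAt (k N : ℕ) (t : ℝ) (ht : Dn k (N + 1) t ≠ 0) :
    HasDerivAt (Dn k (N + 1)) (Dn k (N + 1) t * (twe N ⬝ᵥ twu k N 1 t)) t := by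
  have h0 : Dn k (N + 1) = fun s => (twT k N 0 s).det := by
    funext s; exact twT_det k N s
  have h1 := tw_det_hasDerivAt (fun s => twT k N 0 s) (twT k N 1 t) t (by
    intro i j
    have := aCoeff_hasDerivAt k (((i : ℕ) : ℤ) - ((j : ℕ) : ℤ) + (0 : ℕ)) t
    simpa [twT] using this)
  have h2 : twe N ⬝ᵥ twu k N 1 t = twu k N 1 t 0 := by simp [twe]
  rw [h2, twu_cramer k N 1 t ht, mul_div_cancel₀ _ ht, h0]
  refine h1.congr_deriv ?_
  rw [Finset.sum_eq_single 0]
  · have : (fun i => twT k N 1 t i 0) = twc k N 1 t := by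
      ext i; simp [twT, twc]
    rw [this]
  · intro l _ hl
    obtain ⟨p, rfl⟩ := Fin.exists_succ_eq.mpr hl
    apply Matrix.det_zero_of_column_eq (i := p.succ) (j := p.castSucc)
    · exact (Fin.castSucc_lt_succ).ne'
    · intro x
      rw [Matrix.updateCol_self, Matrix.updateCol_ne (Fin.castSucc_lt_succ).ne]
      simp [twT]
      congr 1; ring
  · simp

lemma twu_hasDerivAt (k N s : ℕ) (t : ℝ) (ht : Dn k (N + 1) t ≠ 0) (v : Fin (N + 1) → ℝ) :
    HasDerivAt (fun x => v ⬝ᵥ twu k N s x)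
      (v ⬝ᵥ twu k N (s + 1) t - (v ᵥ* twU N) ⬝ᵥ twu k N s t
        - (v ⬝ᵥ twu k N 1 t) * (twe N ⬝ᵥ twu k N s t)) t := by
  have hev : ∀ᶠ x in nhds t, Dn k (N + 1) x ≠ 0 :=
    (Dn_analytic k (N + 1) t).continuousAt.eventually_ne ht
  have hd : ∀ i, DifferentiableAt ℝ (fun x => twu k N s x i) t := by
    intro i
    have h1 : AnalyticAt ℝ (fun x => ((twT k N 0 x).updateCol i (twc k N s x)).det) t := by
      apply tw_det_analytic
      intro a b
      by_cases hb : b = i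
      · subst hb; simp only [Matrix.updateCol_self]; exact aCoeff_analytic k _ t
      · simp only [Matrix.updateCol_ne hb]; exact aCoeff_analytic k _ t
    have h2 := (h1.div (Dn_analytic k (N + 1) t) ht).differentiableAt
    refine h2.congr_of_eventuallyEq ?_
    filter_upwards [hev] with x hx
    exact twu_cramer k N s x hx i
  set u' : Fin (N + 1) → ℝ := fun i => deriv (fun x => twu k N s x i) t with hu'
  have hdd : ∀ i, HasDerivAt (fun x => twu k N s x i) (u' i) t := fun i => (hd i).hasDerivAt
  have hinv : ∀ x, Dn k (N + 1) x ≠ 0 → IsUnit (twT k N 0 x).det := by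
    intro x hx; rw [← twT_det]; exact hx.isUnit
  have hTu : ∀ x, Dn k (N + 1) x ≠ 0 → twT k N 0 x *ᵥ twu k N s x = twc k N s x := by
    intro x hx
    rw [twu, Matrix.mulVec_mulVec, Matrix.mul_nonsing_inv _ (hinv x hx), Matrix.one_mulVec]
  have heq : twT k N 1 t *ᵥ twu k N s t + twT k N 0 t *ᵥ u' = twc k N (s + 1) t := by
    ext i
    have e1 : HasDerivAt (fun x => twc k N s x i) (twc k N (s + 1) t i) t := by
      have := aCoeff_hasDerivAt k (((i : ℕ) : ℤ) + s) t
      simpa [twc, add_assoc] using this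
    have e2 : HasDerivAt (fun x => ∑ j, twT k N 0 x i j * twu k N s x j)
        (∑ j, (twT k N 1 t i j * twu k N s t j + twT k N 0 t i j * u' j)) t := by
      apply HasDerivAt.fun_sum
      intro j _
      apply HasDerivAt.fun_mul _ (hdd j)
      have := aCoeff_hasDerivAt k (((i : ℕ) : ℤ) - ((j : ℕ) : ℤ) + (0 : ℕ)) t
      simpa [twT] using this
    have e3 : (fun x => twc k N s x i) =ᶠ[nhds t] fun x => ∑ j, twT k N 0 x i j * twu k N s x j := by
      filter_upwards [hev] with x hx
      rw [← hTu x hx]; rfl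
    have := e1.unique (e2.congr_of_eventuallyEq e3)
    rw [this, Finset.sum_add_distrib]
    rfl
  have hu'2 : u' = twu k N (s + 1) t - ((twT k N 0 t)⁻¹ * twT k N 1 t) *ᵥ twu k N s t := by
    rw [twu, ← heq, Matrix.mulVec_add, Matrix.mulVec_mulVec, Matrix.mulVec_mulVec,
      Matrix.nonsing_inv_mul _ (hinv t ht), Matrix.one_mulVec]
    abel
  have hG : (twT k N 0 t)⁻¹ * twT k N 1 t = twU N + vecMulVec (twu k N 1 t) (twe N) := by
    rw [twT_col, mul_add, ← mul_assoc, Matrix.nonsing_inv_mul _ (hinv t ht), one_mul,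
      mul_vecMulVec]; rfl
  have hfin : HasDerivAt (fun x => ∑ i, v i * twu k N s x i) (∑ i, v i * u' i) t := by
    apply HasDerivAt.fun_sum
    intro i _
    exact (hdd i).const_mul _
  refine HasDerivAt.congr_deriv hfin ?_
  change v ⬝ᵥ u' = _
  rw [hu'2, hG, dotProduct_sub, add_mulVec, dotProduct_add, vecMulVec_mulVec, dotProduct_mulVec,
    op_smul_eq_smul, dotProduct_smul, smul_eq_mul]
  ring

/-- the affine coordinates on the Grassmannian -/
noncomputable def twm (k N j r : ℕ) (t : ℝ) : ℝ := (twe N ᵥ* (twU N) ^ r) ⬝ᵥ twu k N j t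

lemma twm_hasDerivAt (k N j r : ℕ) (t : ℝ) (ht : Dn k (N + 1) t ≠ 0) :
    HasDerivAt (twm k N j r)
      (twm k N (j + 1) r t - twm k N j (r + 1) t - twm k N 1 r t * twm k N j 0 t) t := by
  have := twu_hasDerivAt k N j t ht (twe N ᵥ* (twU N) ^ r)
  rw [vecMul_vecMul, ← pow_succ] at this
  have e0 : twm k N j 0 t = twe N ⬝ᵥ twu k N j t := by simp [twm]
  rw [e0]
  exact this

lemma twm_relations (k N : ℕ) (t : ℝ) (ht : Dn k (N + 1) t ≠ 0) :
    let m := fun j r => twm k N j r t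
    let n : ℝ := ((N + 1 : ℕ) : ℝ)
    t * (m 1 1 + m 2 0) + (t + n) * m 1 0 = n * k ∧
    t * (m 1 2 + m 2 1 + m 3 0) + (t + n) * (m 1 1 + m 2 0) + (m 2 0 - m 1 1)
      + (n - k) * m 1 0 = 0 ∧
    t * (m 3 1 + m 4 0 - m 1 3 - m 2 2 - m 1 1 ^ 2 - 2 * m 2 1 * m 1 0 - m 2 0 ^ 2)
      + 2 * (m 1 2 + m 2 1 + m 3 0)
      + (t + n) * (m 3 0 - m 1 2 - m 1 0 * m 1 1 - m 2 0 * m 1 0)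
      + 2 * (m 1 1 + m 2 0) = 0 := by
  intro m n
  have hu : IsUnit (twT k N 0 t).det := by rw [← twT_det]; exact ht.isUnit
  set T := twT k N 0 t with hT
  have hST : T⁻¹ * T = 1 := Matrix.nonsing_inv_mul _ hu
  have hTS : T * T⁻¹ = 1 := Matrix.mul_nonsing_inv _ hu
  have hcol : ∀ s, T⁻¹ * twT k N (s + 1) t = T⁻¹ * twT k N s t * twU N
      + vecMulVec (twu k N (s + 1) t) (twe N) := by
    intro s
    rw [twT_col, mul_add, ← mul_assoc, mul_vecMulVec]; rfl
  have hrow : ∀ s, T⁻¹ * twT k N (s + 1) t = (T⁻¹ * twU N * T) * (T⁻¹ * twT k N s t)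
      + vecMulVec (T⁻¹ *ᵥ twf N) (twb k N (s + 1) t) := by
    intro s
    rw [twT_row, mul_add, mul_vecMulVec]
    congr 1
    rw [mul_assoc (T⁻¹ * twU N), ← mul_assoc T, hTS, one_mul, mul_assoc]
  have hrec : ∀ s : ℕ, t • (T⁻¹ * twT k N (s + 2) t) + (t + (s + 1)) • (T⁻¹ * twT k N (s + 1) t)
      + (T⁻¹ * twL N * T) * (T⁻¹ * twT k N (s + 1) t + T⁻¹ * twT k N s t)
    = ((k : ℝ) - s) • (T⁻¹ * twT k N s t)
      + (T⁻¹ * twT k N (s + 1) t + T⁻¹ * twT k N s t) * twL N := by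
    intro s
    have := congrArg (fun X => T⁻¹ * X) (twT_rec k N s t)
    rw [← mul_add T⁻¹, mul_assoc (T⁻¹ * twL N), ← mul_assoc T, hTS, one_mul]
    simp only [mul_add, mul_smul_comm, ← mul_assoc, add_mul] at this ⊢
    exact this
  have hAV : (T⁻¹ * twL N * T) * (T⁻¹ * twU N * T) - (T⁻¹ * twU N * T) * (T⁻¹ * twL N * T)
      = - (T⁻¹ * twU N * T) := by
    have e : ∀ X Y : Matrix (Fin (N + 1)) (Fin (N + 1)) ℝ,
        (T⁻¹ * X * T) * (T⁻¹ * Y * T) = T⁻¹ * (X * Y) * T := by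
      intro X Y
      rw [mul_assoc (T⁻¹ * X), ← mul_assoc T, ← mul_assoc T, hTS, one_mul]
      simp only [mul_assoc]
    rw [e, e, ← sub_mul, ← mul_sub, twL_U]; simp
  have hAf : (T⁻¹ * twL N * T) *ᵥ (T⁻¹ *ᵥ twf N) = (n - 1) • (T⁻¹ *ᵥ twf N) := by
    rw [mulVec_mulVec, mul_assoc, hTS, mul_one, ← mulVec_mulVec, twL_f, mulVec_smul]
  have hAL : (T⁻¹ * twL N * T).trace = (twL N).trace := by
    rw [trace_mul_comm, ← mul_assoc, hTS, one_mul]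
  have hn : Matrix.trace (1 : Matrix (Fin (N + 1)) (Fin (N + 1)) ℝ) = n := by
    simp [n]
  have c0 := hcol 0; have c1 := hcol 1; have c2 := hcol 2; have c3 := hcol 3
  have w0 := hrow 0; have w1 := hrow 1; have w2 := hrow 2
  have q0 := hrec 0; have q1 := hrec 1; have q2 := hrec 2
  simp only [zero_add, ← hT, hST, one_mul, mul_one] at c0 w0 q0
  obtain ⟨V1, V2, V3⟩ := tw_virasoro (twL N) (twU N) (T⁻¹ * twL N * T) (T⁻¹ * twU N * T)
    _ _ _ (T⁻¹ * twT k N 4 t) _ _ _ _ _ _ _ _ t k n hn (twL_U N) (twe_L N) hAV hAf hAL c0 c1 c2 w0 w1 w2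
    (by simpa using q0)
    (by have := q1; norm_num at this ⊢; exact this)
    (by have := q2; norm_num at this ⊢; exact this)
  obtain ⟨t1, t2, t3, t4, t11, t12, t22⟩ := tw_col_traces (twL N) (twU N) _ _ _ _ (twe N)
    (twe N ᵥ* (twU N) ^ 1) (twe N ᵥ* (twU N) ^ 2) (twe N ᵥ* (twU N) ^ 3) _ _ _ _ (twL_U N)
    (by rw [pow_one]) (by rw [vecMul_vecMul, ← pow_succ]) (by rw [vecMul_vecMul, ← pow_succ])
    c0 c1 c2 c3
  have z : ∀ j, twe N ⬝ᵥ twu k N j t = m j 0 := by intro j; simp [m, twm]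
  have z' : ∀ j r, (twe N ᵥ* (twU N) ^ r) ⬝ᵥ twu k N j t = m j r := by intro j r; rfl
  simp only [z, z', zero_add, Nat.reduceAdd] at t1 t2 t3 t4 t11 t12 t22
  simp only [zero_add, Nat.reduceAdd] at V1 V2 V3
  rw [t1, t2] at V1
  rw [t1, t2, t3, t11] at V2
  rw [t2, t3, t4, t12, t22] at V3
  refine ⟨V1, ?_, ?_⟩
  · linear_combination V2
  · linear_combination V3

lemma Dn_zero (k n : ℕ) : Dn k n 0 = 1 := by
  have hg : ∀ m : ℤ, twg m 0 = if m = 0 then 1 else 0 := by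
    intro m
    unfold twg
    split_ifs with h1 h2 h2
    · subst h2; simp
    · have : m.toNat ≠ 0 := by omega
      rw [zero_pow this]; simp
    · omega
    · rfl
  unfold Dn
  rw [Matrix.det_of_lowerTriangular]
  · apply Finset.prod_eq_one
    intro i _
    simp only [Matrix.of_apply, sub_self]
    rw [aCoeff_eq, Finset.sum_eq_single 0]
    · simp [hg]
    · intro p _ hp
      rw [hg, if_neg (by omega), mul_zero]
    · simp
  · intro i j hij
    have hij' : i < j := hij
    simp only [Matrix.of_apply]
    rw [aCoeff_eq]
    apply Finset.sum_eq_zero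
    intro p _
    have : (i : ℕ) < (j : ℕ) := hij'
    rw [hg, if_neg (by omega), mul_zero]

noncomputable def twF1 (k N : ℕ) (t : ℝ) : ℝ := twm k N 1 0 t
noncomputable def twF11 (k N : ℕ) (t : ℝ) : ℝ :=
  twm k N 2 0 t - twm k N 1 1 t - twm k N 1 0 t * twm k N 1 0 t
noncomputable def twF111 (k N : ℕ) (t : ℝ) : ℝ :=
  twm k N 3 0 t - 2 * twm k N 2 1 t + twm k N 1 2 t - twm k N 1 0 t * twm k N 2 0 t
    + twm k N 1 1 t * twm k N 1 0 t - 2 * (twm k N 1 0 t * twF11 k N t)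

lemma tw_third_order (k N : ℕ) (t : ℝ) (ht : Dn k (N + 1) t ≠ 0) :
    HasDerivAt (twF1 k N) (twF11 k N t) t ∧ HasDerivAt (twF11 k N) (twF111 k N t) t ∧
    ∃ F1111, HasDerivAt (twF111 k N) F1111 t ∧
      2 * t ^ 2 * (3 * twF111 k N t + t * F1111)
        + 2 * t * (2 * twF11 k N t + t * twF111 k N t)
        + 12 * t * (((N + 1 : ℕ) : ℝ) + twF1 k N t + t * twF11 k N t) ^ 2
        - 2 * (4 * (((N + 1 : ℕ) : ℝ) * t + t * twF1 k N t) + t ^ 2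
          + 2 * (2 * k + 3 * ((N + 1 : ℕ) : ℝ)) * t + ((N + 1 : ℕ) : ℝ) ^ 2)
          * (((N + 1 : ℕ) : ℝ) + twF1 k N t + t * twF11 k N t)
        + 2 * (t + 2 * k + 3 * ((N + 1 : ℕ) : ℝ)) * (((N + 1 : ℕ) : ℝ) * t + t * twF1 k N t)
        + (2 * ((N + 1 : ℕ) : ℝ) * t + 2 * ((N + 1 : ℕ) : ℝ) ^ 2) * (k + ((N + 1 : ℕ) : ℝ)) = 0 := by
  have hev : ∀ᶠ x in nhds t, Dn k (N + 1) x ≠ 0 :=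
    (Dn_analytic k (N + 1) t).continuousAt.eventually_ne ht
  have d10 := twm_hasDerivAt k N 1 0 t ht
  have d20 := twm_hasDerivAt k N 2 0 t ht
  have d11 := twm_hasDerivAt k N 1 1 t ht
  have d30 := twm_hasDerivAt k N 3 0 t ht
  have d21 := twm_hasDerivAt k N 2 1 t ht
  have d12 := twm_hasDerivAt k N 1 2 t ht
  simp only [Nat.reduceAdd, zero_add] at d10 d20 d11 d30 d21 d12
  have D1 : HasDerivAt (twF1 k N) (twF11 k N t) t := d10
  have D11 : HasDerivAt (twF11 k N) (twF111 k N t) t := by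
    refine ((d20.fun_sub d11).fun_sub (d10.fun_mul d10)).congr_deriv ?_
    simp only [twF111, twF11]; ring
  have D111 := ((((d30.fun_sub (d21.const_mul 2)).fun_add d12).fun_sub (d10.fun_mul d20)).fun_add
    (d11.fun_mul d10)).fun_sub ((d10.fun_mul D11).const_mul 2)
  refine ⟨D1, D11, _, D111, ?_⟩
  obtain ⟨R1, R2, R3⟩ := twm_relations k N t ht
  have hid := hasDerivAt_id' t
  have R1' := ((hid.fun_mul (d11.fun_add d20)).fun_add
    ((hid.add_const ((N + 1 : ℕ) : ℝ)).fun_mul d10)).unique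
    ((hasDerivAt_const t (((N + 1 : ℕ) : ℝ) * k)).congr_of_eventuallyEq (by
      filter_upwards [hev] with x hx
      exact (twm_relations k N x hx).1))
  have R2' := ((((hid.fun_mul ((d12.fun_add d21).fun_add d30)).fun_add
    ((hid.add_const ((N + 1 : ℕ) : ℝ)).fun_mul (d11.fun_add d20))).fun_add
      (d20.fun_sub d11)).fun_add (d10.const_mul (((N + 1 : ℕ) : ℝ) - k))).unique
    ((hasDerivAt_const t (0 : ℝ)).congr_of_eventuallyEq (by
      filter_upwards [hev] with x hx
      exact (twm_relations k N x hx).2.1))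
  simp only [twF111, twF11, twF1] at *
  generalize ((N + 1 : ℕ) : ℝ) = n at *
  linear_combination (-6 * t ^ 2) * R3 + 8 * t ^ 2 * R2' + 4 * t * R2 - 2 * t * (t + n) * R1'
    + (2 * t - 2 * n) * R1

/-- the defect of the equation -/
noncomputable def twE (k n t w w1 w2 : ℝ) : ℝ :=
  t ^ 2 * w2 ^ 2 - (-4 * (k + n) * t * w1 ^ 3 +
        (4 * (k + n) * w + t ^ 2 + 2 * (2 * k + 3 * n) * t + n ^ 2) * w1 ^ 2 -
        (2 * (t + 2 * k + 3 * n) * w + 2 * n * t + 2 * n ^ 2) * w1 + (w + n) ^ 2)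

lemma wFn_formulas (k N : ℕ) (t : ℝ) (ht : Dn k (N + 1) t ≠ 0) :
    wFn k (N + 1) t = (((N + 1 : ℕ) : ℝ) * t + t * twF1 k N t) / (k + ((N + 1 : ℕ) : ℝ)) ∧
    deriv (wFn k (N + 1)) t =
      (((N + 1 : ℕ) : ℝ) + twF1 k N t + t * twF11 k N t) / (k + ((N + 1 : ℕ) : ℝ)) ∧
    deriv (deriv (wFn k (N + 1))) t =
      (2 * twF11 k N t + t * twF111 k N t) / (k + ((N + 1 : ℕ) : ℝ)) := by
  have h0 : ∀ x, Dn k (N + 1) x ≠ 0 → wFn k (N + 1) x =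
      (((N + 1 : ℕ) : ℝ) * x + x * twF1 k N x) / (k + ((N + 1 : ℕ) : ℝ)) := by
    intro x hx
    unfold wFn
    rw [(Dn_hasDerivAt k N x hx).deriv]
    have : twe N ⬝ᵥ twu k N 1 x = twF1 k N x := by simp [twF1, twm]
    rw [this]
    congr 2
    field_simp
  have hev : ∀ x, Dn k (N + 1) x ≠ 0 → ∀ᶠ y in nhds x, Dn k (N + 1) y ≠ 0 := fun x hx =>
    (Dn_analytic k (N + 1) x).continuousAt.eventually_ne hx
  have h1 : ∀ x, Dn k (N + 1) x ≠ 0 → deriv (wFn k (N + 1)) x =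
      (((N + 1 : ℕ) : ℝ) + twF1 k N x + x * twF11 k N x) / (k + ((N + 1 : ℕ) : ℝ)) := by
    intro x hx
    have e : wFn k (N + 1) =ᶠ[nhds x] fun x =>
      (((N + 1 : ℕ) : ℝ) * x + x * twF1 k N x) / (k + ((N + 1 : ℕ) : ℝ)) := by
      filter_upwards [hev x hx] with y hy using h0 y hy
    rw [e.deriv_eq]
    have hid := hasDerivAt_id' x
    have := ((hid.const_mul ((N + 1 : ℕ) : ℝ)).fun_add
      (hid.fun_mul (tw_third_order k N x hx).1)).div_const (k + ((N + 1 : ℕ) : ℝ))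
    rw [this.deriv]
    ring
  refine ⟨h0 t ht, h1 t ht, ?_⟩
  have e : deriv (wFn k (N + 1)) =ᶠ[nhds t] fun x =>
      (((N + 1 : ℕ) : ℝ) + twF1 k N x + x * twF11 k N x) / (k + ((N + 1 : ℕ) : ℝ)) := by
    filter_upwards [hev t ht] with y hy using h1 y hy
  rw [e.deriv_eq]
  have hid := hasDerivAt_id' t
  have := (((tw_third_order k N t ht).1.const_add ((N + 1 : ℕ) : ℝ)).fun_add
      (hid.fun_mul (tw_third_order k N t ht).2.1)).div_const (k + ((N + 1 : ℕ) : ℝ))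
  rw [this.deriv]
  ring

lemma tw_local (k N : ℕ) : ∀ᶠ x in nhds (0 : ℝ),
    twE k ((N + 1 : ℕ) : ℝ) x (wFn k (N + 1) x) (deriv (wFn k (N + 1)) x)
      (deriv (deriv (wFn k (N + 1))) x) = 0 := by
  have hD0 : Dn k (N + 1) 0 ≠ 0 := by rw [Dn_zero]; exact one_ne_zero
  have hev : ∀ᶠ y in nhds 0, Dn k (N + 1) y ≠ 0 :=
    (Dn_analytic k (N + 1) 0).continuousAt.eventually_ne hD0
  obtain ⟨ε, hε, hball⟩ := Metric.eventually_nhds_iff_ball.mp hev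
  have hn : ((N + 1 : ℕ) : ℝ) ≠ 0 := by positivity
  have hK : (k : ℝ) + ((N + 1 : ℕ) : ℝ) ≠ 0 := by positivity
  set n : ℝ := ((N + 1 : ℕ) : ℝ) with hndef
  set W0 : ℝ → ℝ := fun x => (n * x + x * twF1 k N x) / (k + n) with hW0
  set W1 : ℝ → ℝ := fun x => (n + twF1 k N x + x * twF11 k N x) / (k + n) with hW1
  set W2 : ℝ → ℝ := fun x => (2 * twF11 k N x + x * twF111 k N x) / (k + n) with hW2
  have hder : ∀ x ∈ Metric.ball (0 : ℝ) ε,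
      HasDerivAt (fun x => twE k n x (W0 x) (W1 x) (W2 x)) 0 x := by
    intro x hx
    obtain ⟨D1, D11, F4, D111, heq⟩ := tw_third_order k N x (hball x hx)
    rw [← hndef] at heq
    have hid := hasDerivAt_id' x
    have E0 : HasDerivAt W0 (W1 x) x := by
      refine (((hid.const_mul n).fun_add (hid.fun_mul D1)).div_const (k + n)).congr_deriv ?_
      simp only [hW1]; ring
    have E1 : HasDerivAt W1 (W2 x) x := by
      refine (((D1.const_add n).fun_add (hid.fun_mul D11)).div_const (k + n)).congr_deriv ?_
      simp only [hW2]; ring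
    have E2 : HasDerivAt W2 ((3 * twF111 k N x + x * F4) / (k + n)) x := by
      refine (((D11.const_mul 2).fun_add (hid.fun_mul D111)).div_const (k + n)).congr_deriv ?_
      ring
    have hG : 2 * x ^ 2 * ((3 * twF111 k N x + x * F4) / (k + n)) + 2 * x * W2 x
        + 12 * (k + n) * x * W1 x ^ 2
        - 2 * (4 * (k + n) * W0 x + x ^ 2 + 2 * (2 * k + 3 * n) * x + n ^ 2) * W1 x
        + (2 * (x + 2 * k + 3 * n) * W0 x + 2 * n * x + 2 * n ^ 2) = 0 := by
      simp only [hW0, hW1, hW2]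
      field_simp
      linear_combination heq
    have A := (hid.fun_pow 2).fun_mul (E2.fun_pow 2)
    have B := (hid.const_mul (-4 * (k + n))).fun_mul (E1.fun_pow 3)
    have C := ((((E0.const_mul (4 * (k + n))).fun_add (hid.fun_pow 2)).fun_add
      (hid.const_mul (2 * (2 * k + 3 * n)))).add_const (n ^ 2)).fun_mul (E1.fun_pow 2)
    have D := ((((((hid.add_const (2 * (k : ℝ))).add_const (3 * n)).const_mul 2).fun_mul E0).fun_add
      (hid.const_mul (2 * n))).add_const (2 * n ^ 2)).fun_mul E1
    have F := (E0.add_const n).fun_pow 2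
    have tot := A.fun_sub (((B.fun_add C).fun_sub D).fun_add F)
    refine tot.congr_deriv ?_
    push_cast
    linear_combination W2 x * hG
  have hconst : ∀ x ∈ Metric.ball (0 : ℝ) ε, twE k n x (W0 x) (W1 x) (W2 x)
      = twE k n 0 (W0 0) (W1 0) (W2 0) := by
    intro x hx
    exact Metric.isOpen_ball.is_const_of_deriv_eq_zero (convex_ball (0 : ℝ) ε).isPreconnected
      (f := fun x => twE k n x (W0 x) (W1 x) (W2 x))
      (fun y hy => (hder y hy).differentiableAt.differentiableWithinAt)
      (fun y hy => (hder y hy).deriv) hx (Metric.mem_ball_self hε)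
  have hzero : twE k n 0 (W0 0) (W1 0) (W2 0) = 0 := by
    have h1 : twF1 k N 0 = k := by
      have := (twm_relations k N 0 hD0).1
      simp only [zero_mul, zero_add] at this
      exact mul_left_cancel₀ hn this
    have hw0 : W0 0 = 0 := by simp [hW0]
    have hw1 : W1 0 = 1 := by
      simp only [hW1, h1]
      rw [zero_mul, add_zero, add_comm n, div_self hK]
    rw [hw0, hw1, twE]; ring
  refine Metric.eventually_nhds_iff_ball.mpr ⟨ε, hε, fun x hx => ?_⟩
  obtain ⟨f0, f1, f2⟩ := wFn_formulas k N x (hball x hx)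
  rw [f0, f1, f2]
  exact (hconst x hx).trans hzero

lemma tw_global (k N : ℕ) (t : ℝ) (ht : Dn k (N + 1) t ≠ 0) :
    twE k ((N + 1 : ℕ) : ℝ) t (wFn k (N + 1) t) (deriv (wFn k (N + 1)) t)
      (deriv (deriv (wFn k (N + 1))) t) = 0 := by
  have hK : (k : ℝ) + ((N + 1 : ℕ) : ℝ) ≠ 0 := by positivity
  set n : ℝ := ((N + 1 : ℕ) : ℝ) with hndef
  set D : ℝ → ℝ := Dn k (N + 1) with hD
  have aD : AnalyticOnNhd ℝ D Set.univ := fun x _ => Dn_analytic k (N + 1) x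
  have aid : AnalyticOnNhd ℝ (fun x : ℝ => x) Set.univ := analyticOnNhd_id
  have ac : ∀ c : ℝ, AnalyticOnNhd ℝ (fun _ : ℝ => c) Set.univ := fun c => analyticOnNhd_const
  set N0 : ℝ → ℝ := fun x => n * x * D x + x * deriv D x with hN0
  have aN0 : AnalyticOnNhd ℝ N0 Set.univ := (((ac n).mul aid).mul aD).add (aid.mul aD.deriv)
  set N1 : ℝ → ℝ := fun x => deriv N0 x * D x - N0 x * deriv D x with hN1
  have aN1 : AnalyticOnNhd ℝ N1 Set.univ := (aN0.deriv.mul aD).sub (aN0.mul aD.deriv)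
  set N2 : ℝ → ℝ := fun x => deriv N1 x * D x - 2 * N1 x * deriv D x with hN2
  have aN2 : AnalyticOnNhd ℝ N2 Set.univ :=
    (aN1.deriv.mul aD).sub (((ac 2).mul aN1).mul aD.deriv)
  have hev : ∀ x, D x ≠ 0 → ∀ᶠ y in nhds x, D y ≠ 0 := fun x hx =>
    (aD x trivial).continuousAt.eventually_ne hx
  have f0 : ∀ x, D x ≠ 0 → wFn k (N + 1) x = N0 x / D x / (k + n) := by
    intro x hx
    simp only [wFn, hN0, ← hD, ← hndef]
    congr 1
    field_simp
  have f1 : ∀ x, D x ≠ 0 → deriv (wFn k (N + 1)) x = N1 x / D x ^ 2 / (k + n) := by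
    intro x hx
    have e : wFn k (N + 1) =ᶠ[nhds x] fun y => N0 y / D y / (k + n) := by
      filter_upwards [hev x hx] with y hy using f0 y hy
    rw [e.deriv_eq]
    exact (((aN0 x trivial).differentiableAt.hasDerivAt.fun_div
      (aD x trivial).differentiableAt.hasDerivAt hx).div_const _).deriv
  have f2 : ∀ x, D x ≠ 0 → deriv (deriv (wFn k (N + 1))) x = N2 x / D x ^ 3 / (k + n) := by
    intro x hx
    have e : deriv (wFn k (N + 1)) =ᶠ[nhds x] fun y => N1 y / D y ^ 2 / (k + n) := by
      filter_upwards [hev x hx] with y hy using f1 y hy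
    rw [e.deriv_eq]
    rw [(((aN1 x trivial).differentiableAt.hasDerivAt.fun_div
      ((aD x trivial).differentiableAt.hasDerivAt.fun_pow 2) (pow_ne_zero 2 hx)).div_const _).deriv]
    simp only [hN2]
    field_simp
    push_cast
    ring
  set Q : ℝ → ℝ := fun x => x ^ 2 * N2 x ^ 2 * (k + n) - (-4 * (k + n) * x * N1 x ^ 3 +
      (4 * (k + n) * N0 x * D x + (k + n) * (x ^ 2 + 2 * (2 * k + 3 * n) * x + n ^ 2) * D x ^ 2)
        * N1 x ^ 2 -
      (k + n) * (2 * (x + 2 * k + 3 * n) * N0 x + (k + n) * (2 * n * x + 2 * n ^ 2) * D x)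
        * N1 x * D x ^ 3
      + (k + n) * (N0 x + (k + n) * n * D x) ^ 2 * D x ^ 4) with hQ
  have hQE : ∀ x, D x ≠ 0 → Q x = (k + n) ^ 3 * D x ^ 6 *
      twE k n x (wFn k (N + 1) x) (deriv (wFn k (N + 1)) x) (deriv (deriv (wFn k (N + 1))) x) := by
    intro x hx
    rw [f0 x hx, f1 x hx, f2 x hx]
    simp only [hQ, twE]
    field_simp
    ring
  have aQ : AnalyticOnNhd ℝ Q Set.univ := by
    intro x _
    have b0 := aN0 x trivial
    have b1 := aN1 x trivial
    have b2 := aN2 x trivial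
    have bD := aD x trivial
    clear_value N0 N1 N2 D
    simp only [hQ]
    fun_prop
  have hD0 : D 0 ≠ 0 := by rw [hD, Dn_zero]; exact one_ne_zero
  have hQ0 : Q =ᶠ[nhds 0] 0 := by
    filter_upwards [hev 0 hD0, tw_local k N] with x hx hx2
    rw [hQE x hx, hndef, hx2, mul_zero]; rfl
  have hQz := aQ.eqOn_zero_of_preconnected_of_eventuallyEq_zero isPreconnected_univ
    (Set.mem_univ 0) hQ0 (Set.mem_univ t)
  rw [hQE t ht] at hQz
  have : ((k : ℝ) + n) ^ 3 * D t ^ 6 ≠ 0 := mul_ne_zero (pow_ne_zero _ hK) (pow_ne_zero _ ht)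
  exact (mul_eq_zero.mp hQz).resolve_left this

end twproof

/-- Wherever `D_n(t) ≠ 0`, the function `w(t) = (n t + t D_n'(t)/D_n(t))/(k+n)`
satisfies the second-order, second-degree equation (4.13) of Tracy–Widom,
a form of Cosgrove's master Painlevé equation SD-I. -/
theorem w_second_degree_equation (k n : ℕ) (hk : 1 ≤ k) (hn : 1 ≤ n) (t : ℝ)
    (ht : Dn k n t ≠ 0) :
    t ^ 2 * (deriv (deriv (wFn k n)) t) ^ 2 =
      -4 * ((k : ℝ) + n) * t * (deriv (wFn k n) t) ^ 3 +
        (4 * ((k : ℝ) + n) * wFn k n t + t ^ 2 + 2 * (2 * (k : ℝ) + 3 * n) * t +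
            (n : ℝ) ^ 2) * (deriv (wFn k n) t) ^ 2 -
        (2 * (t + 2 * (k : ℝ) + 3 * n) * wFn k n t + 2 * (n : ℝ) * t +
            2 * (n : ℝ) ^ 2) * deriv (wFn k n) t +
        (wFn k n t + n) ^ 2 := by

  obtain ⟨N, rfl⟩ : ∃ N, n = N + 1 := ⟨n - 1, by omega⟩
  have h := tw_global k N t ht
  unfold twE at h
  exact sub_eq_zero.mp h
end

section
/- For all integers k ≥ 1, n ≥ 1 and every real t ≥ 0: ∑_{N=0}^∞ F_I(n;k,N)·(k t)^N / N! = e^{k t} · c_{k,n} · ∫_{[t,∞)^k} ∏_{j=1}^k x_j^n · e^{−(x_1+⋯+x_k)} · ∏_{1≤i<j≤k} (x_i − x_j)² dx_1 ⋯ dx_k, where c_{k,n}^{−1} = (∏_{j=1}^k j!) · (∏_{j=0}^{k−1} (n+j)!). In other words, the exponential generating function G_I(n;k,kt) equals e^{kt} times the probability that the smallest eigenvalue in the k×k Laguerre unitary ensemble with weight x^n e^{−x} is at least t. -/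
open scoped BigOperators

/-- The state `z` stays at most `n` when the letters of `l` are processed. -/
def GoodW {k : ℕ} (n : ℕ) (z : Fin k → ℕ) (l : List (Fin k)) : Prop :=
  (∀ d, z d ≤ n) ∧ ∀ a s, List.Sublist (a :: s) l → List.Pairwise (fun x y => y ≤ x) (a :: s) →
    z a + (s.length + 1) ≤ n

def pushW {k : ℕ} (a : Fin k) (z : Fin k → ℕ) : Fin k → ℕ :=
  fun d => if d ≤ a then max (z d) (z a + 1) else z d

lemma goodW_cons {k n : ℕ} (z : Fin k → ℕ) (a : Fin k) (l : List (Fin k)) :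
    GoodW n z (a :: l) ↔ GoodW n (pushW a z) l := by
  constructor
  · rintro ⟨h1, h2⟩
    have h3 := h2 a [] (by simp) (by simp)
    refine ⟨fun d => ?_, fun b s hs hp => ?_⟩
    · have := h1 d
      simp only [pushW]
      simp at h3
      split_ifs <;> omega
    · have h4 := h2 b s (hs.trans (List.sublist_cons_self _ _)) hp
      simp only [pushW]
      split_ifs with hb
      · have h5 := h2 a (b :: s) (List.cons_sublist_cons.2 hs) (by
          rw [List.pairwise_cons]
          refine ⟨?_, hp⟩
          intro c hc
          rw [List.pairwise_cons] at hp
          rcases List.mem_cons.1 hc with rfl | hc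
          · exact hb
          · exact (hp.1 c hc).trans hb)
        simp at h5
        omega
      · exact h4
  · rintro ⟨h1, h2⟩
    have hge : ∀ d, z d ≤ pushW a z d := by
      intro d; simp only [pushW]; split_ifs <;> simp
    refine ⟨fun d => (hge d).trans (h1 d), fun b s hs hp => ?_⟩
    rcases List.sublist_cons_iff.1 hs with hs | ⟨r, hr, hs⟩
    · have := h2 b s hs hp
      have := hge b
      omega
    · obtain ⟨rfl, rfl⟩ := List.cons.inj hr
      cases s with
      | nil =>
        have := h1 b
        simp [pushW] at this
        simpa using this
      | cons c s =>
        rw [List.pairwise_cons] at hp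
        have hc : c ≤ b := hp.1 c (by simp)
        have := h2 c s hs hp.2
        simp only [pushW, if_pos hc] at this
        simp only [List.length_cons]
        omega

noncomputable def cntW (n k N : ℕ) (z : Fin k → ℕ) : ℕ :=
  Nat.card {w : Fin N → Fin k // GoodW n z (List.ofFn w)}

lemma cntW_zero {n k : ℕ} (z : Fin k → ℕ) :
    cntW n k 0 z = (open Classical in if ∀ d, z d ≤ n then 1 else 0) := by
  classical
  unfold cntW GoodW
  simp only [List.ofFn_zero, List.sublist_nil, reduceCtorEq, IsEmpty.forall_iff, implies_true,
    and_true]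
  rw [Nat.card_eq_fintype_card, Fintype.card_subtype]
  split_ifs with h <;> simp [h]

lemma cntW_succ {n k N : ℕ} (z : Fin k → ℕ) :
    cntW n k (N + 1) z = ∑ a, cntW n k N (pushW a z) := by
  classical
  unfold cntW
  rw [← Nat.card_sigma]
  refine Nat.card_congr ?_
  refine ⟨fun w => ⟨w.1 0, Fin.tail w.1, ?_⟩, fun p => ⟨Fin.cons p.1 p.2.1, ?_⟩, ?_, ?_⟩
  · have := w.2
    rw [List.ofFn_succ, goodW_cons] at this
    exact this
  · rw [List.ofFn_succ, goodW_cons]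
    simpa using p.2.2
  · intro w; simp
  · intro p; rfl

lemma incLen_le_iff {N k n : ℕ} (w : Fin N → Fin k) :
    incLen w ≤ n ↔ GoodW n (fun _ => 0) (List.ofFn (fun i => (w i).rev)) := by
  have hbdd : BddAbove {m | ∃ f : Fin m → Fin N, StrictMono f ∧ Monotone (w ∘ f)} := by
    refine ⟨N, ?_⟩
    rintro m ⟨f, hf, -⟩
    simpa using Fintype.card_le_of_injective f hf.injective
  have hne : {m | ∃ f : Fin m → Fin N, StrictMono f ∧ Monotone (w ∘ f)}.Nonempty :=
    ⟨0, Fin.elim0, fun i => i.elim0, fun i => i.elim0⟩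
  unfold incLen
  rw [csSup_le_iff hbdd hne]
  constructor
  · intro h
    refine ⟨fun _ => Nat.zero_le _, fun a s hs hp => ?_⟩
    obtain ⟨f, hf⟩ := List.sublist_iff_exists_fin_orderEmbedding_get_eq.1 hs
    have hN : (List.ofFn (fun i => (w i).rev)).length = N := by simp
    have := h (a :: s).length ⟨fun i => Fin.cast hN (f i), fun i j hij => by simpa using hij, ?_⟩
    · simpa using this
    · intro i j hij
      rcases hij.eq_or_lt with rfl | hij
      · exact le_rfl
      have h1 := List.pairwise_iff_get.1 hp i j hij
      rw [hf, hf] at h1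
      simp only [List.get_ofFn, Fin.rev_le_rev] at h1
      exact h1
  · rintro ⟨-, h⟩ m ⟨f, hf, hm⟩
    cases m with
    | zero => exact Nat.zero_le _
    | succ m =>
      have hs : List.Sublist (List.ofFn (fun i => (w (f i)).rev)) (List.ofFn (fun i => (w i).rev)) := by
        rw [List.sublist_iff_exists_fin_orderEmbedding_get_eq]
        refine ⟨OrderEmbedding.ofStrictMono
          (fun i => Fin.cast (by simp) (f (Fin.cast (by simp) i))) ?_, ?_⟩
        · intro i j hij
          have := @hf (Fin.cast (by simp) i) (Fin.cast (by simp) j) (by simpa using hij)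
          simpa using this
        · intro i
          rw [List.get_ofFn, List.get_ofFn]
          rfl
      have hp : List.Pairwise (fun x y => y ≤ x) (List.ofFn (fun i => (w (f i)).rev)) := by
        rw [List.pairwise_ofFn]
        intro i j hij
        exact Fin.rev_le_rev.2 (hm hij.le)
      rw [List.ofFn_succ] at hs hp
      have := h _ _ hs hp
      simpa using this

lemma card_incLen (n k N : ℕ) :
    Nat.card {w : Fin N → Fin k // incLen w ≤ n} = cntW n k N (fun _ => 0) := by
  unfold cntW
  refine Nat.card_congr (Equiv.subtypeEquiv (Equiv.arrowCongr (Equiv.refl _) Fin.revPerm) ?_)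
  intro w
  rw [incLen_le_iff]
  rfl

noncomputable def phiW (M : ℕ) (c : PowerSeries ℝ) : Polynomial ℝ :=
  ∑ l ∈ Finset.range (M + 1), Polynomial.C (PowerSeries.coeff (M - l) c / (Nat.factorial l : ℝ)) *
    Polynomial.X ^ l

lemma phiW_coeff (M : ℕ) (c : PowerSeries ℝ) (l : ℕ) :
    (phiW M c).coeff l = if l ≤ M then PowerSeries.coeff (M - l) c / (Nat.factorial l : ℝ) else 0 := by
  unfold phiW
  rw [Polynomial.finsetSum_coeff]
  simp only [Polynomial.coeff_C_mul_X_pow]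
  rw [Finset.sum_ite_eq]
  simp

lemma phiW_sub (M : ℕ) (c c' : PowerSeries ℝ) : phiW M (c - c') = phiW M c - phiW M c' := by
  ext l
  simp only [Polynomial.coeff_sub, phiW_coeff]
  split_ifs
  · rw [map_sub, sub_div]
  · simp

lemma phiW_X_mul (M : ℕ) (c : PowerSeries ℝ) : phiW (M + 1) (PowerSeries.X * c) = phiW M c := by
  ext l
  simp only [phiW_coeff]
  rcases Nat.lt_trichotomy l (M + 1) with h | rfl | h
  · rw [if_pos (by omega), if_pos (by omega), show M + 1 - l = (M - l) + 1 by omega,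
      PowerSeries.coeff_succ_X_mul]
  · simp
  · rw [if_neg (by omega), if_neg (by omega)]

lemma phiW_derivative (M : ℕ) (c : PowerSeries ℝ) :
    Polynomial.derivative (phiW M c) = phiW M (PowerSeries.X * c) := by
  cases M with
  | zero =>
    ext l
    rw [Polynomial.coeff_derivative]
    simp only [phiW_coeff]
    simp
  | succ M =>
    rw [phiW_X_mul]
    ext l
    rw [Polynomial.coeff_derivative]
    simp only [phiW_coeff]
    by_cases h : l ≤ M
    · rw [if_pos (by omega), if_pos h, Nat.factorial_succ, show M + 1 - (l + 1) = M - l by omega]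
      have : (l.factorial : ℝ) ≠ 0 := by positivity
      push_cast
      field_simp
    · rw [if_neg (by omega), if_neg h, zero_mul]

lemma phiW_eval_zero (M : ℕ) (c : PowerSeries ℝ) :
    (phiW M c).eval 0 = PowerSeries.coeff M c := by
  rw [← Polynomial.coeff_zero_eq_eval_zero, phiW_coeff]
  simp

noncomputable def baseW (a : ℕ) : PowerSeries ℝ := (PowerSeries.mk 1) ^ (a + 1)

noncomputable def entW (n : ℕ) (a d v : ℕ) : Polynomial ℝ :=
  phiW (n + d) (PowerSeries.X ^ v * (baseW a * (1 - PowerSeries.X) ^ d))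

lemma entW_derivative (n a d v : ℕ) :
    Polynomial.derivative (entW n a d v) = entW n a d (v + 1) := by
  unfold entW
  rw [phiW_derivative, pow_succ']
  congr 1
  ring

lemma entW_diff (n a d v : ℕ) : entW n a d v - entW n a d (v + 1) = entW n a (d + 1) (v + 1) := by
  unfold entW
  rw [← phiW_sub, ← add_assoc, pow_succ' _ v, mul_assoc PowerSeries.X (_ ^ v), mul_assoc PowerSeries.X (_ ^ v),
    phiW_X_mul]
  congr 1
  ring

lemma entW_zero_col (n a v : ℕ) (hv : n < v) : entW n a 0 v = 0 := by
  unfold entW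
  ext l
  rw [phiW_coeff, PowerSeries.coeff_X_pow_mul', if_neg (show ¬ v ≤ n + 0 - l by omega)]
  simp

lemma entW_eval_lt (n a d v : ℕ) (hv : v ≤ n) (h : a < d) : (entW n a d v).eval 0 = 0 := by
  unfold entW
  rw [phiW_eval_zero, PowerSeries.coeff_X_pow_mul', if_pos (by omega)]
  obtain ⟨e, rfl⟩ := Nat.exists_eq_add_of_lt h
  have : baseW a * (1 - PowerSeries.X) ^ (a + e + 1) =
      (((1 - Polynomial.X : Polynomial ℝ) ^ e : Polynomial ℝ) : PowerSeries ℝ) := by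
    unfold baseW
    rw [show a + e + 1 = (a + 1) + e by omega, pow_add (1 - PowerSeries.X), ← mul_assoc, ← mul_pow,
      PowerSeries.mk_one_mul_one_sub_eq_one]
    simp
  rw [this, Polynomial.coeff_coe]
  apply Polynomial.coeff_eq_zero_of_natDegree_lt
  have : ((1 - Polynomial.X : Polynomial ℝ) ^ e).natDegree ≤ e := by
    refine Polynomial.natDegree_pow_le.trans ?_
    have : (1 - Polynomial.X : Polynomial ℝ).natDegree ≤ 1 := by compute_degree
    nlinarith
  omega

lemma entW_eval_eq (n a v : ℕ) (hv : v ≤ n) : (entW n a a v).eval 0 = 1 := by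
  unfold entW
  rw [phiW_eval_zero, PowerSeries.coeff_X_pow_mul', if_pos (by omega)]
  have : baseW a * (1 - PowerSeries.X) ^ a = PowerSeries.mk 1 := by
    unfold baseW
    rw [pow_succ', mul_assoc, ← mul_pow, PowerSeries.mk_one_mul_one_sub_eq_one]
    simp
  rw [this]
  simp

noncomputable def matW (n k : ℕ) (z : Fin k → ℕ) : Matrix (Fin k) (Fin k) (Polynomial ℝ) :=
  Matrix.of fun a d => entW n a d (z d)

lemma matW_update (n k : ℕ) (z : Fin k → ℕ) (c : Fin k) (v : ℕ) :
    matW n k (Function.update z c v) = (matW n k z).updateCol c (fun a => entW n a c v) := by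
  ext1 a d
  simp only [matW, Matrix.of_apply, Matrix.updateCol_apply, Function.update_apply]
  split_ifs with h
  · subst h; rfl
  · rfl

lemma det_derivative {k : ℕ} (A : Matrix (Fin k) (Fin k) (Polynomial ℝ)) :
    Polynomial.derivative A.det =
      ∑ c, (A.updateCol c (fun a => Polynomial.derivative (A a c))).det := by
  simp only [Matrix.det_apply]
  rw [Finset.sum_comm, Polynomial.derivative_sum]
  refine Finset.sum_congr rfl fun σ _ => ?_
  rw [← Finset.smul_sum, Units.smul_def, Units.smul_def, Polynomial.derivative_smul]
  congr 1
  rw [Polynomial.derivative_prod_finset]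
  refine Finset.sum_congr rfl fun c _ => ?_
  rw [← Finset.prod_erase_mul _ _ (Finset.mem_univ c)]
  congr 1
  · refine Finset.prod_congr rfl fun i hi => ?_
    rw [Matrix.updateCol_ne (Finset.ne_of_mem_erase hi)]
  · simp

noncomputable def detW (n k : ℕ) (z : Fin k → ℕ) : Polynomial ℝ := (matW n k z).det

lemma detW_derivative (n k : ℕ) (z : Fin k → ℕ) :
    Polynomial.derivative (detW n k z) = ∑ c, detW n k (Function.update z c (z c + 1)) := by
  unfold detW
  rw [det_derivative]
  refine Finset.sum_congr rfl fun c _ => ?_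
  rw [matW_update]
  congr 2
  ext1 a
  exact entW_derivative _ _ _ _

lemma detW_swap (n k : ℕ) (z : Fin k → ℕ) (c e : Fin k) (he : (e : ℕ) = c + 1)
    (hz : z e = z c + 1) : detW n k (Function.update z c (z c + 1)) = detW n k z := by
  unfold detW
  rw [matW_update]
  have h : (fun a : Fin k => entW n a c (z c + 1)) =
      (fun a => matW n k z a c) + (-1 : Polynomial ℝ) • (fun a => matW n k z a e) := by
    ext1 a
    have := entW_diff n a c (z c)
    simp only [matW, Matrix.of_apply, Pi.add_apply, Pi.smul_apply, smul_eq_mul, hz, he, ← this]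
    ring
  have hne : c ≠ e := by
    intro h; rw [h] at he; omega
  have h0 : ((matW n k z).updateCol c (fun a => matW n k z a e)).det = 0 := by
    refine Matrix.det_zero_of_column_eq hne ?_
    intro a
    rw [Matrix.updateCol_self, Matrix.updateCol_ne hne.symm]
  rw [h, Matrix.det_updateCol_add, Matrix.det_updateCol_smul, h0, mul_zero, add_zero,
    Matrix.updateCol_eq_self]

lemma pushW_antitone {k : ℕ} (a : Fin k) {z : Fin k → ℕ} (hz : Antitone z) :
    Antitone (pushW a z) := by
  intro d e hde
  have h := hz hde
  simp only [pushW]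
  split_ifs with h1 h2 h2
  · omega
  · exact absurd (hde.trans h1) h2
  · omega
  · exact h

lemma detW_push {n k : ℕ} (a : Fin k) {z : Fin k → ℕ} (hz : Antitone z) :
    detW n k (Function.update z a (z a + 1)) = detW n k (pushW a z) := by
  have key : ∀ j : ℕ, j ≤ a → detW n k (fun d : Fin k => if (a : ℕ) - j ≤ d ∧ d ≤ a then max (z d) (z a + 1) else z d)
      = detW n k (Function.update z a (z a + 1)) := by
    intro j
    induction j with
    | zero =>
      intro _
      congr 1
      ext1 d
      rw [Function.update_apply]
      by_cases h : d = a
      · subst h; simp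
      · rw [if_neg h, if_neg]
        rintro ⟨h1, h2⟩
        exact h (le_antisymm h2 (by simpa using h1))
    | succ j ih =>
      intro hj
      rw [← ih (by omega)]
      set c : Fin k := ⟨a - (j + 1), by omega⟩ with hc
      set e : Fin k := ⟨a - j, by omega⟩ with he
      set y : Fin k → ℕ := fun d : Fin k => if (a : ℕ) - j ≤ d ∧ d ≤ a then max (z d) (z a + 1) else z d with hy
      have hca : c ≤ a := by rw [Fin.le_def]; simp [hc]
      have hea : e ≤ a := by rw [Fin.le_def]; simp [he]
      have hce : c ≤ e := by rw [Fin.le_def]; simp [hc, he]; omega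
      have hyc : y c = z c := by
        simp only [hy, hc]
        rw [if_neg]
        rintro ⟨h, -⟩
        omega
      have hye : y e = max (z e) (z a + 1) := by
        simp only [hy]
        rw [if_pos ⟨by simp [he], hea⟩]
      have hupd : (fun d : Fin k => if (a : ℕ) - (j + 1) ≤ d ∧ d ≤ a then max (z d) (z a + 1) else z d)
          = Function.update y c (max (z c) (z a + 1)) := by
        ext1 d
        rw [Function.update_apply]
        by_cases h : d = c
        · rw [if_pos h, h, if_pos ⟨by simp [hc], hca⟩]
        · rw [if_neg h]
          have h' : (d : ℕ) ≠ a - (j + 1) := fun h2 => h (Fin.ext h2)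
          simp only [hy]
          have : ((a : ℕ) - (j + 1) ≤ d ∧ d ≤ a) ↔ ((a : ℕ) - j ≤ d ∧ d ≤ a) := by
            constructor
            · rintro ⟨h1, h2⟩; exact ⟨by omega, h2⟩
            · rintro ⟨h1, h2⟩; exact ⟨by omega, h2⟩
          simp only [this]
      rw [hupd]
      have h1 := hz hca
      have h2 := hz hea
      have h3 := hz hce
      by_cases h : z a + 1 ≤ z c
      · rw [max_eq_left h, ← hyc, Function.update_eq_self]
      · have h4 : z c = z a := by omega
        have h5 : max (z c) (z a + 1) = y c + 1 := by rw [hyc]; omega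
        rw [h5]
        apply detW_swap n k y c e
        · simp only [hc, he]; omega
        · rw [hye, hyc]; omega
  rw [← key a le_rfl]
  congr 1
  ext1 d
  simp [pushW]

lemma iter_derivative_detW (n k N : ℕ) : ∀ (z : Fin k → ℕ), Antitone z →
    ((Polynomial.derivative^[N]) (detW n k z)).eval 0 = (cntW n k N z : ℝ) := by
  induction N with
  | zero =>
    intro z hz
    rw [cntW_zero, Function.iterate_zero, id]
    split_ifs with h
    · unfold detW
      rw [← Polynomial.coe_evalRingHom, RingHom.map_det, Matrix.det_of_isLowerTriangular]
      · rw [Finset.prod_eq_one]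
        · simp
        · intro i _
          simpa [matW] using entW_eval_eq n i (z i) (h i)
      · intro i j hij
        have hij' : i < j := hij
        simpa [matW] using entW_eval_lt n i j (z j) (h j) hij'
    · push Not at h
      obtain ⟨d, hd⟩ := h
      have hk : 0 < k := d.pos
      have h0 : n < z ⟨0, hk⟩ := hd.trans_le (hz (by rw [Fin.le_def]; simp))
      unfold detW
      rw [Matrix.det_eq_zero_of_column_eq_zero ⟨0, hk⟩]
      · simp
      · intro a
        exact entW_zero_col n a _ h0
  | succ N ih =>
    intro z hz
    rw [Function.iterate_succ_apply, detW_derivative, cntW_succ, Polynomial.iterate_derivative_sum,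
      Polynomial.eval_finsetSum]
    push_cast
    refine Finset.sum_congr rfl fun a _ => ?_
    rw [detW_push a hz, ih _ (pushW_antitone a hz)]

lemma detW_coeff (n k N : ℕ) :
    (detW n k (fun _ => 0)).coeff N = (cntW n k N (fun _ => 0) : ℝ) / (Nat.factorial N : ℝ) := by
  rw [← iter_derivative_detW n k N _ (fun _ _ _ => le_rfl), ← Polynomial.coeff_zero_eq_eval_zero,
    Polynomial.coeff_iterate_derivative]
  have : (N.factorial : ℝ) ≠ 0 := by positivity
  simp only [zero_add, Nat.descFactorial_self, nsmul_eq_mul]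
  field_simp

lemma phiW_sum {ι : Type*} (s : Finset ι) (M : ℕ) (c : ι → PowerSeries ℝ) :
    phiW M (∑ i ∈ s, c i) = ∑ i ∈ s, phiW M (c i) := by
  ext l
  simp only [Polynomial.finsetSum_coeff, phiW_coeff, map_sum, Finset.sum_div]
  split_ifs <;> simp

lemma phiW_C_mul (M : ℕ) (r : ℝ) (c : PowerSeries ℝ) :
    phiW M (PowerSeries.C r * c) = Polynomial.C r * phiW M c := by
  ext l
  simp only [Polynomial.coeff_C_mul, phiW_coeff, PowerSeries.coeff_C_mul]
  split_ifs
  · ring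
  · simp

lemma phiW_X_pow_mul (M j : ℕ) (c : PowerSeries ℝ) :
    phiW (M + j) (PowerSeries.X ^ j * c) = phiW M c := by
  induction j with
  | zero => simp
  | succ j ih => rw [← add_assoc, pow_succ', mul_assoc, phiW_X_mul, ih]

lemma phiW_one_sub_pow (n d : ℕ) (c : PowerSeries ℝ) :
    phiW (n + d) (c * (1 - PowerSeries.X) ^ d) =
      ∑ e ∈ Finset.range (d + 1), phiW (n + e) c *
        Polynomial.C ((-1) ^ (d - e) * (d.choose e : ℝ)) := by
  rw [sub_eq_add_neg, add_pow, Finset.mul_sum, phiW_sum]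
  refine Finset.sum_congr rfl fun e he => ?_
  have he' : e ≤ d := by simpa [Nat.lt_succ_iff] using he
  have h1 : c * (1 ^ e * (-PowerSeries.X) ^ (d - e) * (d.choose e : PowerSeries ℝ)) =
      PowerSeries.C ((-1) ^ (d - e) * (d.choose e : ℝ)) * (PowerSeries.X ^ (d - e) * c) := by
    rw [neg_pow PowerSeries.X, map_mul, map_pow, map_neg, map_one, map_natCast]
    ring
  rw [h1, phiW_C_mul]
  conv_lhs => rw [show n + d = (n + e) + (d - e) by omega]
  rw [phiW_X_pow_mul, mul_comm]

lemma detW_zero (n k : ℕ) :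
    detW n k (fun _ => 0) =
      (Matrix.of fun a d : Fin k => phiW (n + d) (baseW a)).det := by
  set T : Matrix (Fin k) (Fin k) (Polynomial ℝ) :=
    Matrix.of fun e d => Polynomial.C ((-1) ^ ((d : ℕ) - e) * ((d : ℕ).choose e : ℝ)) with hT
  have hmul : matW n k (fun _ => 0) = (Matrix.of fun a d : Fin k => phiW (n + d) (baseW a)) * T := by
    ext1 a d
    rw [Matrix.mul_apply]
    simp only [matW, entW, hT, Matrix.of_apply, pow_zero, one_mul]
    rw [phiW_one_sub_pow, Finset.sum_subset (Finset.range_subset_range.2 (show (d : ℕ) + 1 ≤ k by omega)),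
      Finset.sum_range]
    intro e _ he
    have he' : (d : ℕ) < e := by simp at he; omega
    rw [Nat.choose_eq_zero_of_lt he']
    simp
  have hdet : T.det = 1 := by
    rw [Matrix.det_of_isUpperTriangular]
    · simp [hT]
    · intro i j hij
      have hij' : (j : ℕ) < i := hij
      simp [hT, Nat.choose_eq_zero_of_lt hij']
  rw [detW, hmul, Matrix.det_mul, hdet, mul_one]

open MeasureTheory

lemma integrableOn_pow_exp (m : ℕ) :
    IntegrableOn (fun x : ℝ => x ^ m * Real.exp (-x)) (Set.Ioi 0) := by
  have h := Real.GammaIntegral_convergent (s := (m : ℝ) + 1) (by positivity)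
  refine h.congr_fun (fun x _ => ?_) measurableSet_Ioi
  simp [mul_comm]

lemma integral_pow_exp (m : ℕ) :
    ∫ x in Set.Ioi (0 : ℝ), x ^ m * Real.exp (-x) = (m.factorial : ℝ) := by
  rw [← Real.Gamma_nat_eq_factorial, Real.Gamma_eq_integral (by positivity)]
  refine setIntegral_congr_fun measurableSet_Ioi (fun x _ => ?_)
  simp [mul_comm]

lemma shift_expand (t s : ℝ) (M a : ℕ) :
    (s + t) ^ M * (s + t - t) ^ a * Real.exp (-(s + t)) =
      ∑ l ∈ Finset.range (M + 1), Real.exp (-t) * t ^ l * (M.choose l : ℝ) *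
        (s ^ (M - l + a) * Real.exp (-s)) := by
  rw [add_comm s t, add_pow, add_sub_cancel_left, neg_add, Real.exp_add, Finset.sum_mul,
    Finset.sum_mul]
  refine Finset.sum_congr rfl fun l _ => ?_
  rw [pow_add]
  ring

lemma integrable_ent (t : ℝ) (M a : ℕ) :
    IntegrableOn (fun x : ℝ => x ^ M * (x - t) ^ a * Real.exp (-x)) (Set.Ioi t) := by
  have h := (measurePreserving_add_right (volume : Measure ℝ) t).integrableOn_comp_preimage
    (measurableEmbedding_addRight t) (f := fun x : ℝ => x ^ M * (x - t) ^ a * Real.exp (-x))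
    (s := Set.Ioi t)
  rw [← h]
  have hs : (fun x => x + t) ⁻¹' Set.Ioi t = Set.Ioi (0 : ℝ) := by ext x; simp
  rw [hs]
  simp only [Function.comp_def, shift_expand]
  exact integrable_finsetSum _ fun l _ => (integrableOn_pow_exp _).const_mul _

lemma integral_ent (t : ℝ) (M a : ℕ) :
    ∫ x in Set.Ioi t, x ^ M * (x - t) ^ a * Real.exp (-x) =
      Real.exp (-t) * (M.factorial * a.factorial : ℝ) * (phiW M (baseW a)).eval t := by
  have h := (measurePreserving_add_right (volume : Measure ℝ) t).setIntegral_preimage_emb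
    (measurableEmbedding_addRight t) (fun x : ℝ => x ^ M * (x - t) ^ a * Real.exp (-x))
    (Set.Ioi t)
  rw [← h]
  have hs : (fun x => x + t) ⁻¹' Set.Ioi t = Set.Ioi (0 : ℝ) := by ext x; simp
  rw [hs]
  simp only [shift_expand]
  rw [integral_finsetSum _ fun l _ => (integrableOn_pow_exp _).const_mul _]
  simp only [integral_const_mul, integral_pow_exp]
  rw [phiW, Polynomial.eval_finsetSum, Finset.mul_sum]
  refine Finset.sum_congr rfl fun l hl => ?_
  have hl' : l ≤ M := by simpa [Nat.lt_succ_iff] using hl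
  rw [baseW, PowerSeries.mk_one_pow_eq_mk_choose_add, PowerSeries.coeff_mk]
  simp only [Polynomial.eval_mul, Polynomial.eval_C, Polynomial.eval_pow, Polynomial.eval_X]
  have h1 : (M.choose l : ℝ) * l.factorial * (M - l).factorial = M.factorial := by
    exact_mod_cast Nat.choose_mul_factorial_mul_factorial hl'
  have h2 : ((a + (M - l)).choose a : ℝ) * a.factorial * (M - l).factorial = (M - l + a).factorial := by
    have := Nat.choose_mul_factorial_mul_factorial (Nat.le_add_right a (M - l))
    rw [Nat.add_sub_cancel_left, add_comm a (M - l)] at this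
    rw [add_comm a (M - l)]
    exact_mod_cast this
  have h3 : (l.factorial : ℝ) ≠ 0 := by positivity
  rw [← h1, ← h2]
  field_simp

lemma andreief {k : ℕ} (μ : Measure ℝ) [SigmaFinite μ] (f g : Fin k → ℝ → ℝ)
    (hi : ∀ a b, Integrable (fun x => f a x * g b x) μ) :
    ∫ x : Fin k → ℝ, (Matrix.of fun a j => f a (x j)).det * (Matrix.of fun a j => g a (x j)).det
        ∂(Measure.pi fun _ => μ) =
      (k.factorial : ℝ) * (Matrix.of fun a b => ∫ x, f a x * g b x ∂μ).det := by
  set A : Matrix (Fin k) (Fin k) ℝ := Matrix.of fun a b => ∫ x, f a x * g b x ∂μ with hA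
  have h1 : ∀ x : Fin k → ℝ,
      (Matrix.of fun a j => f a (x j)).det * (Matrix.of fun a j => g a (x j)).det =
      ∑ σ : Equiv.Perm (Fin k), ∑ τ : Equiv.Perm (Fin k),
        (((Equiv.Perm.sign σ : ℤ) : ℝ) * ((Equiv.Perm.sign τ : ℤ) : ℝ)) *
          ∏ j, (f (σ j) (x j) * g (τ j) (x j)) := by
    intro x
    rw [Matrix.det_apply', Matrix.det_apply', Finset.sum_mul_sum]
    refine Finset.sum_congr rfl fun σ _ => Finset.sum_congr rfl fun τ _ => ?_
    rw [Finset.prod_mul_distrib]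
    simp only [Matrix.of_apply]
    ring
  simp only [h1]
  have hintg : ∀ σ τ : Equiv.Perm (Fin k), Integrable (fun x : Fin k → ℝ =>
      (((Equiv.Perm.sign σ : ℤ) : ℝ) * ((Equiv.Perm.sign τ : ℤ) : ℝ)) *
          ∏ j, (f (σ j) (x j) * g (τ j) (x j))) (Measure.pi fun _ => μ) := by
    intro σ τ
    refine Integrable.const_mul ?_ _
    exact Integrable.fintype_prod (f := fun j x => f (σ j) x * g (τ j) x) fun j => hi _ _
  rw [integral_finsetSum _ fun σ _ => integrable_finsetSum _ fun τ _ => hintg σ τ]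
  have h2 : ∀ σ : Equiv.Perm (Fin k),
      ∫ x : Fin k → ℝ, ∑ τ : Equiv.Perm (Fin k),
        (((Equiv.Perm.sign σ : ℤ) : ℝ) * ((Equiv.Perm.sign τ : ℤ) : ℝ)) *
          ∏ j, (f (σ j) (x j) * g (τ j) (x j)) ∂(Measure.pi fun _ => μ) = A.det := by
    intro σ
    rw [integral_finsetSum _ fun τ _ => hintg σ τ]
    have h3 : ∀ τ : Equiv.Perm (Fin k),
        ∫ x : Fin k → ℝ, (((Equiv.Perm.sign σ : ℤ) : ℝ) * ((Equiv.Perm.sign τ : ℤ) : ℝ)) *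
          ∏ j, (f (σ j) (x j) * g (τ j) (x j)) ∂(Measure.pi fun _ => μ) =
        ((Equiv.Perm.sign σ : ℤ) : ℝ) * (((Equiv.Perm.sign τ : ℤ) : ℝ) * ∏ j, A (σ j) (τ j)) := by
      intro τ
      rw [integral_const_mul,
        integral_fintype_prod_eq_prod (f := fun j x => f (σ j) x * g (τ j) x), mul_assoc]
      rfl
    simp only [h3]
    rw [← Finset.mul_sum]
    have h4 : ∑ τ : Equiv.Perm (Fin k), ((Equiv.Perm.sign τ : ℤ) : ℝ) * ∏ j, A (σ j) (τ j) =
        ((A.submatrix σ id).transpose).det := by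
      rw [Matrix.det_apply']
      rfl
    rw [h4, Matrix.det_transpose, Matrix.det_permute, ← mul_assoc, ← Int.cast_mul]
    rw [← Units.val_mul, Int.units_mul_self]
    simp
  simp only [h2]
  simp [Fintype.card_perm]

lemma prod_sq_eq {k : ℕ} (t : ℝ) (x : Fin k → ℝ) :
    ∏ p ∈ Finset.univ.filter (fun p : Fin k × Fin k => p.1 < p.2), (x p.1 - x p.2) ^ 2 =
      (Matrix.vandermonde x).det * (Matrix.vandermonde fun i => x i - t).det := by
  rw [Matrix.det_vandermonde_sub, Matrix.det_vandermonde, ← sq, ← Finset.prod_pow]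
  simp only [← Finset.prod_pow]
  rw [Finset.prod_filter, ← Finset.univ_product_univ, Finset.prod_product]
  refine Finset.prod_congr rfl fun i _ => ?_
  rw [← Finset.prod_filter]
  have : Finset.univ.filter (fun j => i < j) = Finset.Ioi i := by ext; simp
  rw [this]
  refine Finset.prod_congr rfl fun j _ => ?_
  ring

lemma integral_eq_det (k n : ℕ) (t : ℝ) :
    ∫ x in {x : Fin k → ℝ | ∀ j, t ≤ x j},
          (∏ j, x j ^ n) * Real.exp (-(∑ j, x j)) *
            ∏ p ∈ Finset.univ.filter (fun p : Fin k × Fin k => p.1 < p.2),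
              (x p.1 - x p.2) ^ 2 =
      (k.factorial : ℝ) * (Matrix.of fun a b : Fin k =>
        Real.exp (-t) * ((n + b).factorial * (a : ℕ).factorial : ℝ) *
          (phiW (n + b) (baseW a)).eval t).det := by
  have hset : {x : Fin k → ℝ | ∀ j, t ≤ x j} = Set.univ.pi fun _ => Set.Ici t := by
    ext x; simp [Pi.le_def]
  have hμ : (volume : Measure (Fin k → ℝ)).restrict (Set.univ.pi fun _ => Set.Ici t) =
      Measure.pi fun _ => (volume : Measure ℝ).restrict (Set.Ioi t) := by
    rw [volume_pi, Measure.restrict_pi_pi]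
    simp only [Measure.restrict_congr_set (Ioi_ae_eq_Ici (a := t) (μ := (volume : Measure ℝ)))]
  rw [hset, hμ]
  have key := andreief ((volume : Measure ℝ).restrict (Set.Ioi t))
    (fun a : Fin k => fun x => (x - t) ^ (a : ℕ))
    (fun b : Fin k => fun x => x ^ n * Real.exp (-x) * x ^ (b : ℕ)) (by
      intro a b
      refine (integrable_ent t (n + b) a).congr (Filter.Eventually.of_forall fun x => ?_)
      simp only [pow_add]
      ring)
  have hintg : ∀ a b : Fin k, ∫ x in Set.Ioi t, (x - t) ^ (a : ℕ) * (x ^ n * Real.exp (-x) * x ^ (b : ℕ)) =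
      Real.exp (-t) * ((n + b).factorial * (a : ℕ).factorial : ℝ) *
          (phiW (n + b) (baseW a)).eval t := by
    intro a b
    rw [← integral_ent]
    congr 1
    ext1 x
    rw [pow_add]
    ring
  simp only [hintg] at key
  rw [← key]
  congr 1
  ext1 x
  rw [prod_sq_eq t]
  have e1 : (Matrix.of fun a j : Fin k => (x j - t) ^ (a : ℕ)).det =
      (Matrix.vandermonde fun i => x i - t).det := by
    rw [← Matrix.det_transpose]
    rfl
  have e2 : (Matrix.of fun a j : Fin k => x j ^ n * Real.exp (-x j) * x j ^ (a : ℕ)).det =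
      (∏ j, x j ^ n) * Real.exp (-(∑ j, x j)) * (Matrix.vandermonde x).det := by
    have := Matrix.det_mul_row (fun j => x j ^ n * Real.exp (-x j)) (Matrix.vandermonde x).transpose
    rw [Matrix.det_transpose, Finset.prod_mul_distrib, ← Real.exp_sum, Finset.sum_neg_distrib] at this
    rw [← this]
    rfl
  rw [e1, e2]
  ring

lemma det_scaled (k n : ℕ) (t : ℝ) :
    (Matrix.of fun a b : Fin k =>
        Real.exp (-t) * ((n + b).factorial * (a : ℕ).factorial : ℝ) *
          (phiW (n + b) (baseW a)).eval t).det =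
      Real.exp (-(k * t)) * (∏ j ∈ Finset.range k, ((n + j).factorial : ℝ)) *
        (∏ j ∈ Finset.range k, (j.factorial : ℝ)) * (detW n k (fun _ => 0)).eval t := by
  rw [detW_zero, ← Polynomial.coe_evalRingHom, RingHom.map_det]
  set B := (Polynomial.evalRingHom t).mapMatrix
    (Matrix.of fun a d : Fin k => phiW (n + d) (baseW a)) with hB
  have h1 := Matrix.det_mul_column (fun a : Fin k => ((a : ℕ).factorial : ℝ)) B
  have h2 := Matrix.det_mul_row (fun b : Fin k => Real.exp (-t) * ((n + b).factorial : ℝ))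
    (Matrix.of fun i j => (fun a : Fin k => ((a : ℕ).factorial : ℝ)) i * B i j)
  rw [h1, Finset.prod_mul_distrib, Finset.prod_const, Finset.card_univ, Fintype.card_fin,
    ← Real.exp_nat_mul] at h2
  rw [Finset.prod_range, Finset.prod_range]
  have h3 : ((k : ℝ) * -t) = -(k * t) := by ring
  rw [h3, ← mul_assoc] at h2
  rw [← h2]
  congr 1
  ext a b
  simp [hB]
  ring

/-- Theorem 3: the exponential generating function `G_I(n;k,kt)` equals `e^{kt}`
times the probability that the smallest eigenvalue in the `k × k` Laguerre unitary
ensemble with weight `x^n e^{-x}` is at least `t`. -/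
theorem GI_laguerre_smallest_eigenvalue (k n : ℕ) (hk : 1 ≤ k) (hn : 1 ≤ n)
    (t : ℝ) (ht : 0 ≤ t) :
    ∑' N : ℕ, FI n k N * ((k : ℝ) * t) ^ N / (Nat.factorial N : ℝ) =
      Real.exp ((k : ℝ) * t) *
        ((∏ j ∈ Finset.range k, (Nat.factorial (j + 1) : ℝ)) *
          ∏ j ∈ Finset.range k, (Nat.factorial (n + j) : ℝ))⁻¹ *
        ∫ x in {x : Fin k → ℝ | ∀ j, t ≤ x j},
          (∏ j, x j ^ n) * Real.exp (-(∑ j, x j)) *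
            ∏ p ∈ Finset.univ.filter (fun p : Fin k × Fin k => p.1 < p.2),
              (x p.1 - x p.2) ^ 2 := by
  have hkR : (k : ℝ) ≠ 0 := by
    have : 0 < k := hk
    positivity
  have hterm : ∀ N : ℕ, FI n k N * ((k : ℝ) * t) ^ N / (Nat.factorial N : ℝ) =
      (detW n k (fun _ => 0)).coeff N * t ^ N := by
    intro N
    rw [detW_coeff, FI, card_incLen, mul_pow]
    have : (k : ℝ) ^ N ≠ 0 := pow_ne_zero _ hkR
    have : (N.factorial : ℝ) ≠ 0 := by positivity
    field_simp
  simp only [hterm]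
  rw [tsum_eq_sum (s := Finset.range ((detW n k (fun _ => 0)).natDegree + 1)),
    ← Polynomial.eval_eq_sum_range]
  · rw [integral_eq_det, det_scaled]
    have h1 : (∏ j ∈ Finset.range k, (Nat.factorial (j + 1) : ℝ)) =
        k.factorial * ∏ j ∈ Finset.range k, (Nat.factorial j : ℝ) := by
      have h2 := Finset.prod_range_succ (fun j => (Nat.factorial j : ℝ)) k
      rw [Finset.prod_range_succ'] at h2
      simpa [mul_comm] using h2
    rw [h1, Real.exp_neg]
    have h3 : Real.exp (k * t) ≠ 0 := (Real.exp_pos _).ne'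
    have h4 : (k.factorial : ℝ) ≠ 0 := by positivity
    have h5 : (∏ j ∈ Finset.range k, (Nat.factorial j : ℝ)) ≠ 0 := by positivity
    have h6 : (∏ j ∈ Finset.range k, (Nat.factorial (n + j) : ℝ)) ≠ 0 := by positivity
    field_simp
  · intro N hN
    rw [Polynomial.coeff_eq_zero_of_natDegree_lt, zero_mul]
    rw [Finset.mem_range] at hN
    omega
end
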